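/- There are constants d' > 0 and b ≥ 1 such that for every integer t ≥ 1, every K_{t,t}-free string graph G on n ≥ 2 vertices has a separator of size at most d'·t^{1/(2b)}·(log₂ n)^{1+1/(2b)}·n^{1−1/(2b)}. -/

import Mathlib

/-- A curve in the plane: the image of a continuous map from `[0,1]` to `ℝ²`. -/
def IsCurve (c : Set (ℝ × ℝ)) : Prop :=
  ∃ f : ℝ → ℝ × ℝ, ContinuousOn f (Set.Icc 0 1) ∧ c = f '' Set.Icc 0 1

/-- A string graph: an intersection graph of curves in the plane. -/
def IsStringGraph {V : Type*} (G : SimpleGraph V) : Prop :=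
  ∃ γ : V → Set (ℝ × ℝ), (∀ v, IsCurve (γ v)) ∧
    ∀ u v : V, u ≠ v → (G.Adj u v ↔ (γ u ∩ γ v).Nonempty)

/-- A graph is `K_{t,t}`-free if there are no two disjoint `t`-element vertex sets `A`
and `B` such that every vertex of `A` is adjacent to every vertex of `B`. -/
def KttFree {V : Type*} (G : SimpleGraph V) (t : ℕ) : Prop :=
  ¬ ∃ A B : Finset V, Disjoint A B ∧ A.card = t ∧ B.card = t ∧
      ∀ a ∈ A, ∀ b ∈ B, G.Adj a b

/-- `S` is a separator of `G`: the vertex set is partitioned as `S ∪ V₁ ∪ V₂` with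
`|V₁|, |V₂| ≤ (2/3)|V|` and no edges between `V₁` and `V₂`. -/
def IsSeparator {V : Type*} [Fintype V] [DecidableEq V]
    (G : SimpleGraph V) (S : Finset V) : Prop :=
  ∃ V₁ V₂ : Finset V,
    S ∪ V₁ ∪ V₂ = Finset.univ ∧
    Disjoint S V₁ ∧ Disjoint S V₂ ∧ Disjoint V₁ V₂ ∧
    (V₁.card : ℝ) ≤ 2 / 3 * Fintype.card V ∧
    (V₂.card : ℝ) ≤ 2 / 3 * Fintype.card V ∧
    ∀ u ∈ V₁, ∀ v ∈ V₂, ¬ G.Adj u v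

/-!
Discretise the curves to walks in the square lattice, and suppose that every separator of the graph
on `n` vertices has more than `δ n` vertices. Then there is an expander on at least half of the
vertices, and all pairs of its vertices are joined by short routes of low congestion. Routes between
three vertices and three others cross, since `K₃,₃` is not planar, and as the congestion is low the
crossings are spread over at least a constant times `δ ^ 4 (n / log n) ^ 2` pairs of curves that
meet.

On the other hand, a `K_{t,t}`-free string graph is not that dense. Pass to a subgraph of large
minimum degree, and cut off initial pieces of the curves at geometrically increasing scales,
measured by the number of curves that a piece meets. Counting incidences at three scales yields
many quadruples `(x, a, b, y)` in which the curve `x` runs from the piece `a` to the piece `b` and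
meets the piece `y` on the way, `a`, `b` and `y` being disjoint.

Fix `a` and `b`. Their complement is an annulus, and the arcs of the curves `x` from `a` to `b` are
cyclically ordered by winding numbers, in which disjoint arcs never overtake each other. Cut the
cyclic order into blocks. By `K_{t,t}`-freeness and a halving argument, from most arcs of a block
there are chains of successively disjoint arcs to many arcs some blocks above and below. If `y` hits
many arcs, then some block is far from many of them in both directions, and `y` hits all these good
arcs of the block: such an arc, if missed, would have the same winding number at all points of `y`,
while the chains show that it lies on different sides of the arcs hit above and below. By
`K_{t,t}`-freeness each block accounts for few such `y`, so there are few quadruples.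
-/

open scoped Finset

set_option exponentiation.threshold 2000

/-! ### Walks in the square lattice -/

/-- One step of a walk in the square lattice. Standing still is allowed, so that a finite walk can
be prolonged to an infinite one. -/
def LatticeStep (p q : ℤ × ℤ) : Prop :=
  q = p ∨ q = (p.1 + 1, p.2) ∨ q = (p.1 - 1, p.2) ∨ q = (p.1, p.2 + 1) ∨ q = (p.1, p.2 - 1)

lemma LatticeStep.refl (p : ℤ × ℤ) : LatticeStep p p := Or.inl rfl

lemma LatticeStep.symm {p q : ℤ × ℤ} (h : LatticeStep p q) : LatticeStep q p := by
  obtain ⟨a, b⟩ := p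
  obtain ⟨c, d⟩ := q
  simp only [LatticeStep, Prod.mk.injEq] at *
  omega

/-- A walk in the square lattice, as an infinite sequence; finite walks are initial pieces. -/
def IsLatticeWalk (f : ℕ → ℤ × ℤ) : Prop := ∀ k, LatticeStep (f k) (f (k + 1))

/-- The set of points visited by `f` up to time `n`. -/
def trace (f : ℕ → ℤ × ℤ) (n : ℕ) : Set (ℤ × ℤ) := {p | ∃ k ≤ n, f k = p}

lemma mem_trace (f : ℕ → ℤ × ℤ) {k n : ℕ} (hk : k ≤ n) : f k ∈ trace f n := ⟨k, hk, rfl⟩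

lemma trace_mono (f : ℕ → ℤ × ℤ) {m n : ℕ} (h : m ≤ n) : trace f m ⊆ trace f n :=
  fun _ ⟨k, hk, hp⟩ => ⟨k, hk.trans h, hp⟩

/-- A lattice step between two points of `A`. -/
def LatticeStepIn (A : Set (ℤ × ℤ)) (p q : ℤ × ℤ) : Prop := LatticeStep p q ∧ p ∈ A ∧ q ∈ A

/-- `p` and `q` are joined by lattice steps inside `A`; every point is joined to itself. -/
abbrev LatticeJoined (A : Set (ℤ × ℤ)) : ℤ × ℤ → ℤ × ℤ → Prop :=
  Relation.ReflTransGen (LatticeStepIn A)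

lemma LatticeStepIn.symm {A : Set (ℤ × ℤ)} {p q : ℤ × ℤ} (h : LatticeStepIn A p q) :
    LatticeStepIn A q p :=
  ⟨h.1.symm, h.2.2, h.2.1⟩

lemma LatticeJoined.symm {A : Set (ℤ × ℤ)} {p q : ℤ × ℤ} (h : LatticeJoined A p q) :
    LatticeJoined A q p := by
  induction h with
  | refl => exact .refl
  | tail _ h ih => exact ih.head h.symm

lemma LatticeJoined.mono {A B : Set (ℤ × ℤ)} (hAB : A ⊆ B) {p q : ℤ × ℤ}
    (h : LatticeJoined A p q) : LatticeJoined B p q :=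
  Relation.ReflTransGen.mono (fun _ _ h => ⟨h.1, hAB h.2.1, hAB h.2.2⟩) _ _ h

lemma IsLatticeWalk.joined {A : Set (ℤ × ℤ)} {f : ℕ → ℤ × ℤ} (hf : IsLatticeWalk f) {m n : ℕ}
    (hmn : m ≤ n) (hA : ∀ k, m ≤ k → k ≤ n → f k ∈ A) : LatticeJoined A (f m) (f n) := by
  induction n, hmn using Nat.le_induction with
  | base => exact .refl
  | succ n hmn ih =>
    exact (ih fun k h h' => hA k h (h'.trans n.le_succ)).tail
      ⟨hf n, hA n hmn n.le_succ, hA (n + 1) (hmn.trans n.le_succ) le_rfl⟩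

lemma IsLatticeWalk.concat {f : ℕ → ℤ × ℤ} (hf : IsLatticeWalk f) {n : ℕ} {q : ℤ × ℤ}
    (hq : LatticeStep (f n) q) : IsLatticeWalk fun k => if k ≤ n then f k else q := by
  intro k
  rcases lt_trichotomy k n with hk | rfl | hk
  · simpa only [if_pos hk.le, if_pos (Nat.succ_le_of_lt hk)] using hf k
  · simpa only [le_refl, if_pos, if_neg (Nat.not_succ_le_self k)] using hq
  · simpa only [if_neg hk.not_ge, if_neg (Nat.lt_succ_of_lt hk).not_ge] using LatticeStep.refl q

lemma IsLatticeWalk.exists_extension {A : Set (ℤ × ℤ)} {f : ℕ → ℤ × ℤ} (hf : IsLatticeWalk f)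
    (hA : ∀ k, f k ∈ A) {n : ℕ} {q : ℤ × ℤ} (hq : LatticeJoined A (f n) q) :
    ∃ (g : ℕ → ℤ × ℤ) (m : ℕ), IsLatticeWalk g ∧ (∀ k, g k ∈ A) ∧ n ≤ m ∧
      (∀ k ≤ n, g k = f k) ∧ g m = q := by
  induction hq with
  | refl => exact ⟨f, n, hf, hA, le_rfl, fun _ _ => rfl, rfl⟩
  | @tail b c _ hbc ih =>
    obtain ⟨g, m, hg, hgA, hnm, hgf, rfl⟩ := ih
    refine ⟨fun k => if k ≤ m then g k else c, m + 1, hg.concat hbc.1, fun k => ?_,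
      hnm.trans m.le_succ, fun k hk => ?_, by simp⟩
    · dsimp only
      split_ifs
      exacts [hgA k, hbc.2.2]
    · simpa only [if_pos (hk.trans hnm)] using hgf k hk

lemma exists_walk_of_joined {A : Set (ℤ × ℤ)} {p q : ℤ × ℤ} (hp : p ∈ A)
    (hpq : LatticeJoined A p q) :
    ∃ (f : ℕ → ℤ × ℤ) (n : ℕ), IsLatticeWalk f ∧ (∀ k, f k ∈ A) ∧ f 0 = p ∧ f n = q := by
  obtain ⟨f, n, hf, hfA, -, hf₀, hfn⟩ :=
    IsLatticeWalk.exists_extension (f := fun _ => p) (n := 0) (fun _ => .refl p) (fun _ => hp) hpq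
  exact ⟨f, n, hf, hfA, hf₀ 0 le_rfl, hfn⟩

lemma exists_walk_subset_trace {A : Set (ℤ × ℤ)} {p : ℤ × ℤ} (hp : p ∈ A) (T : Finset (ℤ × ℤ))
    (hT : ∀ q ∈ T, LatticeJoined A p q) :
    ∃ (f : ℕ → ℤ × ℤ) (n : ℕ), IsLatticeWalk f ∧ (∀ k, f k ∈ A) ∧ LatticeJoined A p (f n) ∧
      ↑T ⊆ trace f n := by
  classical
  induction T using Finset.induction_on with
  | empty => exact ⟨fun _ => p, 0, fun _ => .refl p, fun _ => hp, .refl, by simp⟩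
  | insert a T _ ih =>
    obtain ⟨f, n, hf, hA, hpf, hTf⟩ := ih fun q hq => hT q (Finset.mem_insert_of_mem hq)
    have hpa := hT a (Finset.mem_insert_self a T)
    obtain ⟨g, m, hg, hgA, hnm, hgf, rfl⟩ := hf.exists_extension hA (hpf.symm.trans hpa)
    refine ⟨g, m, hg, hgA, hpa, ?_⟩
    rw [Finset.coe_insert]
    refine Set.insert_subset (mem_trace g le_rfl) fun q hq => ?_
    obtain ⟨k, hk, rfl⟩ := hTf hq
    exact ⟨k, hk.trans hnm, hgf k hk⟩

/-! ### Crossing numbers with rays -/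

/-- Signed crossing of the step `p → q` with the horizontal ray that starts at the lower left
corner of the unit cell centred at `P` and runs to the right; upward crossings are positive. -/
def crossRight (p q P : ℤ × ℤ) : ℤ :=
  if P.1 ≤ p.1 ∧ q.2 = P.2 ∧ p.2 = P.2 - 1 then 1
  else if P.1 ≤ p.1 ∧ p.2 = P.2 ∧ q.2 = P.2 - 1 then -1 else 0

/-- Signed crossing of the step `p → q` with the horizontal ray that starts at the upper right
corner of the unit cell centred at `P` and runs to the left; upward crossings are positive. -/
def crossLeft (p q P : ℤ × ℤ) : ℤ :=
  if p.1 ≤ P.1 ∧ p.2 = P.2 ∧ q.2 = P.2 + 1 then 1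
  else if p.1 ≤ P.1 ∧ q.2 = P.2 ∧ p.2 = P.2 + 1 then -1 else 0

/-- Indicator of `p` lying weakly to the right of `P` in the same row. -/
def onRightRay (p P : ℤ × ℤ) : ℤ := if p.2 = P.2 ∧ P.1 ≤ p.1 then 1 else 0

/-- Indicator of `q` preceding `p` in reading order, rows from bottom to top. -/
def readsAfter (p q : ℤ × ℤ) : ℤ := if q.2 < p.2 ∨ (p.2 = q.2 ∧ q.1 < p.1) then 1 else 0

/-- Signed traversal by the step `p → q` of the edge from `a` to `b`. -/
def stepFlow (p q a b : ℤ × ℤ) : ℤ :=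
  (if p = a ∧ q = b then 1 else 0) - (if p = b ∧ q = a then 1 else 0)

lemma crossRight_sub_crossRight_left {p q : ℤ × ℤ} (h : LatticeStep p q) (i j : ℤ) :
    crossRight p q (i + 1, j) - crossRight p q (i, j) = -stepFlow p q (i, j - 1) (i, j) := by
  obtain ⟨a, b⟩ := p
  obtain ⟨c, d⟩ := q
  simp only [LatticeStep, Prod.mk.injEq] at h
  simp only [crossRight, stepFlow, Prod.mk.injEq]
  split_ifs <;> omega

lemma crossRight_sub_crossRight_below {p q : ℤ × ℤ} (h : LatticeStep p q) (i j : ℤ) :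
    crossRight p q (i, j + 1) - crossRight p q (i, j)
      = onRightRay p (i, j) - onRightRay q (i, j) + stepFlow p q (i - 1, j) (i, j) := by
  obtain ⟨a, b⟩ := p
  obtain ⟨c, d⟩ := q
  simp only [LatticeStep, Prod.mk.injEq] at h
  simp only [crossRight, stepFlow, onRightRay, Prod.mk.injEq]
  split_ifs <;> omega

lemma crossRight_add_crossLeft {p q P : ℤ × ℤ} (h : LatticeStep p q) (hp : p ≠ P) (hq : q ≠ P) :
    crossRight p q P + crossLeft p q P = readsAfter q P - readsAfter p P := by
  obtain ⟨a, b⟩ := p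
  obtain ⟨c, d⟩ := q
  obtain ⟨i, j⟩ := P
  simp only [LatticeStep, Prod.mk.injEq] at h
  simp only [ne_eq, Prod.mk.injEq] at hp hq
  simp only [crossRight, crossLeft, readsAfter]
  split_ifs <;> omega

lemma readsAfter_add_readsAfter {p q : ℤ × ℤ} (h : p ≠ q) :
    readsAfter p q + readsAfter q p = 1 := by
  have h' : p.1 ≠ q.1 ∨ p.2 ≠ q.2 := by
    rwa [ne_eq, ne_eq, ← not_and_or, ← Prod.ext_iff]
  simp only [readsAfter]
  split_ifs <;> omega

lemma stepFlow_swap (p q a b : ℤ × ℤ) : stepFlow p q b a = -stepFlow p q a b := by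
  simp only [stepFlow, neg_sub]

/-- Total of `crossRight` over the first `n` steps of `f`. -/
def rightCrossings (f : ℕ → ℤ × ℤ) (n : ℕ) (P : ℤ × ℤ) : ℤ :=
  ∑ k ∈ Finset.range n, crossRight (f k) (f (k + 1)) P

/-- Total of `crossLeft` over the first `n` steps of `f`. -/
def leftCrossings (f : ℕ → ℤ × ℤ) (n : ℕ) (P : ℤ × ℤ) : ℤ :=
  ∑ k ∈ Finset.range n, crossLeft (f k) (f (k + 1)) P

/-- Number of times the first `n` steps of `f` traverse the edge from `a` to `b`, counted with
sign. -/
def flow (f : ℕ → ℤ × ℤ) (n : ℕ) (a b : ℤ × ℤ) : ℤ :=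
  ∑ k ∈ Finset.range n, stepFlow (f k) (f (k + 1)) a b

lemma flow_swap (f : ℕ → ℤ × ℤ) (n : ℕ) (a b : ℤ × ℤ) : flow f n b a = -flow f n a b := by
  simp only [flow, ← Finset.sum_neg_distrib]
  exact Finset.sum_congr rfl fun k _ => stepFlow_swap _ _ _ _

lemma flow_eq_zero_of_notMem_left {f : ℕ → ℤ × ℤ} {n : ℕ} {a : ℤ × ℤ} (ha : a ∉ trace f n)
    (b : ℤ × ℤ) : flow f n a b = 0 := by
  refine Finset.sum_eq_zero fun k hk => ?_
  have hk := Finset.mem_range.1 hk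
  have hka : f k ≠ a := fun h => ha (h ▸ mem_trace f hk.le)
  have hka' : f (k + 1) ≠ a := fun h => ha (h ▸ mem_trace f hk)
  simp [stepFlow, hka, hka']

lemma flow_eq_zero_of_notMem_right {f : ℕ → ℤ × ℤ} {n : ℕ} {b : ℤ × ℤ} (hb : b ∉ trace f n)
    (a : ℤ × ℤ) : flow f n a b = 0 := by
  rw [flow_swap, flow_eq_zero_of_notMem_left hb, neg_zero]

namespace IsLatticeWalk

variable {f g : ℕ → ℤ × ℤ}

lemma rightCrossings_sub_left (hf : IsLatticeWalk f) (n : ℕ) (i j : ℤ) :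
    rightCrossings f n (i + 1, j) - rightCrossings f n (i, j) = -flow f n (i, j - 1) (i, j) := by
  simp only [rightCrossings, flow, ← Finset.sum_sub_distrib, ← Finset.sum_neg_distrib]
  exact Finset.sum_congr rfl fun k _ => crossRight_sub_crossRight_left (hf k) i j

lemma rightCrossings_sub_below (hf : IsLatticeWalk f) (n : ℕ) (i j : ℤ) :
    rightCrossings f n (i, j + 1) - rightCrossings f n (i, j)
      = onRightRay (f 0) (i, j) - onRightRay (f n) (i, j) + flow f n (i - 1, j) (i, j) := by
  rw [← Finset.sum_range_sub' (fun k => onRightRay (f k) (i, j)) n]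
  simp only [rightCrossings, flow, ← Finset.sum_sub_distrib, ← Finset.sum_add_distrib]
  exact Finset.sum_congr rfl fun k _ => crossRight_sub_crossRight_below (hf k) i j

lemma rightCrossings_add_leftCrossings (hf : IsLatticeWalk f) {n : ℕ} {P : ℤ × ℤ}
    (hP : P ∉ trace f n) :
    rightCrossings f n P + leftCrossings f n P = readsAfter (f n) P - readsAfter (f 0) P := by
  rw [← Finset.sum_range_sub (fun k => readsAfter (f k) P) n]
  simp only [rightCrossings, leftCrossings, ← Finset.sum_add_distrib]
  refine Finset.sum_congr rfl fun k hk => ?_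
  have hk := Finset.mem_range.1 hk
  exact crossRight_add_crossLeft (hf k) (fun h => hP (h ▸ mem_trace f hk.le))
    (fun h => hP (h ▸ mem_trace f hk))

/-- Steps of `g` do not contribute, as `p` and `q` are not on `g`; what remains is the passage of
the two ends of `g` through the ray. -/
lemma rightCrossings_sub_of_step (hg : IsLatticeWalk g) {n : ℕ} {p q : ℤ × ℤ}
    (h : LatticeStep p q) (hp : p ∉ trace g n) (hq : q ∉ trace g n) :
    rightCrossings g n q - rightCrossings g n p = crossLeft p q (g 0) - crossLeft p q (g n) := by
  obtain ⟨a, b⟩ := p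
  have hp0 : g 0 ≠ (a, b) := fun e => hp (e ▸ mem_trace g n.zero_le)
  have hpn : g n ≠ (a, b) := fun e => hp (e ▸ mem_trace g le_rfl)
  have hq0 : g 0 ≠ q := fun e => hq (e ▸ mem_trace g n.zero_le)
  have hqn : g n ≠ q := fun e => hq (e ▸ mem_trace g le_rfl)
  rw [ne_eq, Prod.ext_iff] at hp0 hpn hq0 hqn
  rcases h with rfl | rfl | rfl | rfl | rfl <;> dsimp only at hp0 hpn hq0 hqn
  · simp only [crossLeft]; split_ifs <;> omega
  · have := hg.rightCrossings_sub_left n a b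
    rw [flow_eq_zero_of_notMem_right hp] at this
    simp only [crossLeft]; split_ifs <;> omega
  · have := hg.rightCrossings_sub_left n (a - 1) b
    rw [flow_eq_zero_of_notMem_right hq, sub_add_cancel] at this
    simp only [crossLeft]; split_ifs <;> omega
  · have := hg.rightCrossings_sub_below n a b
    rw [flow_eq_zero_of_notMem_right hp] at this
    simp only [crossLeft, onRightRay] at this ⊢
    split_ifs at this ⊢ <;> omega
  · have := hg.rightCrossings_sub_below n a (b - 1)
    rw [flow_eq_zero_of_notMem_right hq, sub_add_cancel] at this
    simp only [crossLeft, onRightRay] at this ⊢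
    split_ifs at this ⊢ <;> omega

lemma crossings_eq_zero_of_disjoint (hf : IsLatticeWalk f) (hg : IsLatticeWalk g) {m n : ℕ}
    (hfg : Disjoint (trace f m) (trace g n)) :
    rightCrossings g n (f m) - rightCrossings g n (f 0)
      + leftCrossings f m (g n) - leftCrossings f m (g 0) = 0 := by
  rw [← Finset.sum_range_sub (fun k => rightCrossings g n (f k)) m]
  simp only [leftCrossings, add_sub_assoc, ← Finset.sum_sub_distrib, ← Finset.sum_add_distrib]
  refine Finset.sum_eq_zero fun k hk => ?_
  have hk := Finset.mem_range.1 hk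
  have hstep := hg.rightCrossings_sub_of_step (hf k)
    (Set.disjoint_left.1 hfg (mem_trace f hk.le)) (Set.disjoint_left.1 hfg (mem_trace f hk))
  linarith

end IsLatticeWalk

/-- A combinatorial form of the nonplanarity of `K₃,₃`, proved by counting crossings of independent
edges modulo two. -/
theorem exists_not_disjoint_trace_of_K33 {P : Fin 3 → Fin 3 → ℕ → ℤ × ℤ}
    (hP : ∀ i j, IsLatticeWalk (P i j)) (n : Fin 3 → Fin 3 → ℕ) (a b : Fin 3 → ℤ × ℤ)
    (ha : ∀ i j, P i j 0 = a i) (hb : ∀ i j, P i j (n i j) = b j) :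
    ∃ i j k l, i ≠ k ∧ j ≠ l ∧ ¬ Disjoint (trace (P i j) (n i j)) (trace (P k l) (n k l)) := by
  by_contra! hdisj
  set R := fun i j => rightCrossings (P i j) (n i j)
  set L := fun i j => leftCrossings (P i j) (n i j)
  have hcross : ∀ i j k l, i ≠ k → j ≠ l →
      R k l (b j) - R k l (a i) + L i j (b l) - L i j (a k) = 0 := by
    intro i j k l hik hjl
    simpa only [ha, hb] using
      (hP i j).crossings_eq_zero_of_disjoint (hP k l) (hdisj i j k l hik hjl)
  -- For fixed `j ≠ l` the alternating sum over the pairs `i < k` separates the variables.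
  have hpair : ∀ j l, j ≠ l → R 1 l (b j) + L 1 j (b l)
      + (R 2 l (a 0) - R 1 l (a 0) - R 2 l (a 1))
      + (L 0 j (a 2) - L 0 j (a 1) - L 1 j (a 2)) = 0 := by
    intro j l hjl
    linarith [hcross 0 j 1 l (by decide) hjl, hcross 0 j 2 l (by decide) hjl,
      hcross 1 j 2 l (by decide) hjl]
  have hbnot : ∀ j l, j ≠ l → b j ∉ trace (P 1 l) (n 1 l) := fun j l hjl hmem =>
    Set.disjoint_left.1 (hdisj 0 j 1 l (by decide) hjl) (hb 0 j ▸ mem_trace _ le_rfl) hmem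
  have hray : ∀ j l, j ≠ l →
      R 1 l (b j) + L 1 l (b j) = readsAfter (b l) (b j) - readsAfter (a 1) (b j) := by
    intro j l hjl
    simpa only [ha, hb] using (hP 1 l).rightCrossings_add_leftCrossings (hbnot j l hjl)
  have hreads : ∀ j l, j ≠ l → readsAfter (b j) (b l) + readsAfter (b l) (b j) = 1 :=
    fun j l hjl => readsAfter_add_readsAfter fun h =>
      hbnot j l hjl (h ▸ hb 1 l ▸ mem_trace _ le_rfl)
  -- Summed over all ordered pairs `j ≠ l`, the left sides of `hpair` and `hray` have the same
  -- parity, but by `hreads` the right sides differ by an odd number.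
  have := hpair 0 1 (by decide); have := hpair 0 2 (by decide); have := hpair 1 0 (by decide)
  have := hpair 1 2 (by decide); have := hpair 2 0 (by decide); have := hpair 2 1 (by decide)
  have := hray 0 1 (by decide); have := hray 0 2 (by decide); have := hray 1 0 (by decide)
  have := hray 1 2 (by decide); have := hray 2 0 (by decide); have := hray 2 1 (by decide)
  have := hreads 0 1 (by decide); have := hreads 0 2 (by decide); have := hreads 1 2 (by decide)
  clear hcross hpair hray hreads hbnot hdisj
  omega

/-! ### Discretisation of string graphs -/

/-- The lower left corner, in units of `h`, of the square of the grid of mesh `h` containing `x`. -/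
noncomputable def gridCell (h : ℝ) (x : ℝ × ℝ) : ℤ × ℤ := (⌊x.1 / h⌋, ⌊x.2 / h⌋)

/-- The lattice points whose multiple by the mesh `h` is close to the planar set `c`. -/
def gridNbhd (h : ℝ) (c : Set (ℝ × ℝ)) : Set (ℤ × ℤ) :=
  {q | ∃ x ∈ c, dist (h * q.1, h * q.2) x ≤ 2 * h}

lemma mul_floor_div_mem_Ioc {h : ℝ} (hh : 0 < h) (x : ℝ) :
    h * (⌊x / h⌋ : ℝ) ∈ Set.Ioc (x - h) x := by
  have hle := (le_div_iff₀ hh).1 (Int.floor_le (x / h))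
  have hlt := (div_lt_iff₀ hh).1 (Int.lt_floor_add_one (x / h))
  constructor <;> linarith

lemma abs_floor_div_sub_floor_div_le_one {h : ℝ} (hh : 0 < h) {x y : ℝ} (hxy : dist x y < h) :
    |⌊x / h⌋ - ⌊y / h⌋| ≤ 1 := by
  have hx := mul_floor_div_mem_Ioc hh x
  have hy := mul_floor_div_mem_Ioc hh y
  rw [Real.dist_eq, abs_lt] at hxy
  have hlt : h * |((⌊x / h⌋ - ⌊y / h⌋ : ℤ) : ℝ)| < h * 2 := by
    rw [← abs_of_pos hh, ← abs_mul, abs_of_pos hh, abs_lt]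
    push_cast
    constructor <;> linarith [hx.1, hx.2, hy.1, hy.2]
  have := lt_of_mul_lt_mul_left hlt hh.le
  rw [← Int.cast_abs] at this
  exact Int.lt_add_one_iff.1 (by exact_mod_cast this)

lemma mem_gridNbhd_of_dist_lt {h : ℝ} (hh : 0 < h) {c : Set (ℝ × ℝ)} {x y : ℝ × ℝ} (hx : x ∈ c)
    (hxy : dist x y < h) : (⌊y.1 / h⌋, ⌊x.2 / h⌋) ∈ gridNbhd h c := by
  have h₁ := mul_floor_div_mem_Ioc hh y.1
  have h₂ := mul_floor_div_mem_Ioc hh x.2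
  have hd := (max_lt_iff.1 hxy).1
  rw [Real.dist_eq, abs_lt] at hd
  refine ⟨x, hx, max_le ?_ ?_⟩ <;> rw [Real.dist_eq, abs_le] <;> dsimp only <;> constructor <;>
    linarith [h₁.1, h₁.2, h₂.1, h₂.2]

lemma gridCell_mem_gridNbhd {h : ℝ} (hh : 0 < h) {c : Set (ℝ × ℝ)} {x : ℝ × ℝ} (hx : x ∈ c) :
    gridCell h x ∈ gridNbhd h c :=
  mem_gridNbhd_of_dist_lt hh hx (by rwa [dist_self])

lemma latticeJoined_gridCell_of_dist_lt {h : ℝ} (hh : 0 < h) {c : Set (ℝ × ℝ)} {x y : ℝ × ℝ}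
    (hx : x ∈ c) (hy : y ∈ c) (hxy : dist x y < h) :
    LatticeJoined (gridNbhd h c) (gridCell h x) (gridCell h y) := by
  have h₁ := abs_le.1 (abs_floor_div_sub_floor_div_le_one hh (max_lt_iff.1 hxy).1)
  have h₂ := abs_le.1 (abs_floor_div_sub_floor_div_le_one hh (max_lt_iff.1 hxy).2)
  have hcorner := mem_gridNbhd_of_dist_lt hh hx hxy
  refine (Relation.ReflTransGen.single ⟨?_, gridCell_mem_gridNbhd hh hx, hcorner⟩).tail
    ⟨?_, hcorner, gridCell_mem_gridNbhd hh hy⟩ <;>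
  · simp only [LatticeStep, gridCell, Prod.mk.injEq, true_and, and_true]
    omega

lemma latticeJoined_gridCell {h : ℝ} (hh : 0 < h) {c : Set (ℝ × ℝ)} (hc : IsPreconnected c)
    {x y : ℝ × ℝ} (hx : x ∈ c) (hy : y ∈ c) :
    LatticeJoined (gridNbhd h c) (gridCell h x) (gridCell h y) := by
  refine hc.induction₂ (fun x y => LatticeJoined (gridNbhd h c) (gridCell h x) (gridCell h y))
    (fun x hx => ?_) (fun _ _ _ _ _ _ => .trans) (fun _ _ _ _ => LatticeJoined.symm) hx hy
  filter_upwards [mem_nhdsWithin_of_mem_nhds (Metric.ball_mem_nhds x hh), self_mem_nhdsWithin]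
    with y hyx hy
  exact latticeJoined_gridCell_of_dist_lt hh hx hy (Metric.mem_ball'.1 hyx)

lemma disjoint_gridNbhd {h : ℝ} {c d : Set (ℝ × ℝ)}
    (hcd : ∀ x ∈ c, ∀ y ∈ d, 4 * h < dist x y) : Disjoint (gridNbhd h c) (gridNbhd h d) := by
  refine Set.disjoint_left.2 fun q ⟨x, hx, hqx⟩ ⟨y, hy, hqy⟩ => (hcd x hx y hy).not_ge ?_
  linarith [dist_triangle_left x y (h * (q.1 : ℝ), h * (q.2 : ℝ))]

lemma eventually_lt_dist_of_disjoint {c d : Set (ℝ × ℝ)} (hc : IsCompact c) (hd : IsClosed d)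
    (hcd : Disjoint c d) : ∀ᶠ h : ℝ in nhdsWithin 0 (Set.Ioi 0), ∀ x ∈ c, ∀ y ∈ d,
      4 * h < dist x y := by
  obtain ⟨r, hr, hlt⟩ := Metric.exists_pos_forall_lt_edist hc hd hcd
  filter_upwards [Ioo_mem_nhdsGT (show (0 : ℝ) < r / 4 by positivity)] with h hh x hx y hy
  have hxy := hlt x hx y hy
  rw [edist_nndist, ENNReal.coe_lt_coe, ← NNReal.coe_lt_coe, coe_nndist] at hxy
  linarith [hh.2]

namespace IsCurve

variable {c : Set (ℝ × ℝ)}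

lemma isCompact (hc : IsCurve c) : IsCompact c := by
  obtain ⟨f, hf, rfl⟩ := hc
  exact isCompact_Icc.image_of_continuousOn hf

lemma isPreconnected (hc : IsCurve c) : IsPreconnected c := by
  obtain ⟨f, hf, rfl⟩ := hc
  exact isPreconnected_Icc.image f hf

lemma nonempty (hc : IsCurve c) : c.Nonempty := by
  obtain ⟨f, -, rfl⟩ := hc
  exact ⟨f 0, 0, by simp, rfl⟩

lemma exists_walk_in_gridNbhd (hc : IsCurve c) {h : ℝ} (hh : 0 < h) {T : Finset (ℤ × ℤ)}
    (hT : ∀ q ∈ T, ∃ x ∈ c, gridCell h x = q) :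
    ∃ (f : ℕ → ℤ × ℤ) (n : ℕ), IsLatticeWalk f ∧ (∀ k, f k ∈ gridNbhd h c) ∧ ↑T ⊆ trace f n := by
  obtain ⟨x₀, hx₀⟩ := hc.nonempty
  obtain ⟨f, n, hf, hfc, -, hTf⟩ :=
    exists_walk_subset_trace (gridCell_mem_gridNbhd hh hx₀) T fun q hq => by
      obtain ⟨x, hx, rfl⟩ := hT q hq
      exact latticeJoined_gridCell hh hc.isPreconnected hx₀ hx
  exact ⟨f, n, hf, hfc, hTf⟩

end IsCurve

/-- A representation of the graph `G` as the intersection graph of lattice walks of a common length: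
the combinatorial substitute for a family of curves. -/
structure LatticeModel {V : Type*} (G : SimpleGraph V) where
  /-- The walk representing a vertex. -/
  walk : V → ℕ → ℤ × ℤ
  /-- The common number of steps of the walks. -/
  length : ℕ
  isWalk : ∀ v, IsLatticeWalk (walk v)
  adj_iff : ∀ u v, u ≠ v → (G.Adj u v ↔ ∃ i ≤ length, ∃ j ≤ length, walk u i = walk v j)

theorem IsStringGraph.nonempty_latticeModel {V : Type*} [Finite V] {G : SimpleGraph V}
    (hG : IsStringGraph G) : Nonempty (LatticeModel G) := by
  classical
  cases nonempty_fintype V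
  obtain ⟨γ, hγ, hadj⟩ := hG
  have hsep : ∀ᶠ h : ℝ in nhdsWithin 0 (Set.Ioi 0), ∀ u v, Disjoint (γ u) (γ v) →
      ∀ x ∈ γ u, ∀ y ∈ γ v, 4 * h < dist x y :=
    Filter.eventually_all.2 fun u => Filter.eventually_all.2 fun v =>
      Filter.eventually_imp_distrib_left.2
        (eventually_lt_dist_of_disjoint (hγ u).isCompact (hγ v).isCompact.isClosed)
  obtain ⟨h, hsep, hh⟩ := (hsep.and self_mem_nhdsWithin).exists
  have hpt : ∀ u v, ∃ x, (γ u ∩ γ v).Nonempty → x ∈ γ u ∩ γ v := fun u v => by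
    by_cases hne : (γ u ∩ γ v).Nonempty
    exacts [⟨hne.some, fun _ => hne.some_mem⟩, ⟨0, fun h => absurd h hne⟩]
  choose pt hpt using hpt
  choose w n hw hwγ hTw using fun v => (hγ v).exists_walk_in_gridNbhd hh
    (T := ({p : V × V | pt p.1 p.2 ∈ γ v} : Finset _).image fun p => gridCell h (pt p.1 p.2))
    fun q hq => by
      obtain ⟨p, hp, rfl⟩ := Finset.mem_image.1 hq
      exact ⟨_, (Finset.mem_filter.1 hp).2, rfl⟩
  have hmeet : ∀ u v v', pt u v ∈ γ v' → gridCell h (pt u v) ∈ trace (w v') (Finset.univ.sup n) :=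
    fun u v v' hv' => trace_mono _ (Finset.le_sup (Finset.mem_univ v')) <| hTw v' <|
      Finset.mem_coe.2 <| Finset.mem_image.2
        ⟨(u, v), Finset.mem_filter.2 ⟨Finset.mem_univ _, hv'⟩, rfl⟩
  refine ⟨⟨w, Finset.univ.sup n, hw, fun u v huv => ?_⟩⟩
  rw [hadj u v huv]
  constructor
  · intro hne
    obtain ⟨i, hi, hwi⟩ := hmeet u v u (hpt u v hne).1
    obtain ⟨j, hj, hwj⟩ := hmeet u v v (hpt u v hne).2
    exact ⟨i, hi, j, hj, hwi.trans hwj.symm⟩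
  · rintro ⟨i, -, j, -, hij⟩
    by_contra hne
    exact Set.disjoint_left.1 (disjoint_gridNbhd (hsep u v (Set.not_nonempty_iff_eq_empty.1 hne |>
      Set.disjoint_iff_inter_eq_empty.2))) (hwγ u i) (hij ▸ hwγ v j)

/-! ### Expansion and routing -/

section Expansion

variable {V : Type*} {G : SimpleGraph V}

/-- The set `S` cuts off `R` from the rest of the graph. -/
structure IsCut (G : SimpleGraph V) (R S : Finset V) : Prop where
  disjoint : Disjoint R S
  not_adj : ∀ a ∈ R, ∀ b, b ∉ R → b ∉ S → ¬ G.Adj a b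

section

variable [DecidableEq V]

open scoped Classical in
/-- The vertices of `U` outside `A` with a neighbour in `A`. -/
noncomputable def outerBoundary (G : SimpleGraph V) (U A : Finset V) : Finset V :=
  {u ∈ U \ A | ∃ a ∈ A, G.Adj a u}

lemma mem_outerBoundary {U A : Finset V} {u : V} :
    u ∈ outerBoundary G U A ↔ (u ∈ U ∧ u ∉ A) ∧ ∃ a ∈ A, G.Adj a u := by
  simp only [outerBoundary, Finset.mem_filter, Finset.mem_sdiff]

end

section

variable [Fintype V]

open scoped Classical in
/-- The ball of radius `r` around `u` in the graph induced by `U`. -/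
noncomputable def walkBall (G : SimpleGraph V) (U : Finset V) (u : V) (r : ℕ) : Finset V :=
  {v | ∃ p : G.Walk u v, p.length ≤ r ∧ ∀ x ∈ p.support, x ∈ U}

lemma mem_walkBall {U : Finset V} {u v : V} {r : ℕ} :
    v ∈ walkBall G U u r ↔ ∃ p : G.Walk u v, p.length ≤ r ∧ ∀ x ∈ p.support, x ∈ U := by
  simp only [walkBall, Finset.mem_filter, Finset.mem_univ, true_and]

lemma walkBall_subset {U : Finset V} {u : V} {r : ℕ} : walkBall G U u r ⊆ U := fun _ hv => by
  obtain ⟨p, -, hp⟩ := mem_walkBall.1 hv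
  exact hp _ p.end_mem_support

lemma self_mem_walkBall {U : Finset V} {u : V} (hu : u ∈ U) (r : ℕ) : u ∈ walkBall G U u r :=
  mem_walkBall.2 ⟨.nil, r.zero_le, by simpa using hu⟩

end

variable [Fintype V] [DecidableEq V]

/-- The number of routes through the vertex `x`, a route being recorded by its set of vertices. -/
def congestion (Q : V × V → Finset V) (x : V) : ℕ :=
  #{p | x ∈ Q p}

lemma sum_congestion (Q : V × V → Finset V) : ∑ x, congestion Q x = ∑ p, #(Q p) := by
  simp only [congestion, Finset.card_filter]
  rw [Finset.sum_comm]
  exact Finset.sum_congr rfl fun p _ => by simp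

/-- Vertex expansion of the subgraph induced by `U`: every nonempty `A` with at most half of the
vertices has more than `φ |A|` neighbours outside. -/
def IsExpander (G : SimpleGraph V) (U : Finset V) (φ : ℝ) : Prop :=
  ∀ A ⊆ U, A.Nonempty → 2 * #A ≤ #U → φ * #A < #(outerBoundary G U A)

namespace IsCut

variable {R S : Finset V}

lemma union (h : IsCut G R S) {A : Finset V} (hA : A ⊆ (R ∪ S)ᶜ) :
    IsCut G (R ∪ A) (S ∪ outerBoundary G (R ∪ S)ᶜ A) where
  disjoint := by
    have hRS := Finset.disjoint_left.1 h.disjoint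
    refine Finset.disjoint_left.2 fun a ha hb => ?_
    have hAa := @hA a
    simp only [Finset.mem_union, mem_outerBoundary, Finset.mem_compl, not_or] at ha hb hAa
    tauto
  not_adj a ha b hb hb' hab := by
    simp only [Finset.mem_union, mem_outerBoundary, Finset.mem_compl, not_or] at ha hb hb'
    rcases ha with ha | ha
    · exact h.not_adj a ha b hb.1 hb'.1 hab
    · exact hb'.2 ⟨⟨⟨hb.1, hb'.1⟩, hb.2⟩, a, ha, hab⟩

lemma isSeparator (h : IsCut G R S) (hlow : (Fintype.card V : ℝ) / 3 ≤ #R)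
    (hhigh : (#R : ℝ) ≤ 2 / 3 * Fintype.card V) : IsSeparator G S := by
  refine ⟨R, (S ∪ R)ᶜ, Finset.union_compl _, h.disjoint.symm, ?_, ?_, hhigh, ?_, ?_⟩
  · exact disjoint_compl_right.mono_left Finset.subset_union_left
  · exact disjoint_compl_right.mono_left Finset.subset_union_right
  · have hle := Finset.card_le_card (Finset.subset_union_right (s₁ := S) (s₂ := R))
    have hcompl := Finset.card_add_card_compl (S ∪ R)
    rify at hle hcompl
    linarith
  · intro u hu v hv
    rw [Finset.mem_compl, Finset.mem_union, not_or] at hv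
    exact h.not_adj u hu v hv.2 hv.1

end IsCut

/-- Cut off a maximal non-expanding piece: it has fewer than a third of the vertices, since a cut
with between one and two thirds of the vertices would be a small separator. -/
theorem exists_isExpander {δ : ℝ} (hδ₀ : 0 < δ) (hδ : δ ≤ 1 / 4)
    (hsep : ∀ S : Finset V, IsSeparator G S → δ * Fintype.card V < #S)
    {Z : Finset V} (hZ : (#Z : ℝ) ≤ δ * Fintype.card V / 2) :
    ∃ U : Finset V, Disjoint U Z ∧ (Fintype.card V : ℝ) ≤ 2 * #U ∧
      IsExpander G U (δ / 2) := by
  classical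
  set n : ℝ := ((Fintype.card V : ℕ) : ℝ)
  obtain ⟨⟨R, S⟩, hRS, hmax⟩ := Finset.exists_max_image
    ({p | Z ⊆ p.2 ∧ IsCut G p.1 p.2 ∧ (#p.2 : ℝ) ≤ #Z + δ / 2 * #p.1 ∧
      (#p.1 : ℝ) ≤ n / 3} : Finset (Finset V × Finset V)) (fun p => #p.1)
    ⟨(∅, Z), by simpa using ⟨⟨Finset.disjoint_empty_left Z, by simp⟩, by positivity⟩⟩
  simp only [Finset.mem_filter, Finset.mem_univ, true_and, and_imp, Prod.forall] at hRS hmax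
  obtain ⟨hZS, hcut, hS, hR⟩ := hRS
  have hU := Finset.card_add_card_compl (R ∪ S)
  rw [Finset.card_union_of_disjoint hcut.disjoint] at hU
  rify at hU
  refine ⟨(R ∪ S)ᶜ, ?_, ?_, fun A hA hAne hAcard => ?_⟩
  · exact disjoint_compl_left.mono_right (hZS.trans Finset.subset_union_right)
  · nlinarith [show 0 ≤ n from Nat.cast_nonneg _]
  by_contra! hsmall
  set N := outerBoundary G (R ∪ S)ᶜ A
  have hcut' : IsCut G (R ∪ A) (S ∪ N) := hcut.union hA
  have hRA : #(R ∪ A) = #R + #A := Finset.card_union_of_disjoint <|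
    (disjoint_compl_right.mono_left Finset.subset_union_left).mono_right hA
  have hSN := Finset.card_union_le S N
  have hApos := hAne.card_pos
  have hSN' : (#(S ∪ N) : ℝ) ≤ #Z + δ / 2 * #(R ∪ A) := by
    rw [hRA]
    rify at hSN ⊢
    linarith
  by_cases hle : (#(R ∪ A) : ℝ) ≤ n / 3
  · have := hmax (R ∪ A) (S ∪ N) (hZS.trans Finset.subset_union_left) hcut' hSN' hle
    omega
  · rify at hRA hAcard
    have hbig := hsep _ (hcut'.isSeparator (not_le.1 hle).le (by rw [hRA]; linarith))
    nlinarith [Nat.cast_nonneg (α := ℝ) #S]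

lemma walkBall_union_outerBoundary_subset {U : Finset V} {u : V} {r : ℕ} :
    walkBall G U u r ∪ outerBoundary G U (walkBall G U u r) ⊆ walkBall G U u (r + 1) := by
  intro v hv
  rcases Finset.mem_union.1 hv with hv | hv
  · obtain ⟨p, hpr, hpU⟩ := mem_walkBall.1 hv
    exact mem_walkBall.2 ⟨p, hpr.trans r.le_succ, hpU⟩
  · obtain ⟨⟨hvU, -⟩, a, ha, hav⟩ := mem_outerBoundary.1 hv
    obtain ⟨p, hpr, hpU⟩ := mem_walkBall.1 ha
    refine mem_walkBall.2 ⟨p.concat hav, by simpa using hpr, fun x hx => ?_⟩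
    rw [SimpleGraph.Walk.support_concat, List.mem_append, List.mem_singleton] at hx
    rcases hx with hx | rfl
    exacts [hpU x hx, hvU]

namespace IsExpander

variable {U : Finset V} {φ : ℝ}

lemma card_walkBall (hU : IsExpander G U φ) (hφ : 0 ≤ φ) {u : V} (hu : u ∈ U) (r : ℕ) :
    #U < 2 * #(walkBall G U u r) ∨ (1 + φ) ^ r ≤ #(walkBall G U u r) := by
  induction r with
  | zero =>
    right
    simpa using ⟨u, self_mem_walkBall hu 0⟩
  | succ r ih =>
    have hle := Finset.card_le_card (walkBall_union_outerBoundary_subset (G := G) (U := U)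
      (u := u) (r := r))
    rw [Finset.card_union_of_disjoint (Finset.disjoint_left.2 fun a ha hb =>
      (mem_outerBoundary.1 hb).1.2 ha)] at hle
    by_cases hbig : #U < 2 * #(walkBall G U u r)
    · exact Or.inl (by omega)
    · have hgrow := hU _ walkBall_subset ⟨u, self_mem_walkBall hu r⟩ (not_lt.1 hbig)
      have ih := ih.resolve_left hbig
      right
      rify at hle
      rw [pow_succ]
      nlinarith

lemma exists_walk (hU : IsExpander G U φ) (hφ : 0 ≤ φ) {r : ℕ}
    (hr : (Fintype.card V : ℝ) ≤ (1 + φ) ^ r) {u v : V} (hu : u ∈ U) (hv : v ∈ U) :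
    ∃ p : G.Walk u v, p.length ≤ 2 * r ∧ ∀ x ∈ p.support, x ∈ U := by
  have hball : ∀ x ∈ U, #U < 2 * #(walkBall G U x r) := fun x hx => by
    rcases hU.card_walkBall hφ hx r with h | h
    · exact h
    · have hV : Fintype.card V ≤ #(walkBall G U x r) := by exact_mod_cast hr.trans h
      have := Finset.card_pos.2 ⟨x, self_mem_walkBall (G := G) hx r⟩
      have := Finset.card_le_univ U
      omega
  obtain ⟨x, hx⟩ : (walkBall G U u r ∩ walkBall G U v r).Nonempty :=
    Finset.inter_nonempty_of_card_lt_card_add_card walkBall_subset walkBall_subset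
      (by have := hball u hu; have := hball v hv; omega)
  obtain ⟨p, hpr, hpU⟩ := mem_walkBall.1 (Finset.mem_inter.1 hx).1
  obtain ⟨q, hqr, hqU⟩ := mem_walkBall.1 (Finset.mem_inter.1 hx).2
  refine ⟨p.append q.reverse, ?_, fun y hy => ?_⟩
  · rw [SimpleGraph.Walk.length_append, SimpleGraph.Walk.length_reverse]
    omega
  · rw [SimpleGraph.Walk.mem_support_append_iff, SimpleGraph.Walk.support_reverse,
      List.mem_reverse] at hy
    exact hy.elim (hpU y) (hqU y)

end IsExpander

lemma congestion_update_le (Q : V × V → Finset V) (p : V × V) (P : Finset V) (x : V) :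
    congestion (Function.update Q p P) x ≤ congestion Q x + if x ∈ P then 1 else 0 := by
  have hsub : (Finset.univ.filter fun q => x ∈ Function.update Q p P q) ⊆
      (Finset.univ.filter fun q => x ∈ Q q) ∪ if x ∈ P then {p} else ∅ := by
    intro q hq
    rw [Finset.mem_filter_univ] at hq
    by_cases hqp : q = p
    · subst hqp
      rw [Function.update_self] at hq
      simp [hq]
    · rw [Function.update_of_ne hqp] at hq
      simp [hq]
  refine (Finset.card_le_card hsub).trans ((Finset.card_union_le _ _).trans ?_)
  split_ifs <;> simp [congestion]

/-- Some ordered pairs of vertices are joined by walks with at most `k` vertices, the others have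
an empty route, and at most `c` of the routes pass through any vertex. -/
structure IsPartialRouting (G : SimpleGraph V) (k c : ℕ) (Q : V × V → Finset V) : Prop where
  route : ∀ p, Q p = ∅ ∨
    #(Q p) ≤ k ∧ ∃ w : G.Walk p.1 p.2, w.support.toFinset = Q p
  congestion_le : ∀ x, congestion Q x ≤ c

namespace IsPartialRouting

variable {k c : ℕ} {Q : V × V → Finset V}

lemma card_saturated_mul_le (hQ : IsPartialRouting G k c Q) :
    #{x | c ≤ congestion Q x} * c
      ≤ Fintype.card V * Fintype.card V * k :=
  calc #{x | c ≤ congestion Q x} * c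
      ≤ ∑ x with c ≤ congestion Q x, congestion Q x :=
        Finset.card_nsmul_le_sum _ _ _ fun x hx => (Finset.mem_filter.1 hx).2
    _ ≤ ∑ x, congestion Q x := Finset.sum_le_univ_sum_of_nonneg fun _ => Nat.zero_le _
    _ = ∑ p, #(Q p) := sum_congestion Q
    _ ≤ ∑ _p : V × V, k := Finset.sum_le_sum fun p _ =>
        (hQ.route p).elim (fun h => by simp [h]) And.left
    _ = Fintype.card V * Fintype.card V * k := by simp

lemma update (hQ : IsPartialRouting G k c Q) {p : V × V} (w : G.Walk p.1 p.2)
    (hk : #w.support.toFinset ≤ k) (hw : ∀ x ∈ w.support, congestion Q x < c) :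
    IsPartialRouting G k c (Function.update Q p w.support.toFinset) where
  route q := by
    by_cases hqp : q = p
    · subst hqp
      rw [Function.update_self]
      exact Or.inr ⟨hk, w, rfl⟩
    · rw [Function.update_of_ne hqp]
      exact hQ.route q
  congestion_le x := by
    refine (congestion_update_le Q p _ x).trans ?_
    split_ifs with hx
    exacts [hw x (List.mem_toFinset.1 hx), hQ.congestion_le x]

end IsPartialRouting

/-- In a maximal partial routing few vertices are saturated, and the expander avoiding them is
completely routed. -/
theorem exists_routing {δ : ℝ} (hδ₀ : 0 < δ) (hδ : δ ≤ 1 / 4)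
    (hsep : ∀ S : Finset V, IsSeparator G S → δ * Fintype.card V < #S)
    {r c : ℕ} (hr : (Fintype.card V : ℝ) ≤ (1 + δ / 2) ^ r)
    (hc : 2 * (Fintype.card V : ℝ) * (2 * r + 1) ≤ δ * c) (hc₀ : 0 < c) :
    ∃ (U : Finset V) (Q : V × V → Finset V), (Fintype.card V : ℝ) ≤ 2 * #U ∧
      (∀ u ∈ U, ∀ v ∈ U, ∃ w : G.Walk u v, w.support.toFinset = Q (u, v)) ∧
      ∀ x, congestion Q x ≤ c := by
  classical
  obtain ⟨Q, hQ, hmax⟩ := Finset.exists_max_image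
    ({Q | IsPartialRouting G (2 * r + 1) c Q} : Finset (V × V → Finset V))
    (fun Q => #{p | Q p ≠ ∅})
    ⟨fun _ => ∅, by simpa using ⟨fun _ => Or.inl rfl, by simp [congestion]⟩⟩
  simp only [Finset.mem_filter_univ] at hQ hmax
  have hZ : (#{x | c ≤ congestion Q x} : ℝ)
      ≤ δ * Fintype.card V / 2 := by
    have h := hQ.card_saturated_mul_le
    replace h := (Nat.cast_le (α := ℝ)).2 h
    push_cast at h
    rify at hc₀
    refine le_of_mul_le_mul_right (h.trans ?_) hc₀
    nlinarith [Nat.cast_nonneg (α := ℝ) (Fintype.card V)]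
  obtain ⟨U, hUZ, hUcard, hU⟩ := exists_isExpander hδ₀ hδ hsep hZ
  refine ⟨U, Q, hUcard, fun u hu v hv => ?_, hQ.congestion_le⟩
  rcases hQ.route (u, v) with huv | huv
  swap
  · exact huv.2
  exfalso
  obtain ⟨w, hwr, hwU⟩ := hU.exists_walk (by positivity) hr hu hv
  have hwk : #w.support.toFinset ≤ 2 * r + 1 :=
    (List.toFinset_card_le _).trans (w.length_support ▸ Nat.succ_le_succ hwr)
  have hle := hmax _ (hQ.update (p := (u, v)) w hwk fun x hx => by
    simpa using Finset.disjoint_left.1 hUZ (hwU x hx))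
  refine hle.not_gt (Finset.card_lt_card (Finset.ssubset_iff.2 ⟨(u, v), by simp [huv], ?_⟩))
  intro p hp
  rw [Finset.mem_insert, Finset.mem_filter_univ] at hp
  rw [Finset.mem_filter_univ]
  by_cases hpe : p = (u, v)
  · subst hpe
    simp
  · rw [Function.update_of_ne hpe]
    exact hp.resolve_left hpe

end Expansion

/-! ### Many adjacent pairs -/

section TouchingPairs

open scoped Classical in
/-- The ordered pairs of vertices that are equal or adjacent, that is, whose curves meet. -/
noncomputable def touchingPairs {V : Type*} [Fintype V] (G : SimpleGraph V) : Finset (V × V) :=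
  {p | p.1 = p.2 ∨ G.Adj p.1 p.2}

open scoped Classical in
/-- The pairs of routes that contain touching vertices. -/
noncomputable def crossingRoutes {V : Type*} [Fintype V] (G : SimpleGraph V)
    (Q : V × V → Finset V) : Finset ((V × V) × (V × V)) :=
  {pq | ∃ x ∈ Q pq.1, ∃ y ∈ Q pq.2, x = y ∨ G.Adj x y}

lemma mem_touchingPairs {V : Type*} [Fintype V] {G : SimpleGraph V} {p : V × V} :
    p ∈ touchingPairs G ↔ p.1 = p.2 ∨ G.Adj p.1 p.2 := by
  simp only [touchingPairs, Finset.mem_filter_univ]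

lemma mem_crossingRoutes {V : Type*} [Fintype V] {G : SimpleGraph V} {Q : V × V → Finset V}
    {pq : (V × V) × (V × V)} :
    pq ∈ crossingRoutes G Q ↔ ∃ x ∈ Q pq.1, ∃ y ∈ Q pq.2, x = y ∨ G.Adj x y := by
  simp only [crossingRoutes, Finset.mem_filter_univ]

namespace LatticeModel

variable {V : Type*} {G : SimpleGraph V}

section

variable (W : LatticeModel G)

/-- The lattice points visited by the walks of the vertices in `P`. -/
def region (P : Finset V) : Set (ℤ × ℤ) := {q | ∃ x ∈ P, q ∈ trace (W.walk x) W.length}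

lemma latticeJoined_walk {P : Finset V} {x : V} (hx : x ∈ P) {i : ℕ} (hi : i ≤ W.length) :
    LatticeJoined (W.region P) (W.walk x 0) (W.walk x i) :=
  (W.isWalk x).joined i.zero_le fun _ _ hk => ⟨x, hx, mem_trace _ (hk.trans hi)⟩

lemma latticeJoined_of_adj {P : Finset V} {x y : V} (hx : x ∈ P) (hy : y ∈ P) (h : G.Adj x y) :
    LatticeJoined (W.region P) (W.walk x 0) (W.walk y 0) := by
  obtain ⟨i, hi, j, hj, hij⟩ := (W.adj_iff x y h.ne).1 h
  exact (W.latticeJoined_walk hx hi).trans (hij ▸ (W.latticeJoined_walk hy hj).symm)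

lemma latticeJoined_of_walk {P : Finset V} {u v : V} (p : G.Walk u v)
    (hp : ∀ x ∈ p.support, x ∈ P) : LatticeJoined (W.region P) (W.walk u 0) (W.walk v 0) := by
  induction p with
  | nil => exact .refl
  | @cons u v w h p ih =>
    simp only [SimpleGraph.Walk.support_cons, List.mem_cons, forall_eq_or_imp] at hp
    exact (W.latticeJoined_of_adj hp.1 (hp.2 v p.start_mem_support) h).trans (ih hp.2)

lemma eq_or_adj_of_mem_trace {x y : V} {q : ℤ × ℤ} (hx : q ∈ trace (W.walk x) W.length)
    (hy : q ∈ trace (W.walk y) W.length) : x = y ∨ G.Adj x y := by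
  obtain ⟨i, hi, hxq⟩ := hx
  obtain ⟨j, hj, hyq⟩ := hy
  by_cases hxy : x = y
  exacts [.inl hxy, .inr ((W.adj_iff x y hxy).2 ⟨i, hi, j, hj, hxq.trans hyq.symm⟩)]

end

variable [Fintype V] [DecidableEq V]

lemma exists_mem_crossingRoutes (W : LatticeModel G) {Q : V × V → Finset V} {a b : Fin 3 → V}
    (hQ : ∀ i j, ∃ p : G.Walk (a i) (b j), p.support.toFinset = Q (a i, b j)) :
    ∃ i j k l, i ≠ k ∧ j ≠ l ∧ ((a i, b j), (a k, b l)) ∈ crossingRoutes G Q := by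
  have hwalk : ∀ i j, ∃ (f : ℕ → ℤ × ℤ) (n : ℕ), IsLatticeWalk f ∧
      (∀ k, f k ∈ W.region (Q (a i, b j))) ∧ f 0 = W.walk (a i) 0 ∧ f n = W.walk (b j) 0 := by
    intro i j
    obtain ⟨p, hp⟩ := hQ i j
    refine exists_walk_of_joined ⟨a i, ?_, mem_trace _ (Nat.zero_le _)⟩
      (W.latticeJoined_of_walk p fun x hx => hp ▸ List.mem_toFinset.2 hx)
    exact hp ▸ List.mem_toFinset.2 p.start_mem_support
  choose f n hf hfQ hf₀ hfn using hwalk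
  obtain ⟨i, j, k, l, hik, hjl, hmeet⟩ := exists_not_disjoint_trace_of_K33 hf n
    (fun i => W.walk (a i) 0) (fun j => W.walk (b j) 0) hf₀ hfn
  obtain ⟨q, ⟨s, -, rfl⟩, ⟨t, -, hst⟩⟩ := Set.not_disjoint_iff.1 hmeet
  obtain ⟨x, hx, hxq⟩ := hfQ i j s
  obtain ⟨y, hy, hyq⟩ := hfQ k l t
  exact ⟨i, j, k, l, hik, hjl, mem_crossingRoutes.2
    ⟨x, hx, y, hy, W.eq_or_adj_of_mem_trace hxq (hst ▸ hyq)⟩⟩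

end LatticeModel

variable {V : Type*} [Fintype V]

lemma card_crossingRoutes_le [DecidableEq V] {G : SimpleGraph V} {Q : V × V → Finset V} {c : ℕ}
    (hQ : ∀ x, congestion Q x ≤ c) :
    #(crossingRoutes G Q) ≤ #(touchingPairs G) * (c * c) := by
  have hsub : crossingRoutes G Q ⊆ (touchingPairs G).biUnion fun xy =>
      (Finset.univ.filter fun p => xy.1 ∈ Q p) ×ˢ (Finset.univ.filter fun p => xy.2 ∈ Q p) := by
    intro pq hpq
    obtain ⟨x, hx, y, hy, hxy⟩ := mem_crossingRoutes.1 hpq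
    refine Finset.mem_biUnion.2 ⟨(x, y), mem_touchingPairs.2 hxy, ?_⟩
    simpa only [Finset.mem_product, Finset.mem_filter_univ] using ⟨hx, hy⟩
  refine (Finset.card_le_card hsub).trans (Finset.card_biUnion_le_card_mul _ _ _ fun xy _ => ?_)
  rw [Finset.card_product]
  convert Nat.mul_le_mul (hQ xy.1) (hQ xy.2) using 2 <;> simp only [congestion]

/-- A pair of triples is determined by two distinct indices on each side, the corresponding two
pairs, and the remaining two vertices. -/
lemma card_pow_six_le (U : Finset V) (C : Finset ((V × V) × (V × V)))
    (hC : ∀ a b : Fin 3 → V, (∀ i, a i ∈ U) → (∀ j, b j ∈ U) →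
      ∃ i j k l, i ≠ k ∧ j ≠ l ∧ ((a i, b j), (a k, b l)) ∈ C) :
    #U ^ 6 ≤ 81 * #C * (Fintype.card V * Fintype.card V) := by
  have hthird : ∀ i k : Fin 3, i ≠ k → ∀ m : Fin 3, m = i ∨ m = k ∨ m = -(i + k) := by decide
  choose i j k l hik hjl hmem using fun ab : (Fin 3 → U) × (Fin 3 → U) =>
    hC (fun i => ab.1 i) (fun j => ab.2 j) (fun i => (ab.1 i).2) (fun j => (ab.2 j).2)
  let code : (Fin 3 → U) × (Fin 3 → U) →
      (((Fin 3 × Fin 3) × (Fin 3 × Fin 3)) × C) × (V × V) := fun ab =>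
    ((((i ab, j ab), (k ab, l ab)), ⟨_, hmem ab⟩),
      ((ab.1 (-(i ab + k ab)) : V), (ab.2 (-(j ab + l ab)) : V)))
  have hcode : Function.Injective code := by
    intro ab cd h
    simp only [code, Prod.mk.injEq, Subtype.mk.injEq] at h
    obtain ⟨⟨⟨⟨hi, hj⟩, hk, hl⟩, ⟨hai, hbj⟩, hak, hbl⟩, ham, hbm⟩ := h
    rw [← hi] at hai; rw [← hj] at hbj; rw [← hk] at hak; rw [← hl] at hbl
    rw [← hi, ← hk] at ham; rw [← hj, ← hl] at hbm
    refine Prod.ext (funext fun m => Subtype.ext ?_) (funext fun m => Subtype.ext ?_)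
    · rcases hthird _ _ (hik ab) m with rfl | rfl | rfl
      exacts [hai, hak, ham]
    · rcases hthird _ _ (hjl ab) m with rfl | rfl | rfl
      exacts [hbj, hbl, hbm]
  have hcard := Fintype.card_le_of_injective code hcode
  simp only [Fintype.card_prod, Fintype.card_fun, Fintype.card_fin, Fintype.card_coe] at hcard
  linarith [show #U ^ 6 = #U ^ 3 * #U ^ 3 by ring]

lemma le_one_add_half_pow {δ : ℝ} (hδ : 0 < δ) {n : ℝ} {L : ℕ} (hn : n ≤ 2 ^ L) :
    n ≤ (1 + δ / 2) ^ (⌈2 / δ⌉₊ * L) := by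
  have hceil : (2 : ℝ) ≤ (1 + δ / 2) ^ ⌈2 / δ⌉₊ :=
    calc (2 : ℝ) = 1 + 2 / δ * (δ / 2) := by field_simp; norm_num
      _ ≤ 1 + ⌈2 / δ⌉₊ * (δ / 2) := by gcongr; exact Nat.le_ceil _
      _ ≤ (1 + δ / 2) ^ ⌈2 / δ⌉₊ := one_add_mul_le_pow (by linarith) _
  calc n ≤ 2 ^ L := hn
    _ ≤ ((1 + δ / 2) ^ ⌈2 / δ⌉₊) ^ L := by gcongr
    _ = (1 + δ / 2) ^ (⌈2 / δ⌉₊ * L) := (pow_mul _ _ _).symm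

lemma exists_routing_parameters {δ : ℝ} (hδ₀ : 0 < δ) (hδ : δ ≤ 1 / 4) {n : ℝ} (hn₁ : 1 ≤ n)
    {L : ℕ} (hL : 1 ≤ L) (hn : n ≤ 2 ^ L) :
    ∃ r c : ℕ, n ≤ (1 + δ / 2) ^ r ∧ 2 * n * (2 * r + 1) ≤ δ * c ∧ 0 < c ∧
      (c : ℝ) ≤ 11 * n * L / δ ^ 2 := by
  set r := ⌈2 / δ⌉₊ * L with hr
  have hpos : 0 < 2 * n * (2 * r + 1) / δ := by positivity
  refine ⟨r, ⌈2 * n * (2 * r + 1) / δ⌉₊, le_one_add_half_pow hδ₀ hn, ?_, Nat.ceil_pos.2 hpos, ?_⟩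
  · rw [← div_le_iff₀' hδ₀]
    exact Nat.le_ceil _
  have hL : (1 : ℝ) ≤ L := Nat.one_le_cast.2 hL
  have hrL : (2 * r + 1) * δ ≤ 5 * L := by
    have hceil : (⌈2 / δ⌉₊ : ℝ) * δ ≤ 2 + δ := by
      have := (Nat.ceil_lt_add_one (show 0 ≤ 2 / δ by positivity)).le
      calc (⌈2 / δ⌉₊ : ℝ) * δ ≤ (2 / δ + 1) * δ := by gcongr
        _ = 2 + δ := by field_simp
    rw [hr]
    push_cast
    nlinarith [mul_le_mul_of_nonneg_right hceil (zero_le_one.trans hL)]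
  refine (Nat.ceil_lt_add_one hpos.le).le.trans ?_
  have hsq : δ ^ 2 ≤ n * L :=
    (pow_le_one₀ hδ₀.le (by linarith)).trans (one_le_mul_of_one_le_of_one_le hn₁ hL)
  rw [div_add_one hδ₀.ne', div_le_div_iff₀ hδ₀ (by positivity)]
  nlinarith [mul_le_mul_of_nonneg_left hrL (show 0 ≤ 2 * n * δ by positivity),
    mul_le_mul_of_nonneg_right hsq hδ₀.le]

/-- Every three-by-three family of routes has a crossing, and the low congestion spreads the
crossings over many pairs of vertices. -/
theorem LatticeModel.sq_card_le_card_touchingPairs [DecidableEq V] {G : SimpleGraph V}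
    (W : LatticeModel G) {δ : ℝ} (hδ₀ : 0 < δ) (hδ : δ ≤ 1 / 4)
    (hsep : ∀ S : Finset V, IsSeparator G S → δ * Fintype.card V < #S)
    {L : ℕ} (hL : 1 ≤ L) (hV : Fintype.card V ≤ 2 ^ L) [Nonempty V] :
    (Fintype.card V : ℝ) ^ 2 * δ ^ 4 ≤ 2 ^ 20 * L ^ 2 * #(touchingPairs G) := by
  set n : ℝ := ((Fintype.card V : ℕ) : ℝ) with hn
  have hn₁ : 1 ≤ n := Nat.one_le_cast.2 Fintype.card_pos
  have hnL : n ≤ 2 ^ L := by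
    rw [hn]
    exact_mod_cast hV
  obtain ⟨r, c, hr, hrc, hc₀, hc⟩ := exists_routing_parameters hδ₀ hδ hn₁ hL hnL
  obtain ⟨U, Q, hU, hQ, hQc⟩ := exists_routing hδ₀ hδ hsep hr hrc hc₀
  have hsix := (card_pow_six_le U (crossingRoutes G Q) fun a b ha hb =>
    W.exists_mem_crossingRoutes fun i j => hQ (a i) (ha i) (b j) (hb j)).trans
    (Nat.mul_le_mul_right _ (Nat.mul_le_mul_left 81 (card_crossingRoutes_le hQc)))
  set D := #(touchingPairs G)
  replace hsix : (#U : ℝ) ^ 6 ≤ 81 * (D * (c * c)) * (n * n) := by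
    rw [hn]
    exact_mod_cast hsix
  have hmul : n ^ 4 * (n ^ 2 * δ ^ 4) ≤ n ^ 4 * (64 * 81 * 11 ^ 2 * L ^ 2 * D) :=
    calc n ^ 4 * (n ^ 2 * δ ^ 4) = 64 * (n / 2) ^ 6 * δ ^ 4 := by ring
      _ ≤ 64 * (#U : ℝ) ^ 6 * δ ^ 4 := by gcongr; linarith
      _ ≤ 64 * (81 * (D * ((11 * n * L / δ ^ 2) * (11 * n * L / δ ^ 2))) * (n * n)) * δ ^ 4 := by
        gcongr
        exact hsix.trans (by gcongr)
      _ = n ^ 4 * (64 * 81 * 11 ^ 2 * L ^ 2 * D) := by field_simp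
  nlinarith [le_of_mul_le_mul_left hmul (by positivity),
    show (0 : ℝ) ≤ L ^ 2 * D by positivity]

end TouchingPairs

/-! ### Potentials on the dual lattice -/

/-- The neighbour of a lattice point to the right, above, to the left or below, for `d = 0, 1, 2, 3`
respectively. -/
def neighbor (v : ℤ × ℤ) (d : Fin 4) : ℤ × ℤ :=
  ![(v.1 + 1, v.2), (v.1, v.2 + 1), (v.1 - 1, v.2), (v.1, v.2 - 1)] d

/-- The dual lattice point to the left of the edge from `v` to `neighbor v d`. The dual point at the
lower left corner of the unit cell centred at `P` is also denoted by `P`. -/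
def leftCorner (v : ℤ × ℤ) (d : Fin 4) : ℤ × ℤ :=
  ![(v.1 + 1, v.2 + 1), (v.1, v.2 + 1), (v.1, v.2), (v.1 + 1, v.2)] d

/-- The dual lattice point to the right of the edge from `v` to `neighbor v d`. -/
def rightCorner (v : ℤ × ℤ) (d : Fin 4) : ℤ × ℤ := leftCorner v (d - 1)

lemma neighbor_injective (v : ℤ × ℤ) : Function.Injective (neighbor v) := by
  intro d e h
  fin_cases d <;> fin_cases e <;> simp [neighbor] at h ⊢ <;> omega

@[simp]
lemma neighbor_neighbor (v : ℤ × ℤ) (d : Fin 4) : neighbor (neighbor v d) (d + 2) = v := by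
  fin_cases d <;> simp [neighbor]

@[simp]
lemma leftCorner_neighbor (v : ℤ × ℤ) (d : Fin 4) :
    leftCorner (neighbor v d) (d + 2) = rightCorner v d := by
  fin_cases d <;> simp [neighbor, leftCorner, rightCorner]

@[simp]
lemma rightCorner_neighbor (v : ℤ × ℤ) (d : Fin 4) :
    rightCorner (neighbor v d) (d + 2) = leftCorner v d := by
  fin_cases d <;> simp [neighbor, leftCorner, rightCorner]

lemma LatticeStep.exists_eq_neighbor {p q : ℤ × ℤ} (h : LatticeStep p q) (hne : q ≠ p) :
    ∃ d, q = neighbor p d := by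
  rcases h with h | h | h | h | h
  exacts [absurd h hne, ⟨0, h⟩, ⟨2, h⟩, ⟨1, h⟩, ⟨3, h⟩]

lemma LatticeStep.exists_common_corner {p q : ℤ × ℤ} (h : LatticeStep p q) :
    ∃ d e, leftCorner p d = leftCorner q e := by
  by_cases hne : q = p
  · exact ⟨0, 0, by rw [hne]⟩
  · obtain ⟨d, rfl⟩ := h.exists_eq_neighbor hne
    exact ⟨d - 1, d + 2, (leftCorner_neighbor p d).symm⟩

lemma sum_sub_corners_inner (A : Finset (ℤ × ℤ)) (Φ : ℤ × ℤ → ℤ) :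
    ∑ v ∈ A, ∑ d : Fin 4,
      (if neighbor v d ∈ A then Φ (leftCorner v d) - Φ (rightCorner v d) else 0) = 0 := by
  rw [← Finset.sum_product', ← Finset.sum_filter]
  refine Finset.sum_involution (fun p _ => (neighbor p.1 p.2, p.2 + 2)) ?_ ?_ ?_ ?_
  · rintro ⟨v, d⟩ -
    simp
  · rintro ⟨v, d⟩ - - h
    have hd : d + 2 = d := (Prod.mk.inj h).2
    simp at hd
  · rintro ⟨v, d⟩ h
    simp only [Finset.mem_filter, Finset.mem_product, Finset.mem_univ, and_true] at h ⊢
    exact ⟨h.2, by rw [neighbor_neighbor]; exact h.1⟩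
  · rintro ⟨v, d⟩ -
    simp [add_assoc]

/-- A discrete Stokes theorem. -/
lemma sum_sub_corners_boundary (A : Finset (ℤ × ℤ)) (Φ : ℤ × ℤ → ℤ) :
    ∑ v ∈ A, ∑ d : Fin 4,
      (if neighbor v d ∈ A then 0 else Φ (leftCorner v d) - Φ (rightCorner v d)) = 0 := by
  have hvertex : ∀ v, ∑ d : Fin 4, (Φ (leftCorner v d) - Φ (rightCorner v d)) = 0 := fun v => by
    rw [Finset.sum_sub_distrib, sub_eq_zero]
    exact ((Equiv.subRight 1).sum_comp fun d => Φ (leftCorner v d)).symm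
  calc _ = ∑ v ∈ A, ∑ d : Fin 4, (Φ (leftCorner v d) - Φ (rightCorner v d)) - ∑ v ∈ A, ∑ d : Fin 4,
        (if neighbor v d ∈ A then Φ (leftCorner v d) - Φ (rightCorner v d) else 0) := by
        simp_rw [← Finset.sum_sub_distrib (G := ℤ)]
        refine Finset.sum_congr rfl fun v _ => Finset.sum_congr rfl fun d _ => ?_
        split_ifs <;> simp
    _ = 0 := by rw [Finset.sum_eq_zero fun v _ => hvertex v, sum_sub_corners_inner, sub_zero]

/-- The function `g` on the dual lattice is a potential of the antisymmetric edge function `F`: it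
grows by `F` across each edge, from right to left. -/
def IsPotential (g : ℤ × ℤ → ℤ) (F : ℤ × ℤ → ℤ × ℤ → ℤ) : Prop :=
  ∀ v d, g (leftCorner v d) - g (rightCorner v d) = F v (neighbor v d)

namespace IsPotential

variable {g : ℤ × ℤ → ℤ} {F : ℤ × ℤ → ℤ × ℤ → ℤ}

lemma of_sub_left_of_sub_below
    (hleft : ∀ i j, g (i + 1, j) - g (i, j) = -F (i, j - 1) (i, j))
    (hbelow : ∀ i j, g (i, j + 1) - g (i, j) = F (i - 1, j) (i, j))
    (hF : ∀ a b, F b a = -F a b) : IsPotential g F := by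
  rintro ⟨i, j⟩ d
  have hright := hbelow (i + 1) j
  have habove := hleft i (j + 1)
  have hswap₁ := hF (i - 1, j) (i, j)
  have hswap₂ := hF (i, j - 1) (i, j)
  have hl := hleft i j
  have hb := hbelow i j
  simp only [add_sub_cancel_right] at hright habove
  have hpred : (0 : Fin 4) - 1 = 3 ∧ (1 : Fin 4) - 1 = 0 ∧ (2 : Fin 4) - 1 = 1 ∧
    (3 : Fin 4) - 1 = 2 := by decide
  fin_cases d <;> simp [rightCorner, leftCorner, neighbor, hpred] <;> omega

lemma around (h : IsPotential g F) (v : ℤ × ℤ) :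
    g (leftCorner v 0) - g (leftCorner v 3) = F v (neighbor v 0) ∧
    g (leftCorner v 1) - g (leftCorner v 0) = F v (neighbor v 1) ∧
    g (leftCorner v 2) - g (leftCorner v 1) = F v (neighbor v 2) ∧
    g (leftCorner v 3) - g (leftCorner v 2) = F v (neighbor v 3) :=
  ⟨h v 0, h v 1, h v 2, h v 3⟩

lemma leftCorner_eq (h : IsPotential g F) {v : ℤ × ℤ} (hv : ∀ b, F v b = 0) (d e : Fin 4) :
    g (leftCorner v d) = g (leftCorner v e) := by
  have h := h.around v
  simp only [hv] at h
  fin_cases d <;> fin_cases e <;> simp <;> omega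

/-- The hypothesis on `F` says that `v` is passed once by the flow, coming from `p` and going to
`q`. -/
lemma leftCorner_of_path (h : IsPotential g F) {v p q : ℤ × ℤ} {d e : Fin 4}
    (hq : q = neighbor v d) (hp : p = neighbor v e) (hpq : p ≠ q)
    (hv : ∀ b, F v b = (if b = q then 1 else 0) - (if b = p then 1 else 0)) :
    (∀ c, g (leftCorner v c) = g (leftCorner v d) ∨
        g (leftCorner v c) = g (leftCorner v d) - 1) ∧
      g (rightCorner v d) = g (leftCorner v d) - 1 ∧ g (rightCorner v e) = g (leftCorner v d) ∧
      g (leftCorner v e) = g (leftCorner v d) - 1 := by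
  have hne : d ≠ e := by rintro rfl; exact hpq (hp.trans hq.symm)
  have h := h.around v
  simp only [hv, hq, hp, (neighbor_injective v).eq_iff] at h
  unfold rightCorner
  generalize leftCorner v = l at *
  clear hq hp hpq hv
  fin_cases d <;> fin_cases e <;> simp at hne h ⊢ <;>
    simp [show (-1 : Fin 4) = 3 from rfl, Fin.forall_fin_succ] <;> omega

end IsPotential

lemma apply_corners_eq_of_boundary {A : Finset (ℤ × ℤ)} {Φ : ℤ × ℤ → ℤ} {v₀ : ℤ × ℤ} {d₀ : Fin 4}
    (hv₀ : v₀ ∈ A) (hd₀ : neighbor v₀ d₀ ∉ A)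
    (h : ∀ v ∈ A, ∀ d, neighbor v d ∉ A → ¬ (v = v₀ ∧ d = d₀) →
      Φ (leftCorner v d) = Φ (rightCorner v d)) :
    Φ (leftCorner v₀ d₀) = Φ (rightCorner v₀ d₀) := by
  have hzero : ∀ v ∈ A, ∀ d, ¬ (v = v₀ ∧ d = d₀) →
      (if neighbor v d ∈ A then 0 else Φ (leftCorner v d) - Φ (rightCorner v d)) = 0 := by
    intro v hv d hne
    split_ifs with hd
    exacts [rfl, sub_eq_zero.2 (h v hv d hd hne)]
  have hsum := sum_sub_corners_boundary A Φ
  rwa [Finset.sum_eq_single_of_mem v₀ hv₀ fun v hv hne => Finset.sum_eq_zero fun d _ =>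
      hzero v hv d fun h => hne h.1,
    Finset.sum_eq_single_of_mem d₀ (Finset.mem_univ d₀) fun d _ hne =>
      hzero v₀ hv₀ d fun h => hne h.2, if_neg hd₀, sub_eq_zero] at hsum

/-! ### Arcs between two disjoint walks -/

/-- Arcs in the lattice leading from a walk `lower` to a disjoint walk `upper` and otherwise
avoiding both. Each arc is represented by the set `arc x` of its points, the set `inner x` of those
strictly between its ends, and a simple path `core x` in it between its ends; `start x` and
`finish x` are the times at which `lower` and `upper` visit the ends. -/
structure Strip (ι : Type*) where
  lower : ℕ → ℤ × ℤ
  upper : ℕ → ℤ × ℤ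
  lowerLength : ℕ
  upperLength : ℕ
  core : ι → ℕ → ℤ × ℤ
  coreLength : ι → ℕ
  start : ι → ℕ
  finish : ι → ℕ
  inner : ι → Set (ℤ × ℤ)
  arc : ι → Set (ℤ × ℤ)
  isWalk_lower : IsLatticeWalk lower
  isWalk_upper : IsLatticeWalk upper
  isWalk_core : ∀ x, IsLatticeWalk (core x)
  start_le : ∀ x, start x ≤ lowerLength
  finish_le : ∀ x, finish x ≤ upperLength
  core_zero : ∀ x, core x 0 = lower (start x)
  core_last : ∀ x, core x (coreLength x) = upper (finish x)
  two_le_coreLength : ∀ x, 2 ≤ coreLength x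
  core_injOn : ∀ x, Set.InjOn (core x) (Set.Iic (coreLength x))
  core_mem_inner : ∀ x k, 0 < k → k < coreLength x → core x k ∈ inner x
  trace_core_subset : ∀ x, trace (core x) (coreLength x) ⊆ arc x
  inner_subset_arc : ∀ x, inner x ⊆ arc x
  inner_finite : ∀ x, (inner x).Finite
  notMem_lower : ∀ x, ∀ p ∈ inner x, p ∉ trace lower lowerLength
  notMem_upper : ∀ x, ∀ p ∈ inner x, p ∉ trace upper upperLength
  disjoint_lower_upper : Disjoint (trace lower lowerLength) (trace upper upperLength)
  joined : ∀ x, ∀ p ∈ inner x, LatticeJoined (inner x) (core x 1) p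

namespace Strip

variable {ι : Type*} (S : Strip ι)

/-- Crossing number of the walk that follows `lower` up to the arc `x`, then the arc, and then
`upper` backwards. -/
def height (x : ι) (P : ℤ × ℤ) : ℤ :=
  rightCrossings S.lower (S.start x) P + rightCrossings (S.core x) (S.coreLength x) P
    - rightCrossings S.upper (S.finish x) P

/-- Flow of the walk whose crossing number is `height`. -/
def heightFlow (x : ι) (a b : ℤ × ℤ) : ℤ :=
  flow S.lower (S.start x) a b + flow (S.core x) (S.coreLength x) a b
    - flow S.upper (S.finish x) a b

/-- Defect of `height` from being a potential; it is the same for all arcs. -/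
def drift (P : ℤ × ℤ) : ℤ := onRightRay (S.lower 0) P - onRightRay (S.upper 0) P

/-- The points on neither of the two walks joined by the arcs. -/
def IsFree (p : ℤ × ℤ) : Prop :=
  p ∉ trace S.lower S.lowerLength ∧ p ∉ trace S.upper S.upperLength

lemma height_sub_left (x : ι) (i j : ℤ) :
    S.height x (i + 1, j) - S.height x (i, j) = -S.heightFlow x (i, j - 1) (i, j) := by
  have h₁ := S.isWalk_lower.rightCrossings_sub_left (S.start x) i j
  have h₂ := (S.isWalk_core x).rightCrossings_sub_left (S.coreLength x) i j
  have h₃ := S.isWalk_upper.rightCrossings_sub_left (S.finish x) i j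
  simp only [height, heightFlow]
  linarith

lemma height_sub_below (x : ι) (i j : ℤ) :
    S.height x (i, j + 1) - S.height x (i, j)
      = S.drift (i, j) + S.heightFlow x (i - 1, j) (i, j) := by
  have h₁ := S.isWalk_lower.rightCrossings_sub_below (S.start x) i j
  have h₂ := (S.isWalk_core x).rightCrossings_sub_below (S.coreLength x) i j
  have h₃ := S.isWalk_upper.rightCrossings_sub_below (S.finish x) i j
  rw [S.core_zero, S.core_last] at h₂
  simp only [height, heightFlow, drift]
  linarith

lemma heightFlow_swap (x : ι) (a b : ℤ × ℤ) : S.heightFlow x b a = -S.heightFlow x a b := by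
  simp only [heightFlow, flow_swap _ _ a b]
  ring

/-- Height of the arc `x` relative to the arc `z`. -/
def relHeight (x z : ι) (P : ℤ × ℤ) : ℤ := S.height x P - S.height z P

lemma relHeight_swap (x z : ι) (P : ℤ × ℤ) : S.relHeight z x P = -S.relHeight x z P :=
  (neg_sub _ _).symm

lemma isPotential_relHeight (x z : ι) :
    IsPotential (S.relHeight x z) fun a b => S.heightFlow x a b - S.heightFlow z a b := by
  refine .of_sub_left_of_sub_below (fun i j => ?_) (fun i j => ?_) fun a b => ?_
  · simp only [relHeight]
    linarith [S.height_sub_left x i j, S.height_sub_left z i j]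
  · simp only [relHeight]
    linarith [S.height_sub_below x i j, S.height_sub_below z i j]
  · simp only [S.heightFlow_swap _ a b]
    ring

variable {S} {x z u : ι} {p : ℤ × ℤ} {k : ℕ}

lemma isFree_of_mem_inner (hp : p ∈ S.inner x) : S.IsFree p :=
  ⟨S.notMem_lower x p hp, S.notMem_upper x p hp⟩

lemma coreLength_pos : 0 < S.coreLength x := two_pos.trans_le (S.two_le_coreLength x)

lemma core_zero_mem_lower : S.core x 0 ∈ trace S.lower S.lowerLength :=
  S.core_zero x ▸ mem_trace _ (S.start_le x)

lemma core_last_mem_upper : S.core x (S.coreLength x) ∈ trace S.upper S.upperLength :=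
  S.core_last x ▸ mem_trace _ (S.finish_le x)

lemma core_one_mem_inner : S.core x 1 ∈ S.inner x :=
  S.core_mem_inner x 1 one_pos (S.two_le_coreLength x)

lemma IsFree.lt_of_core_eq (hp : S.IsFree p) (hk : k ≤ S.coreLength x) (h : S.core x k = p) :
    0 < k ∧ k < S.coreLength x := by
  refine ⟨Nat.pos_of_ne_zero ?_, lt_of_le_of_ne hk ?_⟩ <;> rintro rfl
  exacts [hp.1 (h ▸ core_zero_mem_lower), hp.2 (h ▸ core_last_mem_upper)]

lemma IsFree.mem_inner_of_mem_trace (hp : S.IsFree p)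
    (h : p ∈ trace (S.core x) (S.coreLength x)) : p ∈ S.inner x := by
  obtain ⟨k, hk, rfl⟩ := h
  obtain ⟨h₀, h₁⟩ := hp.lt_of_core_eq hk rfl
  exact S.core_mem_inner x k h₀ h₁

lemma eq_zero_of_core_mem_lower (hk : k ≤ S.coreLength x)
    (h : S.core x k ∈ trace S.lower S.lowerLength) : k = 0 := by
  by_contra h₀
  rcases hk.lt_or_eq with hk | rfl
  · exact S.notMem_lower x _ (S.core_mem_inner x k (Nat.pos_of_ne_zero h₀) hk) h
  · exact Set.disjoint_left.1 S.disjoint_lower_upper h core_last_mem_upper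

lemma IsFree.heightFlow_eq_flow (hp : S.IsFree p) (b : ℤ × ℤ) :
    S.heightFlow x p b = flow (S.core x) (S.coreLength x) p b := by
  rw [heightFlow,
    flow_eq_zero_of_notMem_left (fun h => hp.1 (trace_mono _ (S.start_le x) h)),
    flow_eq_zero_of_notMem_left (fun h => hp.2 (trace_mono _ (S.finish_le x) h)), zero_add,
    sub_zero]

lemma IsFree.heightFlow_eq_zero (hp : S.IsFree p) (hx : p ∉ trace (S.core x) (S.coreLength x))
    (b : ℤ × ℤ) : S.heightFlow x p b = 0 := by
  rw [hp.heightFlow_eq_flow, flow_eq_zero_of_notMem_left hx]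

lemma heightFlow_eq_zero_of_disjoint (h : Disjoint (S.arc x) (S.arc z)) (hp : p ∈ S.inner x)
    (b : ℤ × ℤ) : S.heightFlow z p b = 0 :=
  (isFree_of_mem_inner hp).heightFlow_eq_zero
    (fun hz => Set.disjoint_left.1 h (S.inner_subset_arc x hp) (S.trace_core_subset z hz)) b

lemma heightFlow_core (h₀ : 0 < k) (hk : k < S.coreLength x) (b : ℤ × ℤ) :
    S.heightFlow x (S.core x k) b
      = (if b = S.core x (k + 1) then 1 else 0) - (if b = S.core x (k - 1) then 1 else 0) := by
  have hk₁ : k - 1 + 1 = k := Nat.sub_add_cancel h₀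
  rw [(isFree_of_mem_inner (S.core_mem_inner x k h₀ hk)).heightFlow_eq_flow]
  simp only [flow, stepFlow, Finset.sum_sub_distrib]
  congr 1
  · rw [Finset.sum_eq_single_of_mem k (Finset.mem_range.2 hk)]
    · simp [eq_comm]
    · intro i hi hik
      exact if_neg fun h => hik (S.core_injOn x (Finset.mem_range.1 hi).le hk.le h.1)
  · rw [Finset.sum_eq_single_of_mem (k - 1) (Finset.mem_range.2 (by omega))]
    · simp [hk₁, eq_comm]
    · intro i hi hik
      refine if_neg fun h => hik ?_
      have := S.core_injOn x (Nat.succ_le_of_lt (Finset.mem_range.1 hi)) hk.le h.2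
      omega

lemma heightFlow_lower (hp : p ∈ trace S.lower S.lowerLength) {q : ℤ × ℤ}
    (hq : q ∉ trace S.lower S.lowerLength) :
    S.heightFlow x p q = if p = S.core x 0 ∧ q = S.core x 1 then 1 else 0 := by
  rw [heightFlow,
    flow_eq_zero_of_notMem_right (fun h => hq (trace_mono _ (S.start_le x) h)),
    flow_eq_zero_of_notMem_left (fun h => Set.disjoint_left.1 S.disjoint_lower_upper hp
      (trace_mono _ (S.finish_le x) h)), zero_add, sub_zero]
  rw [flow, Finset.sum_eq_single_of_mem 0 (Finset.mem_range.2 coreLength_pos)]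
  · have h₁ : S.core x 1 ≠ p := fun h => S.notMem_lower x _ core_one_mem_inner (h ▸ hp)
    simp [stepFlow, h₁, eq_comm]
  · intro i hi h₀
    have hi := Finset.mem_range.1 hi
    have hip : S.core x i ≠ p := fun h => h₀ (eq_zero_of_core_mem_lower hi.le (h ▸ hp))
    have hip' : S.core x (i + 1) ≠ p := fun h =>
      i.succ_ne_zero (eq_zero_of_core_mem_lower hi (h ▸ hp))
    simp [stepFlow, hip, hip']

variable (S) in
lemma exists_core_succ_eq_neighbor (hk : k < S.coreLength x) :
    ∃ d, S.core x (k + 1) = neighbor (S.core x k) d :=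
  (S.isWalk_core x k).exists_eq_neighbor fun h =>
    k.succ_ne_self (S.core_injOn x hk hk.le h)

variable (S) in
/-- Direction of the first step of the arc `x`. -/
noncomputable def firstDir (x : ι) : Fin 4 :=
  (S.exists_core_succ_eq_neighbor (x := x) (k := 0) coreLength_pos).choose

variable (S) in
lemma core_one (x : ι) : S.core x 1 = neighbor (S.core x 0) (S.firstDir x) :=
  (S.exists_core_succ_eq_neighbor (x := x) (k := 0) coreLength_pos).choose_spec

variable (S) in
/-- The dual point to the left of the first step of the arc `x`. -/
noncomputable def startLeft (x : ι) : ℤ × ℤ := leftCorner (S.core x 0) (S.firstDir x)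

variable (S) in
/-- The dual point to the right of the first step of the arc `x`. -/
noncomputable def startRight (x : ι) : ℤ × ℤ := rightCorner (S.core x 0) (S.firstDir x)

variable (S) in
lemma startRight_eq (x : ι) : S.startRight x = leftCorner (S.core x 1) (S.firstDir x + 2) := by
  rw [startRight, core_one, leftCorner_neighbor]

variable (S) in
lemma startLeft_eq (x : ι) : S.startLeft x = leftCorner (S.core x 1) (S.firstDir x + 1) := by
  rw [startLeft, ← rightCorner_neighbor, ← core_one, rightCorner, add_sub_assoc]
  rfl

lemma core_zero_and_core_one_iff {d : Fin 4} :
    p = S.core x 0 ∧ neighbor p d = S.core x 1 ↔ p = S.core x 0 ∧ d = S.firstDir x := by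
  refine and_congr_right fun h => ?_
  rw [h, S.core_one, (neighbor_injective _).eq_iff]

end Strip

/-- Around `p` the function `g` on the dual lattice takes only the values `c` and `c - 1`. -/
def HasLevel (g : ℤ × ℤ → ℤ) (p : ℤ × ℤ) (c : ℤ) : Prop :=
  ∀ d, g (leftCorner p d) = c ∨ g (leftCorner p d) = c - 1

namespace Strip

variable {ι : Type*} (S : Strip ι)

/-- Relative height of disjoint arcs `x` and `z` on the left of `x`; this is the larger one of the
two values that the relative height takes around the points of the arcs. -/
noncomputable def level (x z : ι) : ℤ := S.relHeight x z (S.startLeft x)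

variable {S} {x z u : ι} {p v : ℤ × ℤ} {d e : Fin 4} {k : ℕ}

lemma relHeight_core_succ (h : Disjoint (S.arc x) (S.arc z)) (hk : k + 1 < S.coreLength x)
    (hd : S.core x (k + 1) = neighbor (S.core x k) d)
    (he : S.core x (k + 2) = neighbor (S.core x (k + 1)) e) :
    HasLevel (S.relHeight x z) (S.core x (k + 1)) (S.relHeight x z (leftCorner (S.core x k) d)) ∧
      S.relHeight x z (leftCorner (S.core x (k + 1)) e)
        = S.relHeight x z (leftCorner (S.core x k) d) ∧
      S.relHeight x z (rightCorner (S.core x k) d)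
        = S.relHeight x z (leftCorner (S.core x k) d) - 1 := by
  have hback : S.core x k = neighbor (S.core x (k + 1)) (d + 2) := by rw [hd, neighbor_neighbor]
  have hne : S.core x k ≠ S.core x (k + 2) := fun h => by
    have := S.core_injOn x (Set.mem_Iic.2 (by omega)) (Set.mem_Iic.2 hk) h
    omega
  obtain ⟨hlevel, -, hleft, hright⟩ := (S.isPotential_relHeight x z).leftCorner_of_path he hback hne
    fun b => by
      rw [heightFlow_eq_zero_of_disjoint h (S.core_mem_inner x _ k.succ_pos hk),
        heightFlow_core k.succ_pos hk, sub_zero]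
      rfl
  have hleft : S.relHeight x z (leftCorner (S.core x (k + 1)) e)
      = S.relHeight x z (leftCorner (S.core x k) d) := by
    rw [← hleft, hd, rightCorner_neighbor]
  refine ⟨hleft ▸ hlevel, hleft, ?_⟩
  rw [← hleft, ← hright, hd, leftCorner_neighbor]

lemma relHeight_leftCorner_core (h : Disjoint (S.arc x) (S.arc z)) (hk : k < S.coreLength x)
    (hd : S.core x (k + 1) = neighbor (S.core x k) d) :
    S.relHeight x z (leftCorner (S.core x k) d) = S.level x z := by
  induction k generalizing d with
  | zero => rw [neighbor_injective _ (hd.symm.trans (S.core_one x))]; rfl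
  | succ k ih =>
    obtain ⟨c, hc⟩ := S.exists_core_succ_eq_neighbor (Nat.lt_of_succ_lt hk)
    exact (relHeight_core_succ h hk hc hd).2.1.trans (ih (Nat.lt_of_succ_lt hk) hc)

lemma hasLevel_core (h : Disjoint (S.arc x) (S.arc z)) (h₀ : 0 < k)
    (hk : k < S.coreLength x) :
    HasLevel (S.relHeight x z) (S.core x k) (S.level x z) := by
  obtain ⟨k, rfl⟩ := Nat.exists_eq_succ_of_ne_zero h₀.ne'
  obtain ⟨d, hd⟩ := S.exists_core_succ_eq_neighbor (Nat.lt_of_succ_lt hk)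
  obtain ⟨e, he⟩ := S.exists_core_succ_eq_neighbor hk
  rw [← relHeight_leftCorner_core h (Nat.lt_of_succ_lt hk) hd]
  exact (relHeight_core_succ h hk hd he).1

lemma relHeight_startRight (h : Disjoint (S.arc x) (S.arc z)) :
    S.relHeight x z (S.startRight x) = S.level x z - 1 := by
  obtain ⟨e, he⟩ := S.exists_core_succ_eq_neighbor (x := x) (S.two_le_coreLength x)
  exact (relHeight_core_succ h (S.two_le_coreLength x) (S.core_one x) he).2.2

lemma relHeight_sub_of_mem_lower (x z : ι) (hv : v ∈ trace S.lower S.lowerLength)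
    (hd : neighbor v d ∉ trace S.lower S.lowerLength) :
    S.relHeight x z (leftCorner v d) - S.relHeight x z (rightCorner v d)
      = (if v = S.core x 0 ∧ d = S.firstDir x then 1 else 0)
        - (if v = S.core z 0 ∧ d = S.firstDir z then 1 else 0) := by
  have hpot := S.isPotential_relHeight x z v d
  simpa only [heightFlow_lower hv hd, core_zero_and_core_one_iff] using hpot

/-- Stokes for the set of points of `lower`: only the first step of the arc `u` contributes. -/
lemma apply_startLeft_eq_apply_startRight (u : ι) {Φ : ℤ × ℤ → ℤ}
    (h : ∀ v ∈ trace S.lower S.lowerLength, ∀ d, neighbor v d ∉ trace S.lower S.lowerLength →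
      ¬ (v = S.core u 0 ∧ d = S.firstDir u) → Φ (leftCorner v d) = Φ (rightCorner v d)) :
    Φ (S.startLeft u) = Φ (S.startRight u) := by
  classical
  have hmem : ∀ v, v ∈ (Finset.range (S.lowerLength + 1)).image S.lower ↔
      v ∈ trace S.lower S.lowerLength := fun v => by
    simp [trace]
  refine apply_corners_eq_of_boundary ((hmem _).2 core_zero_mem_lower) ?_ fun v hv d hd => ?_
  · rw [hmem, ← S.core_one]
    exact S.notMem_lower u _ core_one_mem_inner
  · exact h v ((hmem v).1 hv) d (mt (hmem _).2 hd)

lemma level_add_level (h : Disjoint (S.arc x) (S.arc z)) : S.level x z + S.level z x = 1 := by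
  by_contra hne
  have hx : S.relHeight x z (S.startLeft x) = S.level x z := rfl
  have hx' := relHeight_startRight h
  have hz : S.relHeight z x (S.startLeft z) = S.level z x := rfl
  have hz' := relHeight_startRight h.symm
  rw [relHeight_swap] at hz hz'
  have hΦ := apply_startLeft_eq_apply_startRight x
    (Φ := fun P => if S.level x z ≤ S.relHeight x z P then 1 else 0) fun v hv d hd hvd => by
      by_cases hvz : v = S.core z 0 ∧ d = S.firstDir z
      · obtain ⟨rfl, rfl⟩ := hvz
        change (if _ ≤ S.relHeight x z (S.startLeft z) then (1 : ℤ) else 0)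
          = if _ ≤ S.relHeight x z (S.startRight z) then 1 else 0
        split_ifs <;> omega
      · have hsub := relHeight_sub_of_mem_lower x z hv hd
        rw [if_neg hvd, if_neg hvz, sub_zero, sub_eq_zero] at hsub
        simp only [hsub]
  simp [hx, hx'] at hΦ

lemma relHeight_startLeft_right (h : Disjoint (S.arc x) (S.arc z)) :
    S.relHeight x z (S.startLeft z) = S.level x z - 1 := by
  rw [relHeight_swap, sub_eq_neg_add, eq_sub_of_add_eq (level_add_level h)]
  change -S.level z x = _
  ring

lemma relHeight_startRight_right (h : Disjoint (S.arc x) (S.arc z)) :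
    S.relHeight x z (S.startRight z) = S.level x z := by
  rw [relHeight_swap, relHeight_startRight h.symm, eq_sub_of_add_eq (level_add_level h)]
  ring

lemma hasLevel_or_relHeight_eq (h : Disjoint (S.arc x) (S.arc z)) (hp : S.IsFree p) :
    HasLevel (S.relHeight x z) p (S.level x z) ∨
      p ∉ trace (S.core x) (S.coreLength x) ∧ p ∉ trace (S.core z) (S.coreLength z) ∧
        ∀ d e, S.relHeight x z (leftCorner p d) = S.relHeight x z (leftCorner p e) := by
  by_cases hx : p ∈ trace (S.core x) (S.coreLength x)
  · obtain ⟨k, hk, rfl⟩ := hx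
    obtain ⟨h₀, h₁⟩ := hp.lt_of_core_eq hk rfl
    exact .inl (hasLevel_core h h₀ h₁)
  by_cases hz : p ∈ trace (S.core z) (S.coreLength z)
  · obtain ⟨k, hk, rfl⟩ := hz
    obtain ⟨h₀, h₁⟩ := hp.lt_of_core_eq hk rfl
    refine .inl fun d => ?_
    rw [relHeight_swap]
    have := level_add_level h
    have := hasLevel_core h.symm h₀ h₁ d
    omega
  · exact .inr ⟨hx, hz, (S.isPotential_relHeight x z).leftCorner_eq fun b => by
      rw [hp.heightFlow_eq_zero hx, hp.heightFlow_eq_zero hz, sub_zero]⟩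

/-- If the relative height of `x` and `z` near the start of a third arc `u` had another value `W`,
then Stokes would apply to the height relative to `u`, cut off outside the set where the relative
height of `x` and `z` is `W`. -/
lemma hasLevel_core_one (h : Disjoint (S.arc x) (S.arc z)) (u : ι) :
    HasLevel (S.relHeight x z) (S.core u 1) (S.level x z) := by
  have hfree := isFree_of_mem_inner (S := S) (x := u) core_one_mem_inner
  rcases hasLevel_or_relHeight_eq h hfree with hlevel | ⟨hux, -, hconst⟩
  · exact hlevel
  intro d₀
  by_contra! hW
  set W := S.relHeight x z (leftCorner (S.core u 1) d₀)
  have hleft : S.relHeight x z (S.startLeft u) = W := by rw [startLeft_eq]; exact hconst _ _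
  have hright : S.relHeight x z (S.startRight u) = W := by rw [startRight_eq]; exact hconst _ _
  have hcut : ∀ {P Q}, S.relHeight x z P ≠ W → S.relHeight x z Q ≠ W →
      (if S.relHeight x z P = W then S.relHeight x u P else 0)
        = if S.relHeight x z Q = W then S.relHeight x u Q else 0 := fun hP hQ => by
    rw [if_neg hP, if_neg hQ]
  have hΦ := apply_startLeft_eq_apply_startRight (S := S) u
    (Φ := fun P => if S.relHeight x z P = W then S.relHeight x u P else 0) fun v hv d hd hvu => by
      by_cases hvx : v = S.core x 0 ∧ d = S.firstDir x
      · obtain ⟨rfl, rfl⟩ := hvx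
        exact hcut hW.1.symm ((relHeight_startRight h).trans_ne hW.2.symm)
      by_cases hvz : v = S.core z 0 ∧ d = S.firstDir z
      · obtain ⟨rfl, rfl⟩ := hvz
        exact hcut ((relHeight_startLeft_right h).trans_ne hW.2.symm)
          ((relHeight_startRight_right h).trans_ne hW.1.symm)
      have hz := relHeight_sub_of_mem_lower x z hv hd
      have hu := relHeight_sub_of_mem_lower x u hv hd
      rw [if_neg hvx, if_neg hvz, sub_zero, sub_eq_zero] at hz
      rw [if_neg hvx, if_neg hvu, sub_zero, sub_eq_zero] at hu
      rw [hz, hu]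
  have hne : ¬ (S.core u 0 = S.core x 0 ∧ S.firstDir u = S.firstDir x) := fun ⟨h₀, h₁⟩ => hux <| by
    rw [core_one, h₀, h₁, ← core_one]
    exact mem_trace _ coreLength_pos
  have hsub := relHeight_sub_of_mem_lower x u core_zero_mem_lower
    (S.core_one u ▸ S.notMem_lower u _ core_one_mem_inner)
  rw [if_neg hne, if_pos ⟨rfl, rfl⟩] at hsub
  simp only [hleft, hright, if_true] at hΦ
  rw [← startLeft, ← startRight] at hsub
  omega

lemma hasLevel_relHeight (h : Disjoint (S.arc x) (S.arc z)) (hp : p ∈ S.inner u) :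
    HasLevel (S.relHeight x z) p (S.level x z) := by
  induction S.joined u p hp with
  | refl => exact hasLevel_core_one h u
  | @tail a b _ hab ih =>
    rcases hasLevel_or_relHeight_eq h (isFree_of_mem_inner hab.2.2) with hlevel | ⟨-, -, hconst⟩
    · exact hlevel
    · obtain ⟨d, e, hde⟩ := hab.1.exists_common_corner
      intro c
      rw [hconst c e, ← hde]
      exact ih hab.2.1 d

lemma relHeight_leftCorner_eq_of_disjoint (hx : Disjoint (S.arc u) (S.arc x))
    (hz : Disjoint (S.arc u) (S.arc z)) (hp : p ∈ S.inner u) (d e : Fin 4) :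
    S.relHeight x z (leftCorner p d) = S.relHeight x z (leftCorner (S.core u 1) e) := by
  have hconst : ∀ q ∈ S.inner u, ∀ d e,
      S.relHeight x z (leftCorner q d) = S.relHeight x z (leftCorner q e) := fun q hq =>
    (S.isPotential_relHeight x z).leftCorner_eq fun b => by
      rw [heightFlow_eq_zero_of_disjoint hx hq, heightFlow_eq_zero_of_disjoint hz hq, sub_zero]
  induction S.joined u p hp generalizing d with
  | refl => exact hconst _ hp d e
  | @tail a b _ hab ih =>
    obtain ⟨d', e', hde⟩ := hab.1.exists_common_corner
    rw [hconst b hab.2.2 d e', ← hde]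
    exact ih hab.2.1 d'

end Strip

/-! ### The cyclic order of the arcs -/

namespace Strip

variable {ι : Type*} (S : Strip ι)

/-- The change of all heights along a step from `p` to `q` that touches no arc. -/
def stepDrift (p q : ℤ × ℤ) : ℤ :=
  if q.2 = p.2 + 1 then S.drift p else if q.2 = p.2 - 1 then -S.drift q else 0

/-- The change of all heights along the first `k` steps of a walk `y` that touches no arc. -/
def walkDrift (y : ℕ → ℤ × ℤ) (k : ℕ) : ℤ := ∑ i ∈ Finset.range k, S.stepDrift (y i) (y (i + 1))

variable {S} in
lemma height_sub_of_step {p q : ℤ × ℤ} {z : ι} (h : LatticeStep p q) (hp : S.IsFree p)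
    (hq : S.IsFree q) (hpz : p ∉ S.inner z) (hqz : q ∉ S.inner z) :
    S.height z q - S.height z p = S.stepDrift p q := by
  have hflow : ∀ {a}, S.IsFree a → a ∉ S.inner z → ∀ b, S.heightFlow z b a = 0 := by
    intro a ha haz b
    rw [heightFlow_swap, ha.heightFlow_eq_zero (mt ha.mem_inner_of_mem_trace haz), neg_zero]
  obtain ⟨i, j⟩ := p
  rcases h with rfl | rfl | rfl | rfl | rfl
  · simp [stepDrift]
    omega
  · have := S.height_sub_left z i j
    rw [hflow hp hpz] at this
    simp [stepDrift]
    omega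
  · have := S.height_sub_left z (i - 1) j
    rw [hflow hq hqz, sub_add_cancel] at this
    simp [stepDrift]
    omega
  · have := S.height_sub_below z i j
    rw [hflow hp hpz, add_zero] at this
    simpa [stepDrift] using this
  · have := S.height_sub_below z i (j - 1)
    rw [hflow hq hqz, sub_add_cancel, add_zero] at this
    simp only [stepDrift, if_neg (show j - 1 ≠ j + 1 by omega), if_true]
    omega

section Normalization

variable [Fintype ι]

/-- The dual points adjacent to an inner point of an arc. -/
noncomputable def corners : Finset (ℤ × ℤ) := by
  classical
  exact Finset.univ.biUnion fun x => (S.inner_finite x).toFinset.biUnion fun p =>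
    Finset.univ.image (leftCorner p)

/-- Position of the arc `x` in the cyclic order. It is minus the total height of `x`, modulo the
number of corners: heights of disjoint arcs differ by at most one from a constant. -/
noncomputable def rank (x : ι) : ℤ := -(∑ P ∈ S.corners, S.height x P) % (#S.corners : ℤ)

/-- Height of the arc `x`, shifted by a constant so that its average lies in `(-1, 0]`. -/
noncomputable def normHeight (x : ι) (P : ℤ × ℤ) : ℤ :=
  S.height x P + -(∑ P ∈ S.corners, S.height x P) / (#S.corners : ℤ)

/-- The `level` of `x` and `z` for normalized heights. -/
noncomputable def normLevel (x z : ι) : ℤ :=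
  S.normHeight x (S.startLeft x) - S.normHeight z (S.startLeft x)

variable {S} {x z u : ι} {P p q : ℤ × ℤ} {d : Fin 4}

lemma mem_corners : P ∈ S.corners ↔ ∃ x, ∃ p ∈ S.inner x, ∃ d, leftCorner p d = P := by
  simp [corners]

lemma leftCorner_mem_corners (hp : p ∈ S.inner x) (d : Fin 4) : leftCorner p d ∈ S.corners :=
  mem_corners.2 ⟨x, p, hp, d, rfl⟩

lemma startLeft_mem_corners (x : ι) : S.startLeft x ∈ S.corners :=
  S.startLeft_eq x ▸ leftCorner_mem_corners core_one_mem_inner _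

lemma startRight_mem_corners (x : ι) : S.startRight x ∈ S.corners :=
  S.startRight_eq x ▸ leftCorner_mem_corners core_one_mem_inner _

lemma sum_normHeight (x : ι) : ∑ P ∈ S.corners, S.normHeight x P = -S.rank x := by
  have := Int.emod_add_mul_ediv (-∑ P ∈ S.corners, S.height x P) #S.corners
  simp only [normHeight, rank, Finset.sum_add_distrib, Finset.sum_const, nsmul_eq_mul]
  linarith

lemma normHeight_sub (x z : ι) (P : ℤ × ℤ) :
    S.normHeight x P - S.normHeight z P = S.relHeight x z P + (S.normLevel x z - S.level x z) := by
  simp only [normHeight, relHeight, normLevel, level]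
  ring

lemma normHeight_sub_eq_or (h : Disjoint (S.arc x) (S.arc z)) (hP : P ∈ S.corners) :
    S.normHeight x P - S.normHeight z P = S.normLevel x z ∨
      S.normHeight x P - S.normHeight z P = S.normLevel x z - 1 := by
  obtain ⟨u, p, hp, d, rfl⟩ := mem_corners.1 hP
  rw [normHeight_sub]
  exact (hasLevel_relHeight h hp d).imp (fun h => by omega) fun h => by omega

/-- The difference of the normalized heights takes both of its two values, and its average lies
strictly between `-1` and `1`. -/
lemma rank_lt_and_normLevel_eq (h : Disjoint (S.arc x) (S.arc z)) :
    S.rank x < S.rank z ∧ S.normLevel x z = 1 ∨ S.rank z < S.rank x ∧ S.normLevel x z = 0 := by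
  set c := S.normLevel x z
  set N : ℤ := (#S.corners : ℤ)
  have hN : 0 < N :=
    Int.natCast_pos.2 (Finset.card_pos.2 ⟨_, startLeft_mem_corners x⟩)
  have hsum : ∑ P ∈ S.corners, (S.normHeight x P - S.normHeight z P) = S.rank z - S.rank x := by
    rw [Finset.sum_sub_distrib, sum_normHeight, sum_normHeight]
    ring
  have hlt : ∑ P ∈ S.corners, (S.normHeight x P - S.normHeight z P) < ∑ _P ∈ S.corners, c := by
    refine Finset.sum_lt_sum (fun P hP => ?_) ⟨_, startRight_mem_corners x, ?_⟩
    · have := normHeight_sub_eq_or h hP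
      omega
    · rw [normHeight_sub, relHeight_startRight h]
      omega
  have hgt : ∑ _P ∈ S.corners, (c - 1)
      < ∑ P ∈ S.corners, (S.normHeight x P - S.normHeight z P) := by
    refine Finset.sum_lt_sum (fun P hP => ?_) ⟨_, startLeft_mem_corners x, sub_one_lt c⟩
    have := normHeight_sub_eq_or h hP
    omega
  rw [hsum, Finset.sum_const, nsmul_eq_mul] at hlt hgt
  have hx : 0 ≤ S.rank x ∧ S.rank x < N := ⟨Int.emod_nonneg _ hN.ne', Int.emod_lt_of_pos _ hN⟩
  have hz : 0 ≤ S.rank z ∧ S.rank z < N := ⟨Int.emod_nonneg _ hN.ne', Int.emod_lt_of_pos _ hN⟩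
  have hc₀ : -1 < c := (mul_lt_mul_iff_right₀ hN).1 (by linarith : N * -1 < N * c)
  have hc₁ : c - 1 < 1 := (mul_lt_mul_iff_right₀ hN).1 (by linarith : N * (c - 1) < N * 1)
  obtain hc | hc : c = 1 ∨ c = 0 := by omega
  · rw [hc, sub_self, mul_zero, sub_pos] at hgt
    exact .inl ⟨hgt, hc⟩
  · rw [hc, mul_zero, sub_neg] at hlt
    exact .inr ⟨hlt, hc⟩

lemma normHeight_add_normLevel (hx : Disjoint (S.arc u) (S.arc x))
    (hz : Disjoint (S.arc u) (S.arc z)) (hp : p ∈ S.inner u) :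
    S.normHeight x p + S.normLevel u x = S.normHeight z p + S.normLevel u z := by
  have h := relHeight_leftCorner_eq_of_disjoint hx hz hp 2 (S.firstDir u + 1)
  rw [← startLeft_eq] at h
  change S.height x p - S.height z p = S.height x _ - S.height z _ at h
  simp only [normLevel, normHeight]
  linarith

lemma normHeight_sub_walkDrift {y : ℕ → ℤ × ℤ} {L k : ℕ} (hy : IsLatticeWalk y)
    (hfree : ∀ i ≤ L, S.IsFree (y i)) (hz : ∀ i ≤ L, y i ∉ S.inner z) (hk : k ≤ L) :
    S.normHeight z (y k) - S.walkDrift y k = S.normHeight z (y 0) := by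
  induction k with
  | zero => simp [walkDrift]
  | succ k ih =>
    have hk' := Nat.le_of_succ_le hk
    have hstep := height_sub_of_step (hy k) (hfree _ hk') (hfree _ hk) (hz _ hk') (hz _ hk)
    have := ih hk'
    simp only [walkDrift, normHeight, Finset.sum_range_succ] at this ⊢
    linarith

end Normalization

end Strip

/-- Heights of the arcs of a strip, cyclically ordered by `e`, as seen by a walk: `hit` says which
arcs the walk hits, `D` which arcs are disjoint, and `height z p` is the height of `z` seen from a
point of the walk on the arc `p`. Of two disjoint arcs the later one is at the same height or one
full turn lower; the arcs disjoint from `p` are at height `base p` if they come after `p`, and at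
height `base p + 1` if they come before. An arc that is not hit is equally high from everywhere. -/
structure HeightTable {ι : Type*} {m : ℕ} (e : ι ≃ Fin m) (D : ι → ι → Prop)
    (hit : ι → Prop) where
  height : ι → ι → ℤ
  base : ι → ℤ
  height_eq_or : ∀ {p x z}, hit p → D x z → e x < e z →
    height x p = height z p ∨ height x p = height z p + 1
  height_of_lt : ∀ {p x}, hit p → D p x → e p < e x → height x p = base p
  height_of_gt : ∀ {p x}, hit p → D p x → e x < e p → height x p = base p + 1
  height_congr : ∀ {z p q}, ¬ hit z → hit p → hit q → height z p = height z q

lemma exists_equiv_fin_le_of_lt {ι α : Type*} [Fintype ι] [LinearOrder α] (f : ι → α) :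
    ∃ e : ι ≃ Fin (Fintype.card ι), ∀ x z, e x < e z → f x ≤ f z := by
  let e := Fintype.equivFin ι
  refine ⟨e.trans (Tuple.sort (f ∘ e.symm)).symm, fun x z h => ?_⟩
  simpa [e] using Tuple.monotone_sort (f ∘ e.symm) h.le

namespace Strip

variable {ι : Type*} [Fintype ι] (S : Strip ι)

lemma exists_equiv_fin_normLevel_eq : ∃ e : ι ≃ Fin (Fintype.card ι), ∀ x z,
    Disjoint (S.arc x) (S.arc z) →
      (e x < e z → S.normLevel x z = 1) ∧ (e z < e x → S.normLevel x z = 0) := by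
  obtain ⟨e, he⟩ := exists_equiv_fin_le_of_lt S.rank
  refine ⟨e, fun x z h => ⟨fun hxz => ?_, fun hxz => ?_⟩⟩
  · exact ((rank_lt_and_normLevel_eq h).resolve_right fun h => (he x z hxz).not_gt h.1).2
  · exact ((rank_lt_and_normLevel_eq h).resolve_left fun h => (he z x hxz).not_gt h.1).2

theorem exists_equiv_fin_heightTable :
    ∃ e : ι ≃ Fin (Fintype.card ι), ∀ (y : ℕ → ℤ × ℤ) (L : ℕ), IsLatticeWalk y →
      (∀ k ≤ L, S.IsFree (y k)) →
      Nonempty (HeightTable e (fun x z => Disjoint (S.arc x) (S.arc z))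
        fun p => ∃ k ≤ L, y k ∈ S.inner p) := by
  classical
  obtain ⟨e, he⟩ := S.exists_equiv_fin_normLevel_eq
  refine ⟨e, fun y L hy hfree => ?_⟩
  choose! time htime hmem using fun (p : ι) (hp : ∃ k ≤ L, y k ∈ S.inner p) => hp
  let height : ι → ι → ℤ := fun z p => S.normHeight z (y (time p)) - S.walkDrift y (time p)
  let base : ι → ℤ := fun p => if h : ∃ x, Disjoint (S.arc p) (S.arc x)
    then height h.choose p + S.normLevel p h.choose - 1 else 0
  have hbase : ∀ {p x}, (∃ k ≤ L, y k ∈ S.inner p) → Disjoint (S.arc p) (S.arc x) →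
      height x p = base p + 1 - S.normLevel p x := fun {p x} hp hpx => by
    have h : ∃ x, Disjoint (S.arc p) (S.arc x) := ⟨x, hpx⟩
    have := normHeight_add_normLevel hpx h.choose_spec (hmem p hp)
    simp only [base, height, dif_pos h]
    linarith
  refine ⟨⟨height, base, fun {p x z} hp hxz hlt => ?_, fun {p x} hp hpx h => ?_,
    fun {p x} hp hpx h => ?_, fun {z p q} hz hp hq => ?_⟩⟩
  · have := normHeight_sub_eq_or hxz (leftCorner_mem_corners (hmem p hp) 2)
    rw [(he x z hxz).1 hlt, show leftCorner _ 2 = y (time p) from rfl] at this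
    simp only [height]
    omega
  · rw [hbase hp hpx, (he p x hpx).1 h, add_sub_cancel_right]
  · rw [hbase hp hpx, (he p x hpx).2 h, sub_zero]
  · push Not at hz
    simp only [height]
    rw [normHeight_sub_walkDrift hy hfree hz (htime p hp),
      normHeight_sub_walkDrift hy hfree hz (htime q hq)]

end Strip

/-- The points visited by `f` strictly between the times `0` and `n`. -/
def innerTrace (f : ℕ → ℤ × ℤ) (n : ℕ) : Set (ℤ × ℤ) := f '' Set.Ioo 0 n

lemma mem_innerTrace (f : ℕ → ℤ × ℤ) {n k : ℕ} (h₀ : 0 < k) (hk : k < n) : f k ∈ innerTrace f n :=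
  Set.mem_image_of_mem f ⟨h₀, hk⟩

lemma innerTrace_subset_trace (f : ℕ → ℤ × ℤ) (n : ℕ) : innerTrace f n ⊆ trace f n :=
  Set.image_subset_iff.2 fun _ hk => mem_trace f hk.2.le

lemma IsLatticeWalk.shortcut {f : ℕ → ℤ × ℤ} (hf : IsLatticeWalk f) {i j : ℕ} (hij : i < j)
    (h : f i = f j) : IsLatticeWalk fun k => if k ≤ i then f k else f (k + (j - i)) := fun k => by
  rcases lt_trichotomy k i with hk | rfl | hk
  · simpa [hk.le, Nat.succ_le_of_lt hk] using hf k
  · simpa [h, show k + 1 + (j - k) = j + 1 by omega] using hf j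
  · simpa [hk.not_ge, (hk.trans k.lt_succ_self).not_ge, Nat.add_right_comm k 1] using
      hf (k + (j - i))

/-- The walk `s` of length `n` has the same ends and the same first step as the walk `f` of length
`m`, and is otherwise contained in the inner part of `f`. -/
structure IsReroute (f : ℕ → ℤ × ℤ) (m : ℕ) (s : ℕ → ℤ × ℤ) (n : ℕ) : Prop where
  isWalk : IsLatticeWalk s
  two_le : 2 ≤ n
  zero_eq : s 0 = f 0
  one_eq : s 1 = f 1
  last_eq : s n = f m
  mem_inner : ∀ k, 0 < k → k < n → s k ∈ innerTrace f m

lemma IsReroute.shortcut {f s : ℕ → ℤ × ℤ} {m n i j : ℕ} (h : IsReroute f m s n) (hi : 0 < i)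
    (hij : i < j) (hj : j < n) (hs : s i = s j) :
    IsReroute f m (fun k => if k ≤ i then s k else s (k + (j - i))) (n - (j - i)) where
  isWalk := h.isWalk.shortcut hij hs
  two_le := by omega
  zero_eq := by simpa using h.zero_eq
  one_eq := by rw [if_pos (Nat.succ_le_of_lt hi), h.one_eq]
  last_eq := by rw [if_neg (by omega), Nat.sub_add_cancel (by omega), h.last_eq]
  mem_inner k h₀ hk := by
    split_ifs
    · exact h.mem_inner k h₀ (by omega)
    · exact h.mem_inner _ (by omega) (by omega)

lemma IsReroute.trace_subset {f s : ℕ → ℤ × ℤ} {m n : ℕ} (h : IsReroute f m s n) :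
    trace s n ⊆ trace f m := by
  rintro _ ⟨k, hk, rfl⟩
  rcases k.eq_zero_or_pos with rfl | h₀
  · exact h.zero_eq ▸ mem_trace f m.zero_le
  rcases hk.lt_or_eq with hk | rfl
  · exact innerTrace_subset_trace f m (h.mem_inner k h₀ hk)
  · exact h.last_eq ▸ mem_trace f le_rfl

lemma IsLatticeWalk.exists_isReroute_injOn {f : ℕ → ℤ × ℤ} {m : ℕ} (hf : IsLatticeWalk f)
    (hm : 2 ≤ m) (hfirst : f 0 ∉ innerTrace f m) (hlast : f m ∉ innerTrace f m)
    (hne : f 0 ≠ f m) : ∃ s n, IsReroute f m s n ∧ Set.InjOn s (Set.Iic n) := by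
  classical
  have hex : ∃ n s, IsReroute f m s n :=
    ⟨m, f, hf, hm, rfl, rfl, rfl, fun k h₀ hk => mem_innerTrace f h₀ hk⟩
  obtain ⟨s, hs⟩ := Nat.find_spec hex
  set n := Nat.find hex
  have hinj : ∀ {i j}, i < j → j ≤ n → s i ≠ s j := by
    intro i j hij hj h
    rcases i.eq_zero_or_pos with rfl | hi <;> rcases hj.lt_or_eq with hj | rfl
    · exact hfirst (hs.zero_eq ▸ h ▸ hs.mem_inner j hij hj)
    · exact hne (hs.zero_eq ▸ hs.last_eq ▸ h)
    · have := Nat.find_min' hex ⟨_, hs.shortcut hi hij hj h⟩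
      omega
    · exact hlast (hs.last_eq ▸ h ▸ hs.mem_inner i hi hij)
  refine ⟨s, n, hs, fun i hi j hj h => ?_⟩
  by_contra hij
  rcases lt_or_gt_of_ne hij with hij | hij
  exacts [hinj hij hj h, hinj hij hi h.symm]

theorem exists_equiv_fin_heightTable {ι : Type*} [Fintype ι] {lower upper : ℕ → ℤ × ℤ}
    {lowerLength upperLength : ℕ} (hlower : IsLatticeWalk lower) (hupper : IsLatticeWalk upper)
    (hdisj : Disjoint (trace lower lowerLength) (trace upper upperLength)) {u : ι → ℕ → ℤ × ℤ}
    {len : ι → ℕ} (hu : ∀ x, IsLatticeWalk (u x)) (hlen : ∀ x, 2 ≤ len x)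
    (hstart : ∀ x, u x 0 ∈ trace lower lowerLength)
    (hfinish : ∀ x, u x (len x) ∈ trace upper upperLength)
    (hinner : ∀ x, ∀ p ∈ innerTrace (u x) (len x),
      p ∉ trace lower lowerLength ∧ p ∉ trace upper upperLength) :
    ∃ e : ι ≃ Fin (Fintype.card ι), ∀ (y : ℕ → ℤ × ℤ) (L : ℕ), IsLatticeWalk y →
      Disjoint (trace y L) (trace lower lowerLength) →
      Disjoint (trace y L) (trace upper upperLength) →
      Nonempty (HeightTable e (fun x z => Disjoint (trace (u x) (len x)) (trace (u z) (len z)))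
        fun p => ∃ k ≤ L, y k ∈ innerTrace (u p) (len p)) := by
  choose core coreLength hcore hinj using fun x => (hu x).exists_isReroute_injOn (hlen x)
    (fun h => (hinner x _ h).1 (hstart x)) (fun h => (hinner x _ h).2 (hfinish x))
    (fun h => Set.disjoint_left.1 hdisj (hstart x) (h ▸ hfinish x))
  choose start hstart_le hstart_eq using hstart
  choose finish hfinish_le hfinish_eq using hfinish
  let S : Strip ι :=
    { lower, upper, lowerLength, upperLength, core, coreLength, start, finish
      inner := fun x => innerTrace (u x) (len x)
      arc := fun x => trace (u x) (len x)
      isWalk_lower := hlower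
      isWalk_upper := hupper
      isWalk_core := fun x => (hcore x).isWalk
      start_le := hstart_le
      finish_le := hfinish_le
      core_zero := fun x => (hcore x).zero_eq.trans (hstart_eq x).symm
      core_last := fun x => (hcore x).last_eq.trans (hfinish_eq x).symm
      two_le_coreLength := fun x => (hcore x).two_le
      core_injOn := hinj
      core_mem_inner := fun x => (hcore x).mem_inner
      trace_core_subset := fun x => (hcore x).trace_subset
      inner_subset_arc := fun x => innerTrace_subset_trace _ _
      inner_finite := fun x => (Set.finite_Ioo 0 (len x)).image _
      notMem_lower := fun x p hp => (hinner x p hp).1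
      notMem_upper := fun x p hp => (hinner x p hp).2
      disjoint_lower_upper := hdisj
      joined := by
        rintro x _ ⟨k, hk, rfl⟩
        rw [(hcore x).one_eq]
        exact (hu x).joined hk.1 fun i hi hik => mem_innerTrace _ hi (hik.trans_lt hk.2) }
  obtain ⟨e, he⟩ := S.exists_equiv_fin_heightTable
  exact ⟨e, fun y L hy hl hr => he y L hy fun k hk =>
    ⟨Set.disjoint_left.1 hl (mem_trace y hk), Set.disjoint_left.1 hr (mem_trace y hk)⟩⟩

/-! ### Blocks of consecutive arcs -/

section Reach

open Classical in
/-- The elements of `Bl k` at the end of a chain `z, a₁ ∈ Bl 1, …, a_k ∈ Bl k` of `R`-related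
elements. -/
noncomputable def reach {X : Type*} (Bl : ℕ → Finset X) (R : X → X → Prop) : ℕ → X → Finset X
  | 0, z => {z}
  | k + 1, z => (Bl (k + 1)).filter fun c => ∃ a ∈ reach Bl R k z, R a c

variable {X : Type*} {Bl : ℕ → Finset X} {R : X → X → Prop} {z : X}

lemma mem_reach_succ {k : ℕ} {c : X} :
    c ∈ reach Bl R (k + 1) z ↔ c ∈ Bl (k + 1) ∧ ∃ a ∈ reach Bl R k z, R a c := by
  simp only [reach, Finset.mem_filter]

lemma reach_subset (hz : z ∈ Bl 0) (k : ℕ) : reach Bl R k z ⊆ Bl k := by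
  cases k with
  | zero => simpa only [reach, Finset.singleton_subset_iff] using hz
  | succ k => exact fun c hc => (mem_reach_succ.1 hc).1

lemma le_of_mem_reach {α : Type*} [Preorder α] {f : X → α} (hz : z ∈ Bl 0)
    (hf : ∀ k, ∀ a ∈ Bl k, ∀ c ∈ Bl (k + 1), R a c → f a ≤ f c) {k : ℕ} {c : X}
    (hc : c ∈ reach Bl R k z) : f z ≤ f c := by
  induction k generalizing c with
  | zero => rw [Finset.mem_singleton.1 hc]
  | succ k ih =>
    obtain ⟨hcBl, a, ha, hac⟩ := mem_reach_succ.1 hc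
    exact (ih ha).trans (hf k a (reach_subset hz k ha) c hcBl hac)

/-- Any two sets of at least `N` elements contain an `R`-related pair. -/
def RelatesLargeSets (R : X → X → Prop) (N : ℕ) : Prop :=
  ∀ A C : Finset X, N ≤ #A → N ≤ #C → ∃ a ∈ A, ∃ c ∈ C, R a c

lemma exists_half_subset_le_card_biUnion {Y : Type*} [DecidableEq Y] (Z : Finset X)
    (f : X → Finset Y) {N s : ℕ} (hZ : #Z ≤ 2 * s) (hN : 2 * N ≤ #(Z.biUnion f)) :
    ∃ W ⊆ Z, #W ≤ s ∧ N ≤ #(W.biUnion f) := by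
  classical
  obtain ⟨W, hWZ, hW⟩ := Finset.exists_subset_card_eq (Nat.div_le_self #Z 2)
  have hunion : Z.biUnion f = W.biUnion f ∪ (Z \ W).biUnion f := by
    rw [← Finset.union_biUnion, Finset.union_sdiff_of_subset hWZ]
  have hcard := Finset.card_union_le (W.biUnion f) ((Z \ W).biUnion f)
  rw [← hunion] at hcard
  by_cases hWN : N ≤ #(W.biUnion f)
  · exact ⟨W, hWZ, by omega, hWN⟩
  · refine ⟨Z \ W, Finset.sdiff_subset, ?_, by omega⟩
    rw [Finset.card_sdiff_of_subset hWZ]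
    omega

lemma two_mul_le_card_biUnion_reach_succ [DecidableEq X] {N k : ℕ} {Z : Finset X}
    (hZ : ↑Z ⊆ (Bl 0 : Set X)) (hBl : 3 * N ≤ #(Bl (k + 1)))
    (hR : ∀ A ⊆ Bl k, ∀ C ⊆ Bl (k + 1), N ≤ #A → N ≤ #C → ∃ a ∈ A, ∃ c ∈ C, R a c)
    (hN : N ≤ #(Z.biUnion (reach Bl R k))) :
    2 * N ≤ #(Z.biUnion (reach Bl R (k + 1))) := by
  set reached := Z.biUnion (reach Bl R (k + 1))
  by_contra! hlt
  have hrest := Finset.le_card_sdiff reached (Bl (k + 1))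
  obtain ⟨a, ha, c, hc, hac⟩ := hR (Z.biUnion (reach Bl R k))
    (Finset.biUnion_subset.2 fun z hz => reach_subset (hZ hz) k)
    (Bl (k + 1) \ reached) Finset.sdiff_subset hN (by omega)
  obtain ⟨hcBl, hcr⟩ := Finset.mem_sdiff.1 hc
  obtain ⟨z, hz, haz⟩ := Finset.mem_biUnion.1 ha
  exact hcr (Finset.mem_biUnion.2 ⟨z, hz, mem_reach_succ.2 ⟨hcBl, a, haz, hac⟩⟩)

/-- Halving: a set of `2 ^ L` starting points always reaches at least `2 ^ L` elements, and at every
step one of its halves keeps doing so; after `L` steps a single point is left. -/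
lemma card_filter_reach_lt {L : ℕ} (hBl : ∀ k, 3 * 2 ^ L ≤ #(Bl k))
    (hR : ∀ k, ∀ A ⊆ Bl k, ∀ C ⊆ Bl (k + 1), 2 ^ L ≤ #A → 2 ^ L ≤ #C → ∃ a ∈ A, ∃ c ∈ C, R a c) :
    #{z ∈ Bl 0 | #(reach Bl R L z) < 2 ^ L} < 2 ^ L := by
  classical
  by_contra! hcard
  obtain ⟨Z, hZ, hZcard⟩ := Finset.exists_subset_card_eq hcard
  have hZBl : Z ⊆ Bl 0 := hZ.trans (Finset.filter_subset _ _)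
  have halve : ∀ k ≤ L, ∃ W ⊆ Z, #W ≤ 2 ^ (L - k) ∧ 2 ^ L ≤ #(W.biUnion (reach Bl R k)) := by
    intro k hk
    induction k with
    | zero =>
      have hreach : Z.biUnion (reach Bl R 0) = Z := Finset.biUnion_singleton_eq_self
      exact ⟨Z, subset_rfl, hZcard.le, by rw [hreach, hZcard]⟩
    | succ k ih =>
      obtain ⟨W, hWZ, hW, hWreach⟩ := ih (by omega)
      obtain ⟨W', hW'W, hW', hW'reach⟩ := exists_half_subset_le_card_biUnion W _
        (s := 2 ^ (L - (k + 1))) (by rwa [← pow_succ', show L - (k + 1) + 1 = L - k by omega])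
        (two_mul_le_card_biUnion_reach_succ (hWZ.trans hZBl) (hBl (k + 1)) (hR k) hWreach)
      exact ⟨W', hW'W.trans hWZ, hW', hW'reach⟩
  obtain ⟨W, hWZ, hW, hWreach⟩ := halve L le_rfl
  rw [Nat.sub_self, pow_zero] at hW
  obtain rfl | ⟨z, rfl⟩ : W = ∅ ∨ ∃ z, W = {z} := by
    rw [← Finset.card_eq_zero, ← Finset.card_eq_one]
    omega
  · exact absurd hWreach (by simp)
  · rw [Finset.singleton_biUnion] at hWreach
    exact absurd (Finset.mem_filter.1 (hZ (hWZ (Finset.mem_singleton_self z)))).2 hWreach.not_gt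

end Reach

section CyclicBlocks

variable {ι : Type*} {m : ℕ}

/-- The cyclic sequence of the arcs, unrolled to a sequence indexed by `ℤ`. -/
noncomputable def arcAt [NeZero m] (e : ι ≃ Fin m) (i : ℤ) : ι := e.symm (Int.divModEquiv m i).2

lemma coe_apply_arcAt [NeZero m] (e : ι ≃ Fin m) (i : ℤ) : ((e (arcAt e i) : ℕ) : ℤ) = i % m := by
  have hm : (m : ℤ) ≠ 0 := mod_cast NeZero.ne m
  rw [arcAt, Equiv.apply_symm_apply]
  simp [Int.divModEquiv, Int.natMod, Int.emod_nonneg i hm]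

/-- The `q`-th of the consecutive intervals of length `B` partitioning `ℤ`. -/
noncomputable def block (B : ℕ) (q : ℤ) : Finset ℤ := Finset.Ico (q * B) (q * B + B)

lemma mem_block {B : ℕ} {q i : ℤ} : i ∈ block B q ↔ q * B ≤ i ∧ i < q * B + B := Finset.mem_Ico

lemma card_block (B : ℕ) (q : ℤ) : #(block B q) = B := by simp [block]

lemma lt_of_mem_block {B : ℕ} {q q' i j : ℤ} (hq : q < q') (hi : i ∈ block B q)
    (hj : j ∈ block B q') : i < j := by
  rw [mem_block] at hi hj
  nlinarith

lemma arcAt_injOn_block [NeZero m] (e : ι ≃ Fin m) {B : ℕ} (hB : B ≤ m) (q : ℤ) :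
    Set.InjOn (arcAt e) (block B q) := by
  intro i hi j hj hij
  rw [Finset.mem_coe, mem_block] at hi hj
  have hmod : i % m = j % m := by rw [← coe_apply_arcAt e, ← coe_apply_arcAt e, hij]
  have hdvd : (m : ℤ) ∣ i - j := (Int.ModEq.symm hmod).dvd
  have := Int.eq_zero_of_abs_lt_dvd hdvd (by rw [abs_lt]; constructor <;> omega)
  omega

open Classical in
/-- The indices in the `q`-th block from which chains of `D`-related arcs, one in each block, lead
to at least `2 ^ L` arcs both `L` blocks above and `L` blocks below. -/
noncomputable def goodIndices [NeZero m] (e : ι ≃ Fin m) (D : ι → ι → Prop) (B L : ℕ) (q : ℤ) :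
    Finset ℤ :=
  {z ∈ block B q |
    2 ^ L ≤ #(reach (fun k : ℕ => block B (q + k)) (fun i j => D (arcAt e i) (arcAt e j)) L z) ∧
    2 ^ L ≤ #(reach (fun k : ℕ => block B (q - k)) (fun i j => D (arcAt e i) (arcAt e j)) L z)}

variable [NeZero m] {e : ι ≃ Fin m} {D : ι → ι → Prop} {B L : ℕ}

lemma RelatesLargeSets.exists_mem_block {N : ℕ} (hD : RelatesLargeSets D N) (hB : B ≤ m)
    {q : ℤ} {A : Finset ι} {C : Finset ℤ} (hC : C ⊆ block B q) (hAN : N ≤ #A) (hCN : N ≤ #C) :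
    ∃ a ∈ A, ∃ c ∈ C, D a (arcAt e c) := by
  classical
  have hcard : #(C.image (arcAt e)) = #C :=
    Finset.card_image_of_injOn ((arcAt_injOn_block e hB q).mono (Finset.coe_subset.2 hC))
  simpa using hD A (C.image (arcAt e)) hAN (hcard ▸ hCN)

lemma RelatesLargeSets.card_filter_reach_block_lt (hD : RelatesLargeSets D (2 ^ L)) (hB : B ≤ m)
    (hBL : 3 * 2 ^ L ≤ B) (c : ℕ → ℤ) :
    #{z ∈ block B (c 0) | #(reach (fun k => block B (c k))
      (fun i j => D (arcAt e i) (arcAt e j)) L z) < 2 ^ L} < 2 ^ L := by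
  classical
  refine card_filter_reach_lt (Bl := fun k => block B (c k))
    (fun k => by rwa [card_block]) fun k A hA C hC hAL hCL => ?_
  have hcard : #(A.image (arcAt e)) = #A :=
    Finset.card_image_of_injOn ((arcAt_injOn_block e hB _).mono (Finset.coe_subset.2 hA))
  simpa using hD.exists_mem_block (A := A.image (arcAt e)) hB hC (hcard ▸ hAL) hCL

lemma RelatesLargeSets.le_card_goodIndices (hD : RelatesLargeSets D (2 ^ L)) (hB : B ≤ m)
    (hBL : 3 * 2 ^ L ≤ B) (q : ℤ) : B - 2 * 2 ^ L ≤ #(goodIndices e D B L q) := by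
  classical
  have hup := hD.card_filter_reach_block_lt (e := e) hB hBL fun k => q + k
  have hdown := hD.card_filter_reach_block_lt (e := e) hB hBL fun k => q - k
  simp only [Nat.cast_zero, add_zero, sub_zero] at hup hdown
  set up := {z ∈ block B q | #(reach (fun k : ℕ => block B (q + k))
    (fun i j => D (arcAt e i) (arcAt e j)) L z) < 2 ^ L}
  set down := {z ∈ block B q | #(reach (fun k : ℕ => block B (q - k))
    (fun i j => D (arcAt e i) (arcAt e j)) L z) < 2 ^ L}
  have hcover : block B q ⊆ goodIndices e D B L q ∪ (up ∪ down) := by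
    intro z hz
    simp only [goodIndices, up, down, Finset.mem_union, Finset.mem_filter, hz, true_and]
    omega
  have hcard := (Finset.card_le_card hcover).trans (Finset.card_union_le _ _)
  have hupdown := Finset.card_union_le up down
  rw [card_block] at hcard
  omega

end CyclicBlocks

lemma ediv_lt_or_emod_lt_of_lt {m i j : ℤ} (hm : 0 < m) (h : i < j) :
    i / m < j / m ∨ i / m = j / m ∧ i % m < j % m := by
  rcases (Int.ediv_le_ediv hm h.le).lt_or_eq with hdiv | hdiv
  · exact Or.inl hdiv
  · refine Or.inr ⟨hdiv, ?_⟩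
    have hi := Int.emod_add_mul_ediv i m
    have hj := Int.emod_add_mul_ediv j m
    rw [hdiv] at hi
    linarith

lemma exists_card_filter_lt_and_card_filter_le {X : Type*} {f : X → ℤ} (hf : Function.Injective f)
    {U : Finset X} {N w : ℕ} (hN : 0 < N) (hU : 2 * N + w ≤ #U) :
    ∃ j : ℤ, N ≤ #{u ∈ U | f u < j} ∧ N ≤ #{u ∈ U | j + w ≤ f u} := by
  classical
  have hbdd : ∀ u ∈ U, |f u| ≤ ∑ u ∈ U, |f u| := fun u hu =>
    Finset.single_le_sum (f := fun u => |f u|) (fun _ _ => abs_nonneg _) hu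
  obtain ⟨j, hj, hjmin⟩ := Int.exists_least_of_bdd (P := fun j => N ≤ #{u ∈ U | f u < j})
    ⟨-∑ u ∈ U, |f u|, fun z hz => by
      obtain ⟨u, hu⟩ := Finset.card_pos.1 (hN.trans_le hz)
      rw [Finset.mem_filter] at hu
      linarith [(abs_le.1 (hbdd u hu.1)).1]⟩
    ⟨∑ u ∈ U, |f u| + 1, by
      rw [Finset.filter_true_of_mem fun u hu => by linarith [(abs_le.1 (hbdd u hu)).2]]
      omega⟩
  refine ⟨j, hj, ?_⟩
  have hlow : #{u ∈ U | f u < j - 1} < N := by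
    by_contra! h
    linarith [hjmin _ h]
  have hmid : #{u ∈ U | j - 1 ≤ f u ∧ f u < j + w} ≤ w + 1 :=
    (Finset.card_le_card_of_injOn (t := Finset.Ico (j - 1) (j + w)) f
      (fun u hu => by simpa using (Finset.mem_filter.1 hu).2) hf.injOn).trans
      (by rw [Int.card_Ico]; omega)
  have hcover : U ⊆ {u ∈ U | f u < j - 1} ∪
      ({u ∈ U | j - 1 ≤ f u ∧ f u < j + w} ∪ {u ∈ U | j + w ≤ f u}) := by
    intro u hu
    simp only [Finset.mem_union, Finset.mem_filter, hu, true_and]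
    omega
  have hcard := (Finset.card_le_card hcover).trans (Finset.card_union_le _ _)
  have hunion := Finset.card_union_le {u ∈ U | j - 1 ≤ f u ∧ f u < j + w} {u ∈ U | j + w ≤ f u}
  omega

namespace HeightTable

variable {ι : Type*} {m : ℕ} {e : ι ≃ Fin m} {D : ι → ι → Prop} {hit : ι → Prop}

/-- The table obtained by subtracting the constant `s` from all heights. -/
def shift (T : HeightTable e D hit) (s : ℤ) : HeightTable e D hit where
  height x p := T.height x p - s
  base p := T.base p - s
  height_eq_or hp hD he := by have := T.height_eq_or hp hD he; omega
  height_of_lt hp hD he := by rw [T.height_of_lt hp hD he]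
  height_of_gt hp hD he := by rw [T.height_of_gt hp hD he]; ring
  height_congr hz hp hq := by rw [T.height_congr hz hp hq]

/-- The place of the arc `p` among the indices of `arcAt`, on the sheet selected by the height
`base p`: the arcs disjoint from `p` lie above or below according to their place. -/
def position (T : HeightTable e D hit) (p : ι) : ℤ := T.base p * m + e p

/-- Height over a point of `p` of the lift with index `i` of the arc `arcAt e i`, each sheet being
one unit higher than the previous one. -/
noncomputable def sheetHeight [NeZero m] (T : HeightTable e D hit) (p : ι) (i : ℤ) : ℤ :=
  T.height (arcAt e i) p - i / m

lemma position_shift (T : HeightTable e D hit) (s : ℤ) (p : ι) :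
    (T.shift s).position p = T.position p - s * m := by
  simp only [position, shift]
  ring

lemma base_le_height (T : HeightTable e D hit) (hDi : ∀ x, ¬ D x x) {p x : ι} (hp : hit p)
    (hD : D p x) :
    T.base p ≤ T.height x p ∧ T.height x p ≤ T.base p + 1 := by
  rcases lt_trichotomy (e p) (e x) with h | h | h
  · rw [T.height_of_lt hp hD h]
    omega
  · exact absurd (e.injective h ▸ hD) (hDi p)
  · rw [T.height_of_gt hp hD h]
    omega

section Sheets

variable [NeZero m] (T : HeightTable e D hit)

lemma position_ediv_emod (p : ι) : T.position p / m = T.base p ∧ T.position p % m = (e p : ℕ) := by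
  rw [Int.ediv_emod_unique (by exact_mod_cast NeZero.pos m), position]
  exact ⟨by ring, by positivity, by exact_mod_cast (e p).2⟩

lemma position_injective : Function.Injective T.position := by
  intro p q h
  have hmod := (T.position_ediv_emod q).2
  rw [← h, (T.position_ediv_emod p).2] at hmod
  exact e.injective (Fin.ext (by exact_mod_cast hmod))

lemma apply_arcAt_lt_iff {i : ℤ} {p : ι} :
    (e p < e (arcAt e i) ↔ ((e p : ℕ) : ℤ) < i % m) ∧
    (e (arcAt e i) < e p ↔ i % m < ((e p : ℕ) : ℤ)) := by
  simp only [← coe_apply_arcAt e i, Nat.cast_lt, Fin.lt_def, and_self]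

lemma sheetHeight_nonpos (hDi : ∀ x, ¬ D x x) {p : ι} {j : ℤ} (hp : hit p) (hD : D p (arcAt e j))
    (hj : T.position p < j) : T.sheetHeight p j ≤ 0 := by
  have hle := (T.base_le_height hDi hp hD).2
  have hpos := T.position_ediv_emod p
  rw [sheetHeight]
  rcases ediv_lt_or_emod_lt_of_lt (by exact_mod_cast NeZero.pos m : (0 : ℤ) < m) hj with h | ⟨h, h'⟩
  · omega
  · rw [hpos.2] at h'
    have := T.height_of_lt hp hD (apply_arcAt_lt_iff.1.2 h')
    omega

lemma one_le_sheetHeight (hDi : ∀ x, ¬ D x x) {p : ι} {j : ℤ} (hp : hit p) (hD : D p (arcAt e j))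
    (hj : j < T.position p) : 1 ≤ T.sheetHeight p j := by
  have hle := (T.base_le_height hDi hp hD).1
  have hpos := T.position_ediv_emod p
  rw [sheetHeight]
  rcases ediv_lt_or_emod_lt_of_lt (by exact_mod_cast NeZero.pos m : (0 : ℤ) < m) hj with h | ⟨h, h'⟩
  · omega
  · rw [hpos.2] at h'
    have := T.height_of_gt hp hD (apply_arcAt_lt_iff.2.2 h')
    omega

lemma sheetHeight_le (hDs : ∀ x z, D x z → D z x) {p : ι} {i j : ℤ} (hp : hit p) (hij : i < j)
    (hD : D (arcAt e i) (arcAt e j)) : T.sheetHeight p j ≤ T.sheetHeight p i := by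
  rw [sheetHeight, sheetHeight]
  rcases ediv_lt_or_emod_lt_of_lt (by exact_mod_cast NeZero.pos m : (0 : ℤ) < m) hij
    with h | ⟨h, h'⟩
  · rcases lt_trichotomy (e (arcAt e i)) (e (arcAt e j)) with he | he | he
    · have := T.height_eq_or hp hD he
      omega
    · rw [e.injective he]
      omega
    · have := T.height_eq_or hp (hDs _ _ hD) he
      omega
  · have := T.height_eq_or hp hD (apply_arcAt_lt_iff.1.2 (by rwa [coe_apply_arcAt]))
    omega

variable {B L : ℕ} {q z : ℤ} {U : Finset ι}

lemma exists_sheetHeight_nonpos (hDs : ∀ x z, D x z → D z x) (hDi : ∀ x, ¬ D x x)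
    (hD : RelatesLargeSets D (2 ^ L)) (hB : B ≤ m) (hU : ∀ u ∈ U, hit u)
    (hUpos : ∀ u ∈ U, T.position u < (q - L) * B) (hUcard : 2 ^ L ≤ #U)
    (hz : z ∈ goodIndices e D B L q) : ∃ u ∈ U, T.sheetHeight u z ≤ 0 := by
  obtain ⟨hzq, -, hdown⟩ := Finset.mem_filter.1 hz
  have hzq' : z ∈ block B (q - (0 : ℕ)) := by simpa using hzq
  have hreach := reach_subset (Bl := fun k : ℕ => block B (q - k))
    (R := fun i j => D (arcAt e i) (arcAt e j)) hzq' L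
  obtain ⟨u, hu, d, hd, hud⟩ := hD.exists_mem_block hB hreach hUcard hdown
  refine ⟨u, hu, ?_⟩
  calc T.sheetHeight u z
      ≤ T.sheetHeight u d := le_of_mem_reach hzq'
        (fun k a ha c hc hac => T.sheetHeight_le hDs (hU u hu)
          (lt_of_mem_block (by push_cast; omega) hc ha) (hDs _ _ hac)) hd
    _ ≤ 0 := T.sheetHeight_nonpos hDi (hU u hu) hud
        ((hUpos u hu).trans_le (mem_block.1 (hreach hd)).1)

lemma exists_one_le_sheetHeight (hDs : ∀ x z, D x z → D z x) (hDi : ∀ x, ¬ D x x)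
    (hD : RelatesLargeSets D (2 ^ L)) (hB : B ≤ m) (hU : ∀ u ∈ U, hit u)
    (hUpos : ∀ u ∈ U, (q + L + 1) * B ≤ T.position u) (hUcard : 2 ^ L ≤ #U)
    (hz : z ∈ goodIndices e D B L q) : ∃ u ∈ U, 1 ≤ T.sheetHeight u z := by
  obtain ⟨hzq, hup, -⟩ := Finset.mem_filter.1 hz
  have hzq' : z ∈ block B (q + (0 : ℕ)) := by simpa using hzq
  have hreach := reach_subset (Bl := fun k : ℕ => block B (q + k))
    (R := fun i j => D (arcAt e i) (arcAt e j)) hzq' L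
  obtain ⟨u, hu, d, hd, hud⟩ := hD.exists_mem_block hB hreach hUcard hup
  refine ⟨u, hu, ?_⟩
  have hdu : d < T.position u := by
    linarith [(mem_block.1 (hreach hd)).2, hUpos u hu]
  refine (T.one_le_sheetHeight hDi (hU u hu) hud hdu).trans (neg_le_neg_iff.1 ?_)
  exact le_of_mem_reach (f := fun i => -T.sheetHeight u i) hzq'
    (fun k a ha c hc hac => neg_le_neg <| T.sheetHeight_le hDs (hU u hu)
      (lt_of_mem_block (by push_cast; omega) ha hc) hac) hd

/-- The height of an arc which is not hit does not depend on the point of observation, whereas a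
good arc is seen below the arcs of `low` and above the arcs of `high`. -/
lemma hit_of_mem_goodIndices (hDs : ∀ x z, D x z → D z x) (hDi : ∀ x, ¬ D x x)
    (hD : RelatesLargeSets D (2 ^ L)) (hB : B ≤ m) {low high : Finset ι}
    (hlow : ∀ u ∈ low, hit u) (hhigh : ∀ u ∈ high, hit u)
    (hlowpos : ∀ u ∈ low, T.position u < (q - L) * B)
    (hhighpos : ∀ u ∈ high, (q + L + 1) * B ≤ T.position u)
    (hlowcard : 2 ^ L ≤ #low) (hhighcard : 2 ^ L ≤ #high) (hz : z ∈ goodIndices e D B L q) :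
    hit (arcAt e z) := by
  obtain ⟨u, hu, hu0⟩ := T.exists_sheetHeight_nonpos hDs hDi hD hB hlow hlowpos hlowcard hz
  obtain ⟨v, hv, hv1⟩ := T.exists_one_le_sheetHeight hDs hDi hD hB hhigh hhighpos hhighcard hz
  by_contra hnot
  have heq := T.height_congr hnot (hlow u hu) (hhigh v hv)
  rw [sheetHeight] at hu0 hv1
  omega

end Sheets

lemma exists_forall_goodIndices_hit [NeZero m] (T : HeightTable e D hit)
    (hDs : ∀ x z, D x z → D z x) (hDi : ∀ x, ¬ D x x) {B L : ℕ} {U : Finset ι}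
    (hD : RelatesLargeSets D (2 ^ L)) (hB₀ : 0 < B) (hB : B ≤ m) (hU : ∀ u ∈ U, hit u)
    (hUcard : 2 * 2 ^ L + (2 * L + 2) * B ≤ #U) :
    ∃ r ≤ m / B, ∀ z ∈ goodIndices e D B L (r + 1 + L), hit (arcAt e z) := by
  have hm₀ : (0 : ℤ) < m := by exact_mod_cast NeZero.pos m
  obtain ⟨j, hlow, hhigh⟩ :=
    exists_card_filter_lt_and_card_filter_le T.position_injective (by positivity) hUcard
  have hj := Int.emod_add_mul_ediv j m
  obtain ⟨k, hk⟩ := Int.eq_ofNat_of_zero_le (Int.emod_nonneg j hm₀.ne')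
  have hkm : k < m := by
    have := Int.emod_lt_of_pos j hm₀
    omega
  have hkr : (k / B : ℕ) * (B : ℤ) ≤ k := by exact_mod_cast Nat.div_mul_le_self k B
  have hkr' : (k : ℤ) < ((k / B : ℕ) + 1) * (B : ℤ) := by
    rw [mul_comm]
    exact_mod_cast Nat.lt_mul_div_succ k hB₀
  refine ⟨k / B, Nat.div_le_div_right hkm.le, fun z hz => (T.shift (j / m)).hit_of_mem_goodIndices
    hDs hDi hD hB (low := {u ∈ U | T.position u < j})
    (high := {u ∈ U | j + ((2 * L + 2) * B : ℕ) ≤ T.position u})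
    (fun u hu => hU u (Finset.mem_filter.1 hu).1) (fun u hu => hU u (Finset.mem_filter.1 hu).1)
    (fun u hu => ?_) (fun u hu => ?_) hlow hhigh hz⟩
  all_goals
    have hu' := (Finset.mem_filter.1 hu).2
    rw [position_shift]
    push_cast at hu'
    nlinarith

end HeightTable

theorem exists_goodBlocks {ι : Type*} {m : ℕ} (e : ι ≃ Fin m) {D : ι → ι → Prop} {B L : ℕ}
    (hB : B ≤ m) (hBL : 3 * 2 ^ L ≤ B) (hDs : ∀ x z, D x z → D z x) (hDi : ∀ x, ¬ D x x)
    (hD : RelatesLargeSets D (2 ^ L)) :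
    ∃ good : ℕ → Finset ι, (∀ r, B - 2 * 2 ^ L ≤ #(good r)) ∧
      ∀ hit : ι → Prop, Nonempty (HeightTable e D hit) → ∀ U : Finset ι, (∀ u ∈ U, hit u) →
        2 * 2 ^ L + (2 * L + 2) * B ≤ #U → ∃ r ≤ m / B, ∀ z ∈ good r, hit z := by
  classical
  have hB₀ : 0 < B := (by positivity : 0 < 3 * 2 ^ L).trans_le hBL
  have : NeZero m := ⟨(hB₀.trans_le hB).ne'⟩
  refine ⟨fun r => (goodIndices e D B L (r + 1 + L)).image (arcAt e), fun r => ?_, ?_⟩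
  · rw [Finset.card_image_of_injOn]
    · exact hD.le_card_goodIndices hB hBL _
    · exact (arcAt_injOn_block e hB _).mono (Finset.coe_subset.2 (Finset.filter_subset _ _))
  · rintro hit ⟨T⟩ U hU hUcard
    obtain ⟨r, hr, hgood⟩ := T.exists_forall_goodIndices_hit hDs hDi hD hB₀ hB hU hUcard
    exact ⟨r, hr, by simpa using hgood⟩

/-! ### Gaps between two disjoint pieces -/

/-- The gap of the walk `f`, run for `n` steps, from `α` to `β`: the time `e` is the first visit to
`β` and `s` is the last visit to `α` before it. The two visits are not consecutive. -/
structure IsGap (f : ℕ → ℤ × ℤ) (n : ℕ) (α β : Set (ℤ × ℤ)) (s e : ℕ) : Prop where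
  add_two_le : s + 2 ≤ e
  le_length : e ≤ n
  start_mem : f s ∈ α
  finish_mem : f e ∈ β
  notMem_start : ∀ k, s < k → k < e → f k ∉ α
  notMem_finish : ∀ k < e, f k ∉ β

/-- On its gap from `α` to `β`, the walk `f` visits `γ`. -/
def GapMeets (f : ℕ → ℤ × ℤ) (n : ℕ) (α β γ : Set (ℤ × ℤ)) : Prop :=
  ∃ s e, IsGap f n α β s e ∧ ∃ k, s < k ∧ k < e ∧ f k ∈ γ

namespace IsGap

variable {f : ℕ → ℤ × ℤ} {n : ℕ} {α β : Set (ℤ × ℤ)} {s e s' e' : ℕ}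

lemma finish_le (h : IsGap f n α β s e) (h' : IsGap f n α β s' e') : e ≤ e' :=
  le_of_not_gt fun hlt => h.notMem_finish e' hlt h'.finish_mem

lemma finish_unique (h : IsGap f n α β s e) (h' : IsGap f n α β s' e') : e = e' :=
  (h.finish_le h').antisymm (h'.finish_le h)

lemma start_le (h : IsGap f n α β s e) (h' : IsGap f n α β s' e') : s' ≤ s := by
  refine le_of_not_gt fun hlt => h.notMem_start s' hlt ?_ h'.start_mem
  have := h.finish_unique h'
  have := h'.add_two_le
  omega

lemma start_unique (h : IsGap f n α β s e) (h' : IsGap f n α β s' e') : s = s' :=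
  (h'.start_le h).antisymm (h.start_le h')

lemma trace_subset (h : IsGap f n α β s e) : trace (fun k => f (s + k)) (e - s) ⊆ trace f n := by
  rintro _ ⟨k, hk, rfl⟩
  have := h.add_two_le
  have := h.le_length
  exact mem_trace f (by omega)

lemma notMem_of_mem_innerTrace (h : IsGap f n α β s e) {p : ℤ × ℤ}
    (hp : p ∈ innerTrace (fun k => f (s + k)) (e - s)) : p ∉ α ∧ p ∉ β := by
  obtain ⟨k, ⟨hk₀, hk⟩, rfl⟩ := hp
  exact ⟨h.notMem_start _ (by omega) (by omega), h.notMem_finish _ (by omega)⟩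

lemma exists_mem_innerTrace (h : IsGap f n α β s e) {y : ℕ → ℤ × ℤ} {len : ℕ}
    (hmeets : GapMeets f n α β (trace y len)) :
    ∃ k ≤ len, y k ∈ innerTrace (fun k => f (s + k)) (e - s) := by
  obtain ⟨s', e', h', k, hsk, hke, i, hi, hik⟩ := hmeets
  obtain rfl := h.start_unique h'
  obtain rfl := h.finish_unique h'
  refine ⟨i, hi, k - s, ⟨by omega, by omega⟩, ?_⟩
  rw [hik]
  exact congrArg f (by omega)

end IsGap

variable {V : Type*} {G : SimpleGraph V}

lemma KttFree.relatesLargeSets {t : ℕ} (hG : KttFree G t) :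
    RelatesLargeSets (fun a c => a ≠ c ∧ ¬ G.Adj a c) (2 * t) := by
  classical
  intro A C hA hC
  by_contra! hcon
  obtain ⟨A', hA', hA'card⟩ := Finset.exists_subset_card_eq (show t ≤ #A by omega)
  have hsdiff := Finset.le_card_sdiff A' C
  obtain ⟨C', hC', hC'card⟩ := Finset.exists_subset_card_eq (show t ≤ #(C \ A') by omega)
  have hdisj : Disjoint A' C' := Finset.disjoint_of_subset_right hC' Finset.disjoint_sdiff
  exact hG ⟨A', C', hdisj, hA'card, hC'card, fun a ha c hc =>
    hcon a (hA' ha) c (Finset.mem_sdiff.1 (hC' hc)).1 (Finset.disjoint_left.1 hdisj ha <| · ▸ hc)⟩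

lemma KttFree.card_le_of_forall_exists {t k : ℕ} (hG : KttFree G t) {good : ℕ → Finset V}
    (hgood : ∀ r, 2 * t ≤ #(good r)) {Y : Finset V}
    (hY : ∀ y ∈ Y, ∃ r ≤ k, ∀ z ∈ good r, y = z ∨ G.Adj y z) : #Y ≤ (k + 1) * (2 * t) := by
  classical
  by_contra! hcard
  choose! r hrk hr using hY
  obtain ⟨r₀, -, hr₀⟩ := Finset.exists_lt_card_fiber_of_mul_lt_card_of_maps_to
    (t := Finset.range (k + 1)) (fun y hy => Finset.mem_range_succ_iff.2 (hrk y hy))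
    (by rwa [Finset.card_range])
  obtain ⟨y, hy, z, hz, hne, hadj⟩ := hG.relatesLargeSets _ _ hr₀.le (hgood r₀)
  obtain ⟨hyY, rfl⟩ := Finset.mem_filter.1 hy
  exact (hr y hyY z hz).elim hne hadj

namespace LatticeModel

variable (W : LatticeModel G)

lemma relatesLargeSets_disjoint {ι : Type*} {t N : ℕ} (hG : KttFree G t) (hN : 2 * t ≤ N)
    (v : ι ↪ V) {arc : ι → Set (ℤ × ℤ)} (harc : ∀ x, arc x ⊆ trace (W.walk (v x)) W.length) :
    RelatesLargeSets (fun x z => Disjoint (arc x) (arc z)) N := by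
  intro A C hA hC
  obtain ⟨_, hav, _, hcv, hne, hadj⟩ := hG.relatesLargeSets (A.map v) (C.map v)
    (by rw [Finset.card_map]; omega) (by rw [Finset.card_map]; omega)
  obtain ⟨a, ha, rfl⟩ := Finset.mem_map.1 hav
  obtain ⟨c, hc, rfl⟩ := Finset.mem_map.1 hcv
  exact ⟨a, ha, c, hc, Set.disjoint_left.2 fun p hpa hpc =>
    (W.eq_or_adj_of_mem_trace (harc a hpa) (harc c hpc)).elim hne hadj⟩

section

variable {lower upper : ℕ → ℤ × ℤ} {lowerLength upperLength : ℕ}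

open scoped Classical in
/-- The vertices whose walk has a gap from `α` to `β`. -/
noncomputable def gapVertices [Fintype V] (α β : Set (ℤ × ℤ)) : Finset V :=
  {x | ∃ s e, IsGap (W.walk x) W.length α β s e}

variable [Fintype V] {t L B : ℕ}

lemma exists_good_gapVertices (hG : KttFree G t) (hL : 2 * t ≤ 2 ^ L) (hBL : 3 * 2 ^ L ≤ B)
    (hlower : IsLatticeWalk lower) (hupper : IsLatticeWalk upper)
    (hdisj : Disjoint (trace lower lowerLength) (trace upper upperLength))
    (hB : B ≤ #(W.gapVertices (trace lower lowerLength) (trace upper upperLength))) :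
    ∃ good : ℕ → Finset V, (∀ r, 2 * t ≤ #(good r)) ∧
      ∀ (y : ℕ → ℤ × ℤ) (len : ℕ), IsLatticeWalk y →
        Disjoint (trace y len) (trace lower lowerLength) →
        Disjoint (trace y len) (trace upper upperLength) →
        ∀ U : Finset V, 2 * 2 ^ L + (2 * L + 2) * B ≤ #U →
          (∀ x ∈ U, GapMeets (W.walk x) W.length (trace lower lowerLength)
            (trace upper upperLength) (trace y len)) →
          ∃ r ≤ Fintype.card V / B,
            ∀ z ∈ good r, ¬ Disjoint (trace y len) (trace (W.walk z) W.length) := by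
  classical
  set X := W.gapVertices (trace lower lowerLength) (trace upper upperLength)
  choose s e hgap using fun x : X => (Finset.mem_filter.1 x.2).2
  let u : X → ℕ → ℤ × ℤ := fun x k => W.walk x (s x + k)
  obtain ⟨φ, hφ⟩ := exists_equiv_fin_heightTable hlower hupper hdisj (u := u)
    (len := fun x => e x - s x) (fun x k => W.isWalk x _)
    (fun x => by have := (hgap x).add_two_le; omega) (fun x => (hgap x).start_mem)
    (fun x => by
      have := (hgap x).add_two_le
      simpa only [u, Nat.add_sub_cancel' (show s x ≤ e x by omega)] using (hgap x).finish_mem)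
    (fun x p => (hgap x).notMem_of_mem_innerTrace)
  have hcard : Fintype.card X = #X := Fintype.card_coe X
  obtain ⟨good, hgood, hhit⟩ := exists_goodBlocks φ (hcard ▸ hB) hBL (fun _ _ h => h.symm)
    (fun x h => Set.disjoint_left.1 h (mem_trace _ (Nat.zero_le _)) (mem_trace _ (Nat.zero_le _)))
    (W.relatesLargeSets_disjoint hG hL (.subtype _) fun x => (hgap x).trace_subset)
  refine ⟨fun r => (good r).map (.subtype _), fun r => ?_, fun y len hy hyl hyu U hU hUgap => ?_⟩
  · have := hgood r
    rw [Finset.card_map]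
    omega
  · obtain ⟨r, hr, hz⟩ := hhit _ (hφ y len hy hyl hyu) (U.subtype (· ∈ X))
      (fun x hx => (hgap x).exists_mem_innerTrace (hUgap x (Finset.mem_subtype.1 hx)))
      (by
        rwa [Finset.card_subtype, Finset.filter_true_of_mem fun x hx => ?_]
        obtain ⟨s, e, h, -⟩ := hUgap x hx
        exact Finset.mem_filter.2 ⟨Finset.mem_univ _, s, e, h⟩)
    refine ⟨r, hr.trans (Nat.div_le_div_right (hcard.trans_le (Finset.card_le_univ X))), ?_⟩
    intro v hv
    obtain ⟨z, hzr, rfl⟩ := Finset.mem_map.1 hv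
    obtain ⟨k, hk, hyk⟩ := hz z hzr
    exact Set.not_disjoint_iff.2 ⟨_, mem_trace y hk,
      (hgap z).trace_subset (innerTrace_subset_trace _ _ hyk)⟩

end

end LatticeModel

lemma card_filter_prod_le {α : Type*} [Fintype α] (R : α → α → Prop) [DecidableRel R] {h k : ℕ}
    (hk : #{y | h ≤ #{x | R x y}} ≤ k) :
    #{p : α × α | R p.1 p.2} ≤ Fintype.card α * h + Fintype.card α * k := by
  have hfiber (y : α) : #{x | R x y} ≤ h + if h ≤ #{x | R x y} then Fintype.card α else 0 := by
    have := Finset.card_le_univ ({x | R x y} : Finset α)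
    split_ifs <;> omega
  calc #{p : α × α | R p.1 p.2} = ∑ y, #{x | R x y} := by
        simp only [Finset.card_filter, ← Finset.univ_product_univ, Finset.sum_product_right]
    _ ≤ ∑ y, (h + if h ≤ #{x | R x y} then Fintype.card α else 0) :=
        Finset.sum_le_sum fun y _ => hfiber y
    _ = Fintype.card α * h + #{y | h ≤ #{x | R x y}} * Fintype.card α := by
        rw [Finset.sum_add_distrib, Finset.sum_const, ← Finset.sum_filter, Finset.sum_const]
        rfl
    _ ≤ _ := by
        rw [mul_comm #_]
        gcongr

open scoped Classical in
theorem LatticeModel.card_gapMeets_le [Fintype V] (W : LatticeModel G) {t L B : ℕ}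
    (hG : KttFree G t) (hL : 2 * t ≤ 2 ^ L) (hBL : 3 * 2 ^ L ≤ B) {lower upper : ℕ → ℤ × ℤ}
    {lowerLength upperLength : ℕ} (hlower : IsLatticeWalk lower) (hupper : IsLatticeWalk upper)
    (hdisj : Disjoint (trace lower lowerLength) (trace upper upperLength)) {len : V → ℕ}
    (hlen : ∀ y, len y ≤ W.length) :
    #{p : V × V | Disjoint (trace (W.walk p.2) (len p.2)) (trace lower lowerLength) ∧
        Disjoint (trace (W.walk p.2) (len p.2)) (trace upper upperLength) ∧
        GapMeets (W.walk p.1) W.length (trace lower lowerLength) (trace upper upperLength)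
          (trace (W.walk p.2) (len p.2))} ≤
      Fintype.card V * (2 * 2 ^ L + (2 * L + 2) * B) +
        Fintype.card V * ((Fintype.card V / B + 1) * (2 * t)) := by
  set α := trace lower lowerLength
  set β := trace upper upperLength
  let piece (y : V) := trace (W.walk y) (len y)
  refine card_filter_prod_le (fun x y => Disjoint (piece y) α ∧ Disjoint (piece y) β ∧
    GapMeets (W.walk x) W.length α β (piece y)) ?_
  by_cases hB : B ≤ #(W.gapVertices α β)
  · obtain ⟨good, hgood, hmeets⟩ := W.exists_good_gapVertices hG hL hBL hlower hupper hdisj hB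
    refine hG.card_le_of_forall_exists hgood fun y hy => ?_
    have hcard := (Finset.mem_filter.1 hy).2
    obtain ⟨x, hx⟩ := Finset.card_pos.1
      ((show 0 < 2 * 2 ^ L + (2 * L + 2) * B by positivity).trans_le hcard)
    obtain ⟨-, hlow, hupp, -⟩ := Finset.mem_filter.1 hx
    obtain ⟨r, hr, hz⟩ := hmeets _ _ (W.isWalk y) hlow hupp _ hcard
      fun x hx => (Finset.mem_filter.1 hx).2.2.2
    refine ⟨r, hr, fun z hzr => ?_⟩
    obtain ⟨p, hpy, hpz⟩ := Set.not_disjoint_iff.1 (hz z hzr)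
    exact W.eq_or_adj_of_mem_trace (trace_mono _ (hlen y) hpy) hpz
  · rw [Finset.filter_eq_empty_iff.2 fun y _ hcard => hB ?_, Finset.card_empty]
    · exact Nat.zero_le _
    have := hcard.trans (Finset.card_le_card fun x hx => by
      obtain ⟨-, -, -, s, e, h, -⟩ := Finset.mem_filter.1 hx
      exact Finset.mem_filter.2 ⟨Finset.mem_univ _, s, e, h⟩ :
        _ ≤ #(W.gapVertices α β))
    nlinarith

/-! ### Quadruples of a gap and three disjoint pieces -/

lemma exists_last_visit {f : ℕ → ℤ × ℤ} {α : Set (ℤ × ℤ)} {e k : ℕ} (hk : k < e) (h : f k ∈ α) :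
    ∃ s < e, f s ∈ α ∧ ∀ j, s < j → j < e → f j ∉ α := by
  classical
  have hle := Nat.findGreatest_le (P := fun s => f s ∈ α) (e - 1)
  exact ⟨_, by omega, Nat.findGreatest_spec (P := fun s => f s ∈ α) (show k ≤ e - 1 by omega) h,
    fun j hj hje => Nat.findGreatest_is_greatest hj (by omega)⟩

lemma gapMeets_or_gapMeets {f : ℕ → ℤ × ℤ} {n e i j : ℕ} {α β γ : Set (ℤ × ℤ)}
    (hαγ : Disjoint α γ) (he : e ≤ n) (heβ : f e ∈ β) (hfirst : ∀ k < e, f k ∉ β)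
    (hi : i < e) (hiα : f i ∈ α) (hj : j < e) (hjγ : f j ∈ γ) :
    GapMeets f n α β γ ∨ GapMeets f n γ β α := by
  obtain ⟨s, hs, hsα, hslast⟩ := exists_last_visit hi hiα
  obtain ⟨r, hr, hrγ, hrlast⟩ := exists_last_visit hj hjγ
  rcases lt_trichotomy s r with h | rfl | h
  · exact .inl ⟨s, e, ⟨by omega, he, hsα, heβ, hslast, hfirst⟩, r, h, hr, hrγ⟩
  · exact absurd hrγ (Set.disjoint_left.1 hαγ hsα)
  · exact .inr ⟨r, e, ⟨by omega, he, hrγ, heβ, hrlast, hfirst⟩, s, h, hs, hsα⟩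

lemma exists_perm_gapMeets {f : ℕ → ℤ × ℤ} {n : ℕ} {A : Fin 3 → Set (ℤ × ℤ)}
    (hdisj : Pairwise (Function.onFun Disjoint A)) (hmeet : ∀ i, ¬ Disjoint (trace f n) (A i)) :
    ∃ σ : Equiv.Perm (Fin 3), GapMeets f n (A (σ 0)) (A (σ 1)) (A (σ 2)) := by
  classical
  have hvisit (i) : ∃ k, k ≤ n ∧ f k ∈ A i := by
    obtain ⟨_, ⟨k, hk, rfl⟩, hA⟩ := Set.not_disjoint_iff.1 (hmeet i)
    exact ⟨k, hk, hA⟩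
  let first (i : Fin 3) := Nat.find (hvisit i)
  have hfirst (i) : first i ≤ n ∧ f (first i) ∈ A i := Nat.find_spec (hvisit i)
  obtain ⟨i, hi⟩ := Finite.exists_max first
  have hlt : ∀ j, j ≠ i → first j < first i := fun j hj =>
    (hi j).lt_of_ne fun h => Set.disjoint_left.1 (hdisj hj) (hfirst j).2 (h ▸ (hfirst i).2)
  let σ := Equiv.swap 1 i
  have hσ₁ : σ 1 = i := Equiv.swap_apply_left 1 i
  have hσ₀ : σ 0 ≠ i := hσ₁ ▸ σ.injective.ne (by decide)
  have hσ₂ : σ 2 ≠ i := hσ₁ ▸ σ.injective.ne (by decide)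
  rcases gapMeets_or_gapMeets (hdisj (σ.injective.ne (show (0 : Fin 3) ≠ 2 by decide)))
    (hfirst i).1 (hfirst i).2 (fun k hk hkA => Nat.find_min (hvisit i) hk
      ⟨hk.le.trans (hfirst i).1, hkA⟩) (hlt _ hσ₀) (hfirst _).2 (hlt _ hσ₂) (hfirst _).2 with h | h
  · exact ⟨σ, by rwa [hσ₁]⟩
  · exact ⟨Equiv.swap 0 2 |>.trans σ, by simpa [Equiv.swap_apply_of_ne_of_ne, hσ₁] using h⟩

namespace LatticeModel

variable {V ι : Type*} {G : SimpleGraph V} (W : LatticeModel G) (len : ι → V → ℕ)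

/-- The initial piece of length `len i y` of the walk of `y`, for a label `(y, i)`. -/
def piece (l : V × ι) : Set (ℤ × ℤ) := trace (W.walk l.1) (len l.2 l.1)

variable [Fintype V] [Fintype ι]

open scoped Classical in
/-- The quadruples of a vertex and three labels such that the three pieces are disjoint and all
meet the walk of the vertex. -/
noncomputable def hitQuadruples : Finset (V × (Fin 3 → V × ι)) :=
  {q | Pairwise (Function.onFun Disjoint (W.piece len ∘ q.2)) ∧
    ∀ i, ¬ Disjoint (trace (W.walk q.1) W.length) (W.piece len (q.2 i))}

open scoped Classical in
/-- The quadruples of a vertex and three labels such that the three pieces are disjoint and the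
third meets the gap of the vertex between the first two. -/
noncomputable def gapQuadruples : Finset (V × (Fin 3 → V × ι)) :=
  {q | Pairwise (Function.onFun Disjoint (W.piece len ∘ q.2)) ∧
    GapMeets (W.walk q.1) W.length (W.piece len (q.2 0)) (W.piece len (q.2 1))
      (W.piece len (q.2 2))}

lemma card_hitQuadruples_le : #(W.hitQuadruples len) ≤ 6 * #(W.gapQuadruples len) := by
  classical
  have hsub : W.hitQuadruples len ⊆ (Finset.univ : Finset (Equiv.Perm (Fin 3))).biUnion fun σ =>
      (W.gapQuadruples len).image fun q => (q.1, q.2 ∘ σ.symm) := by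
    rintro ⟨x, g⟩ hq
    obtain ⟨-, hdisj, hmeet⟩ := Finset.mem_filter.1 hq
    obtain ⟨σ, hσ⟩ := exists_perm_gapMeets hdisj hmeet
    refine Finset.mem_biUnion.2 ⟨σ, Finset.mem_univ _, Finset.mem_image.2 ⟨(x, g ∘ σ), ?_, ?_⟩⟩
    · exact Finset.mem_filter.2
        ⟨Finset.mem_univ _, fun i j hij => hdisj (σ.injective.ne hij), hσ⟩
    · simp [Function.comp_assoc]
  calc #(W.hitQuadruples len)
      ≤ ∑ σ : Equiv.Perm (Fin 3), #((W.gapQuadruples len).image fun q => (q.1, q.2 ∘ σ.symm)) :=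
        (Finset.card_le_card hsub).trans Finset.card_biUnion_le
    _ ≤ ∑ _σ : Equiv.Perm (Fin 3), #(W.gapQuadruples len) :=
        Finset.sum_le_sum fun σ _ => Finset.card_image_le
    _ = 6 * #(W.gapQuadruples len) := by simp [Fintype.card_perm, Nat.factorial]

open scoped Classical in
lemma card_gapQuadruples_fiber_le {t L B : ℕ} (hG : KttFree G t)
    (hL : 2 * t ≤ 2 ^ L) (hBL : 3 * 2 ^ L ≤ B) (hlen : ∀ i y, len i y ≤ W.length) (a b : V × ι)
    (i : ι) :
    #{q ∈ W.gapQuadruples len | (q.2 0, q.2 1, (q.2 2).2) = (a, b, i)} ≤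
      Fintype.card V * (2 * 2 ^ L + (2 * L + 2) * B) +
        Fintype.card V * ((Fintype.card V / B + 1) * (2 * t)) := by
  set F := {q ∈ W.gapQuadruples len | (q.2 0, q.2 1, (q.2 2).2) = (a, b, i)}
  have hF (q) (hq : q ∈ F) :
      q ∈ W.gapQuadruples len ∧ q.2 0 = a ∧ q.2 1 = b ∧ q.2 2 = ((q.2 2).1, i) := by
    obtain ⟨hq, heq⟩ := Finset.mem_filter.1 hq
    simp only [Prod.mk.injEq] at heq
    exact ⟨hq, heq.1, heq.2.1, Prod.ext rfl heq.2.2⟩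
  rcases F.eq_empty_or_nonempty with hempty | ⟨q₀, hq₀⟩
  · simp [hempty]
  have hab : Disjoint (W.piece len a) (W.piece len b) := by
    obtain ⟨hq, rfl, rfl, -⟩ := hF q₀ hq₀
    exact (Finset.mem_filter.1 hq).2.1 (show (0 : Fin 3) ≠ 1 by decide)
  refine (Finset.card_le_card_of_injOn (fun q => (q.1, (q.2 2).1)) (fun q hq => ?_) ?_).trans
    (W.card_gapMeets_le hG hL hBL (W.isWalk a.1) (W.isWalk b.1) hab (hlen i))
  · obtain ⟨hq, h₀, h₁, h₂⟩ := hF q hq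
    obtain ⟨-, hdisj, hgap⟩ := Finset.mem_filter.1 hq
    have h₂₀ := hdisj (show (2 : Fin 3) ≠ 0 by decide)
    have h₂₁ := hdisj (show (2 : Fin 3) ≠ 1 by decide)
    simp only [Function.onFun, Function.comp_apply] at h₂₀ h₂₁
    rw [h₀, h₁, h₂] at hgap
    rw [h₀, h₂] at h₂₀
    rw [h₁, h₂] at h₂₁
    exact Finset.mem_filter.2 ⟨Finset.mem_univ _, h₂₀, h₂₁, hgap⟩
  · intro q hq q' hq' h
    obtain ⟨-, h₀, h₁, h₂⟩ := hF q hq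
    obtain ⟨-, h₀', h₁', h₂'⟩ := hF q' hq'
    obtain ⟨hx, hy⟩ := Prod.mk.inj h
    refine Prod.ext hx (funext fun j => ?_)
    fin_cases j
    exacts [h₀.trans h₀'.symm, h₁.trans h₁'.symm, (h₂.trans (by rw [hy])).trans h₂'.symm]

lemma card_gapQuadruples_le {t L B : ℕ} (hG : KttFree G t) (hL : 2 * t ≤ 2 ^ L)
    (hBL : 3 * 2 ^ L ≤ B) (hlen : ∀ i y, len i y ≤ W.length) :
    #(W.gapQuadruples len) ≤ (Fintype.card V * (2 * 2 ^ L + (2 * L + 2) * B) +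
      Fintype.card V * ((Fintype.card V / B + 1) * (2 * t))) *
        (Fintype.card ι ^ 3 * Fintype.card V ^ 2) := by
  classical
  have hcard : #(Finset.univ : Finset ((V × ι) × (V × ι) × ι)) =
      Fintype.card ι ^ 3 * Fintype.card V ^ 2 := by
    simp only [Finset.card_univ, Fintype.card_prod]
    ring
  rw [← hcard]
  exact Finset.card_le_mul_card_image_of_maps_to
    (f := fun q : V × (Fin 3 → V × ι) => (q.2 0, q.2 1, (q.2 2).2))
    (fun _ _ => Finset.mem_coe.2 (Finset.mem_univ _)) _
    fun ⟨a, b, i⟩ _ => W.card_gapQuadruples_fiber_le len hG hL hBL hlen a b i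

end LatticeModel

/-! ### Initial pieces meeting a prescribed number of walks -/

namespace LatticeModel

variable {V : Type*} [Fintype V] {G : SimpleGraph V} (W : LatticeModel G) {t : ℕ}

open scoped Classical in
/-- The vertices other than `y` whose walk meets the initial piece of length `e` of the walk
of `y`. -/
noncomputable def pieceNeighbors (y : V) (e : ℕ) : Finset V :=
  {x | x ≠ y ∧ ¬ Disjoint (trace (W.walk y) e) (trace (W.walk x) W.length)}

variable {W} in
lemma mem_pieceNeighbors {x y : V} {e : ℕ} : x ∈ W.pieceNeighbors y e ↔
    x ≠ y ∧ ¬ Disjoint (trace (W.walk y) e) (trace (W.walk x) W.length) := by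
  simp [pieceNeighbors]

lemma mem_pieceNeighbors_length {x y : V} : x ∈ W.pieceNeighbors y W.length ↔ G.Adj y x := by
  rw [mem_pieceNeighbors]
  refine ⟨fun ⟨hne, hmeet⟩ => ?_, fun h => ⟨h.ne', fun hdisj => ?_⟩⟩
  · obtain ⟨p, hy, hx⟩ := Set.not_disjoint_iff.1 hmeet
    exact (W.eq_or_adj_of_mem_trace hy hx).resolve_left hne.symm
  · obtain ⟨i, hi, j, hj, hij⟩ := (W.adj_iff y x h.ne).1 h
    exact Set.disjoint_left.1 hdisj (mem_trace _ hi) (hij ▸ mem_trace _ hj)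

open scoped Classical in
lemma card_filter_mem_trace_lt (hG : KttFree G t) (p : ℤ × ℤ) :
    #{x | p ∈ trace (W.walk x) W.length} < 2 * t := by
  by_contra! h
  obtain ⟨a, ha, c, hc, hne, hadj⟩ := hG.relatesLargeSets _ _ h h
  exact (W.eq_or_adj_of_mem_trace (Finset.mem_filter.1 ha).2 (Finset.mem_filter.1 hc).2).elim
    hne hadj

lemma card_pieceNeighbors_zero_le (hG : KttFree G t) (y : V) :
    #(W.pieceNeighbors y 0) ≤ 2 * t := by
  classical
  refine (Finset.card_le_card fun x hx => ?_).trans (W.card_filter_mem_trace_lt hG (W.walk y 0)).le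
  obtain ⟨_, ⟨k, hk, rfl⟩, hx⟩ := Set.not_disjoint_iff.1 (mem_pieceNeighbors.1 hx).2
  rw [Nat.le_zero.1 hk] at hx
  exact Finset.mem_filter.2 ⟨Finset.mem_univ _, hx⟩

lemma card_pieceNeighbors_succ_le (hG : KttFree G t) (y : V) (e : ℕ) :
    #(W.pieceNeighbors y (e + 1)) ≤ #(W.pieceNeighbors y e) + 2 * t := by
  classical
  have hsub : W.pieceNeighbors y (e + 1) ⊆ W.pieceNeighbors y e ∪
      ({x | W.walk y (e + 1) ∈ trace (W.walk x) W.length} : Finset V) := fun x hx => by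
    obtain ⟨hne, hmeet⟩ := mem_pieceNeighbors.1 hx
    obtain ⟨_, ⟨k, hk, rfl⟩, hkx⟩ := Set.not_disjoint_iff.1 hmeet
    rcases Nat.le_succ_iff.1 hk with hk | rfl
    · exact Finset.mem_union_left _
        (mem_pieceNeighbors.2 ⟨hne, Set.not_disjoint_iff.2 ⟨_, mem_trace _ hk, hkx⟩⟩)
    · exact Finset.mem_union_right _ (Finset.mem_filter.2 ⟨Finset.mem_univ _, hkx⟩)
  exact (Finset.card_le_card hsub).trans ((Finset.card_union_le _ _).trans
    (Nat.add_le_add_left (W.card_filter_mem_trace_lt hG _).le _))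

lemma exists_card_pieceNeighbors (hG : KttFree G t) (y : V) {s : ℕ} (hs : 2 * t ≤ s)
    (hdeg : s ≤ #(W.pieceNeighbors y W.length)) :
    ∃ e ≤ W.length, #(W.pieceNeighbors y e) ≤ s ∧ s ≤ #(W.pieceNeighbors y e) + 2 * t := by
  let P (e : ℕ) := #(W.pieceNeighbors y e) ≤ s
  have hle := Nat.findGreatest_le (P := P) W.length
  have hspec : P (Nat.findGreatest P W.length) :=
    Nat.findGreatest_spec (Nat.zero_le _) ((W.card_pieceNeighbors_zero_le hG y).trans hs)
  refine ⟨_, hle, hspec, ?_⟩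
  rcases hle.lt_or_eq with h | h
  · have hsucc := W.card_pieceNeighbors_succ_le hG y (Nat.findGreatest P W.length)
    have hgt : ¬ P _ := Nat.findGreatest_is_greatest (Nat.lt_succ_self _) h
    exact (not_le.1 hgt).le.trans hsucc
  · rw [h]
    omega

lemma disjoint_piece {ι : Type*} {len : ι → V → ℕ} (hlen : ∀ i y, len i y ≤ W.length)
    {a b : V × ι} (hne : b.1 ≠ a.1) (hb : b.1 ∉ W.pieceNeighbors a.1 (len a.2 a.1)) :
    Disjoint (W.piece len a) (W.piece len b) := by
  rw [mem_pieceNeighbors, not_and_not_right] at hb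
  exact (hb hne).mono_right (trace_mono _ (hlen _ _))

end LatticeModel

/-! ### Vertices hit at three scales -/

section Rich

variable {ι V : Type*} [Fintype V] [DecidableEq V] (N : ι → V → Finset V) (sc : ι → ℕ)

/-- The vertices whose set at scale `i` contains `x`. -/
def sources (i : ι) (x : V) : Finset V := {y | x ∈ N i y}

/-- `x` lies in so many of the sets at three scales that, after choosing one at the first scale
and then one at the second, and removing a set of the relevant scale for each choice, many
sets remain. -/
def IsRich (x : V) : Prop :=
  ∃ i j k, sc i ≤ 4 * #(sources N i x) ∧ 2 * (sc i + 1) ≤ #(sources N j x) ∧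
    2 * (sc i + sc j + 2) ≤ #(sources N k x)

lemma sum_card_sources (i : ι) : ∑ x, #(sources N i x) = ∑ y, #(N i y) := by
  refine (Finset.sum_card_bipartiteAbove_eq_sum_card_bipartiteBelow fun x y => x ∈ N i y).trans ?_
  simp [Finset.bipartiteBelow]

variable {N sc}

lemma isRich_of_five_mul_le {i : ι} {x : V} (hs : 4 ≤ sc i) (h : 5 * sc i ≤ #(sources N i x)) :
    IsRich N sc x :=
  ⟨i, i, i, by omega, by omega, by omega⟩

section Growing

variable [LinearOrder ι]

lemma isRich_of_three_le (hgrow : ∀ i j, i < j → 32 * sc i ≤ sc j) {T : Finset ι} (hT : 3 ≤ #T)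
    {x : V} (hs : ∀ i, 1 ≤ sc i) (h : ∀ i ∈ T, sc i ≤ 4 * #(sources N i x)) :
    IsRich N sc x := by
  obtain ⟨T', hT', hcard⟩ := Finset.exists_subset_card_eq hT
  let e := T'.orderEmbOfFin hcard
  have he (a : Fin 3) := h (e a) (hT' (T'.orderEmbOfFin_mem hcard a))
  have h₀₁ := hgrow _ _ (e.strictMono (show (0 : Fin 3) < 1 by decide))
  have h₁₂ := hgrow _ _ (e.strictMono (show (1 : Fin 3) < 2 by decide))
  have := hs (e 0)
  have := he 1
  have := he 2
  exact ⟨e 0, e 1, e 2, he 0, by omega, by omega⟩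

variable [Fintype ι]

lemma sum_card_sources_div_le (hgrow : ∀ i j, i < j → 32 * sc i ≤ sc j) (hs : ∀ i, 4 ≤ sc i)
    {x : V} (hx : ¬ IsRich N sc x) :
    ∑ i, (#(sources N i x) : ℝ) / sc i ≤ Fintype.card ι / 4 + 19 / 2 := by
  classical
  let T : Finset ι := {i | sc i ≤ 4 * #(sources N i x)}
  have hT : #T ≤ 2 := by
    by_contra! hT
    exact hx (isRich_of_three_le hgrow hT (fun i => by linarith [hs i])
      fun i hi => (Finset.mem_filter.1 hi).2)
  have hterm (i) : (#(sources N i x) : ℝ) / sc i ≤ 1 / 4 + if i ∈ T then 19 / 4 else 0 := by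
    rw [div_le_iff₀ (by exact_mod_cast (by linarith [hs i] : 0 < sc i))]
    split_ifs with hi
    · have : (#(sources N i x) : ℝ) < 5 * sc i := by
        exact_mod_cast not_le.1 fun h => hx (isRich_of_five_mul_le (hs i) h)
      linarith
    · have : (4 * #(sources N i x) : ℝ) < sc i := by simpa [T, ← @Nat.cast_lt ℝ] using hi
      linarith
  calc ∑ i, (#(sources N i x) : ℝ) / sc i
      ≤ ∑ i, (1 / 4 + if i ∈ T then (19 / 4 : ℝ) else 0) := Finset.sum_le_sum fun i _ => hterm i
    _ = Fintype.card ι / 4 + #T * (19 / 4) := by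
        simp [Finset.sum_add_distrib, div_eq_mul_inv]
    _ ≤ Fintype.card ι / 4 + 19 / 2 := by
        have : (#T : ℝ) ≤ 2 := by exact_mod_cast hT
        linarith

end Growing

variable [Fintype ι] {s t : ℕ}

lemma card_mul_le_sum_sum_card_sources_div (hs : ∀ i, s ≤ sc i) (hs₀ : 0 < s) (ht : 64 * t ≤ s)
    (hN : ∀ i y, sc i ≤ #(N i y) + 2 * t) :
    (31 / 32 : ℝ) * Fintype.card ι * Fintype.card V ≤
      ∑ x, ∑ i, (#(sources N i x) : ℝ) / sc i := by
  have hscale (i) : 31 / 32 * (Fintype.card V : ℝ) ≤ ∑ x, (#(sources N i x) : ℝ) / sc i := by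
    have hpos : (0 : ℝ) < sc i := by exact_mod_cast hs₀.trans_le (hs i)
    have hsize (y) : (31 / 32 : ℝ) * sc i ≤ #(N i y) := by
      have : (sc i : ℝ) ≤ #(N i y) + 2 * t := by exact_mod_cast hN i y
      have : (64 * t : ℝ) ≤ sc i := by exact_mod_cast ht.trans (hs i)
      linarith
    rw [← Finset.sum_div, le_div_iff₀ hpos, ← Nat.cast_sum, sum_card_sources, Nat.cast_sum]
    calc 31 / 32 * (Fintype.card V : ℝ) * sc i = ∑ _y : V, 31 / 32 * (sc i : ℝ) := by
          simp only [Finset.sum_const, Finset.card_univ, nsmul_eq_mul]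
          ring
      _ ≤ ∑ y, (#(N i y) : ℝ) := Finset.sum_le_sum fun y _ => hsize y
  rw [Finset.sum_comm]
  calc (31 / 32 : ℝ) * Fintype.card ι * Fintype.card V
      = ∑ _i : ι, 31 / 32 * (Fintype.card V : ℝ) := by
        simp only [Finset.sum_const, Finset.card_univ, nsmul_eq_mul]
        ring
    _ ≤ _ := Finset.sum_le_sum fun i _ => hscale i

open scoped Classical in
lemma le_card_filter_isRich [LinearOrder ι] [Nonempty V] (hι : 16 ≤ Fintype.card ι)
    (hgrow : ∀ i j, i < j → 32 * sc i ≤ sc j) (hs₀ : 4 ≤ s) (hs : ∀ i, s ≤ sc i)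
    (ht : 64 * t ≤ s) (hN : ∀ i y, sc i ≤ #(N i y) + 2 * t) : s ≤ 8 * #{x | IsRich N sc x} := by
  have hn₀ : (0 : ℝ) < Fintype.card V := Nat.cast_pos.2 Fintype.card_pos
  have hsR : (0 : ℝ) < s := by exact_mod_cast (by omega : 0 < s)
  have hmR : (16 : ℝ) ≤ Fintype.card ι := by exact_mod_cast hι
  set m : ℝ := (Fintype.card ι : ℝ) with hm
  set n : ℝ := (Fintype.card V : ℝ) with hn
  have hup (x) : ∑ i, (#(sources N i x) : ℝ) / sc i ≤
      (m / 4 + 19 / 2) + if IsRich N sc x then m * (n / s) else 0 := by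
    split_ifs with hx
    · refine le_add_of_nonneg_of_le (by positivity) ?_
      rw [hm, ← nsmul_eq_mul, ← Finset.card_univ]
      refine Finset.sum_le_card_nsmul _ _ _ fun i _ => ?_
      exact div_le_div₀ hn₀.le (Nat.cast_le.2 (Finset.card_le_univ _)) hsR
        (by exact_mod_cast hs i)
    · rw [add_zero]
      exact sum_card_sources_div_le hgrow (fun i => hs₀.trans (hs i)) hx
  have hsum := (card_mul_le_sum_sum_card_sources_div hs (by omega) ht hN).trans
    (Finset.sum_le_sum fun x _ => hup x)
  simp only [Finset.sum_add_distrib, Finset.sum_const, Finset.card_univ, ← Finset.sum_filter,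
    nsmul_eq_mul, ← hn, ← hm] at hsum
  set r : ℝ := (#{x | IsRich N sc x} : ℝ)
  have hmass : m / 8 * n ≤ r * (m * (n / s)) := by nlinarith
  have hmn : 0 < m * n := by positivity
  have hscaled : m * n * s ≤ m * n * (8 * r) := by
    rw [← mul_div_assoc, ← mul_div_assoc, le_div_iff₀ hsR] at hmass
    linarith
  have : (s : ℝ) ≤ 8 * (#{x | IsRich N sc x} : ℝ) := le_of_mul_le_mul_left hscaled hmn
  exact_mod_cast this

end Rich

/-! ### Counting quadruples -/

lemma mul_mul_le_card_sigma {α β γ : Type*} {A : Finset α} {B : α → Finset β}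
    {C : α → β → Finset γ} {m n : ℕ} (hB : ∀ a ∈ A, m ≤ #(B a))
    (hC : ∀ a ∈ A, ∀ b ∈ B a, n ≤ #(C a b)) :
    #A * (m * n) ≤ #(A.sigma fun a => (B a).sigma fun b => C a b) := by
  simp only [Finset.card_sigma]
  exact Finset.card_nsmul_le_sum _ _ _ fun a ha => (Nat.mul_le_mul_right n (hB a ha)).trans
    (Finset.card_nsmul_le_sum _ _ _ (hC a ha))

namespace LatticeModel

variable {V : Type*} [Fintype V] {G : SimpleGraph V}

section Quadruples

variable [DecidableEq V] (W : LatticeModel G) {ι : Type*} [Fintype ι] {len : ι → V → ℕ}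
  {sc : ι → ℕ} {s : ℕ}

lemma mem_hitQuadruples (hlen : ∀ i y, len i y ≤ W.length) {x : V} {l : Fin 3 → V × ι}
    (hmeet : ∀ u, x ∈ W.pieceNeighbors (l u).1 (len (l u).2 (l u).1))
    (havoid : ∀ u v, u < v →
      (l v).1 ∉ insert (l u).1 (W.pieceNeighbors (l u).1 (len (l u).2 (l u).1))) :
    (x, l) ∈ W.hitQuadruples len := by
  have hdisj (u v) (huv : u < v) : Disjoint (W.piece len (l u)) (W.piece len (l v)) :=
    have h := not_or.1 (Finset.mem_insert.not.1 (havoid u v huv))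
    W.disjoint_piece hlen h.1 h.2
  classical
  refine Finset.mem_filter.2 ⟨Finset.mem_univ _, fun u v huv => ?_, fun u hd => ?_⟩
  · exact huv.lt_or_gt.elim (hdisj u v) fun h => (hdisj v u h).symm
  · exact (mem_pieceNeighbors.1 (hmeet u)).2 hd.symm

open scoped Classical in
lemma pow_three_le_card_hitQuadruples_fiber (hlen : ∀ i y, len i y ≤ W.length)
    (hs : ∀ i, s ≤ sc i) (hN : ∀ i y, #(W.pieceNeighbors y (len i y)) ≤ sc i) {x : V}
    (hx : IsRich (fun i y => W.pieceNeighbors y (len i y)) sc x) :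
    s ^ 3 ≤ 4 * #{q ∈ W.hitQuadruples len | q.1 = x} := by
  obtain ⟨i, j, k, hi, hj, hk⟩ := hx
  set N := fun i y => W.pieceNeighbors y (len i y)
  let closed (i : ι) (y : V) := insert y (N i y)
  have hclosed (i y) : #(closed i y) ≤ sc i + 1 :=
    (Finset.card_insert_le _ _).trans (Nat.succ_le_succ (hN i y))
  let B (a : V) := sources N j x \ closed i a
  let C (a b : V) := sources N k x \ (closed i a ∪ closed j b)
  have hB (a) : sc i + 1 ≤ #(B a) := by
    have := Finset.le_card_sdiff (closed i a) (sources N j x)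
    have := hclosed i a
    simp only [B]
    omega
  have hC (a b) : sc i + sc j + 2 ≤ #(C a b) := by
    have := Finset.le_card_sdiff (closed i a ∪ closed j b) (sources N k x)
    have := Finset.card_union_le (closed i a) (closed j b)
    have := hclosed i a
    have := hclosed j b
    simp only [C]
    omega
  have hmaps : #((sources N i x).sigma fun a => (B a).sigma fun b => C a b) ≤
      #{q ∈ W.hitQuadruples len | q.1 = x} := by
    refine Finset.card_le_card_of_injOn
      (fun u => (x, ![(u.1, i), (u.2.1, j), (u.2.2, k)])) ?_ ?_
    · rintro ⟨a, b, c⟩ hu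
      simp only [Finset.coe_sigma, Set.mem_sigma_iff, Finset.mem_coe, B, C, closed, sources,
        Finset.mem_sdiff, Finset.mem_union, Finset.mem_insert, Finset.mem_filter_univ, not_or] at hu
      refine Finset.mem_filter.2 ⟨W.mem_hitQuadruples hlen ?_ ?_, rfl⟩
      · simpa [Fin.forall_fin_succ] using ⟨hu.1, hu.2.1.1, hu.2.2.1⟩
      · simpa [Fin.forall_fin_succ] using ⟨⟨hu.2.1.2, hu.2.2.2.1⟩, hu.2.2.2.2⟩
    · rintro ⟨a, b, c⟩ _ ⟨a', b', c'⟩ _ h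
      simpa using h
  have hcount := (mul_mul_le_card_sigma (fun a _ => hB a) fun a _ b _ => hC a b).trans hmaps
  have := hs i
  calc s ^ 3 = s * (s * s) := by ring
    _ ≤ (4 * #(sources N i x)) * ((sc i + 1) * (sc i + sc j + 2)) := by gcongr <;> omega
    _ ≤ 4 * #{q ∈ W.hitQuadruples len | q.1 = x} := by linarith

open scoped Classical in
lemma card_filter_isRich_mul_le (hlen : ∀ i y, len i y ≤ W.length) (hs : ∀ i, s ≤ sc i)
    (hN : ∀ i y, #(W.pieceNeighbors y (len i y)) ≤ sc i) :
    #{x | IsRich (fun i y => W.pieceNeighbors y (len i y)) sc x} * s ^ 3 ≤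
      4 * #(W.hitQuadruples len) := by
  rw [Finset.card_eq_sum_card_fiberwise
    (fun _ _ => Finset.mem_coe.2 (Finset.mem_univ _) : Set.MapsTo Prod.fst _ _), Finset.mul_sum]
  refine (Finset.card_nsmul_le_sum _ _ _ fun x hx => ?_).trans
    (Finset.sum_le_sum_of_subset (Finset.subset_univ _))
  exact W.pow_three_le_card_hitQuadruples_fiber hlen hs hN (Finset.mem_filter.1 hx).2

end Quadruples

variable {t L B s : ℕ}

theorem pow_four_le_of_le_degree (W : LatticeModel G) [Nonempty V] [DecidableRel G.Adj]
    (hG : KttFree G t) (hL : 2 * t ≤ 2 ^ L) (hBL : 3 * 2 ^ L ≤ B) (hs : 4 ≤ s) (ht : 64 * t ≤ s)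
    (hdeg : ∀ y, s * 32 ^ 15 ≤ #{x | G.Adj y x}) :
    s ^ 4 ≤ 786432 * Fintype.card V ^ 2 *
      (Fintype.card V * (2 * 2 ^ L + (2 * L + 2) * B) +
        Fintype.card V * ((Fintype.card V / B + 1) * (2 * t))) := by
  classical
  let sc (i : Fin 16) := s * 32 ^ (i : ℕ)
  have hsc (i) : s ≤ sc i := Nat.le_mul_of_pos_right _ (by positivity)
  have hgrow (i j) (hij : i < j) : 32 * sc i ≤ sc j := by
    calc 32 * sc i = s * 32 ^ ((i : ℕ) + 1) := by ring
      _ ≤ sc j := Nat.mul_le_mul_left _ (Nat.pow_le_pow_right (by norm_num) hij)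
  have hpiece (i y) := W.exists_card_pieceNeighbors hG y (s := sc i) (by linarith [hsc i]) <| by
    calc sc i ≤ s * 32 ^ 15 :=
          Nat.mul_le_mul_left _ (Nat.pow_le_pow_right (by norm_num) (Nat.le_of_lt_succ i.2))
      _ ≤ #{x | G.Adj y x} := hdeg y
      _ = #(W.pieceNeighbors y W.length) := by
          congr 1
          ext x
          simp [W.mem_pieceNeighbors_length]
  choose len hlen hupper hlower using hpiece
  have hrich := le_card_filter_isRich (by simp) hgrow hs hsc ht hlower
  have hhit := W.card_filter_isRich_mul_le hlen hsc hupper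
  have hgap := W.card_gapQuadruples_le len hG hL hBL hlen
  rw [Fintype.card_fin] at hgap
  set R := Fintype.card V * (2 * 2 ^ L + (2 * L + 2) * B) +
    Fintype.card V * ((Fintype.card V / B + 1) * (2 * t))
  calc s ^ 4 = s * s ^ 3 := by ring
    _ ≤ (8 * #{x | IsRich (fun i y => W.pieceNeighbors y (len i y)) sc x}) * s ^ 3 := by gcongr
    _ ≤ 8 * (4 * #(W.hitQuadruples len)) := by linarith
    _ ≤ 8 * (4 * (6 * (R * (16 ^ 3 * Fintype.card V ^ 2)))) := by
        gcongr
        exact (W.card_hitQuadruples_le len).trans (Nat.mul_le_mul_left _ hgap)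
    _ = 786432 * Fintype.card V ^ 2 * R := by ring

end LatticeModel

/-! ### Passing to a subgraph of large minimum degree -/

section MinDegree

variable {V : Type*} (G : SimpleGraph V) [DecidableRel G.Adj]

lemma card_interedges_self_le [DecidableEq V] (A : Finset V) (v : V) :
    #(G.interedges A A) ≤ #(G.interedges (A.erase v) (A.erase v)) + 2 * #{x ∈ A | G.Adj v x} := by
  set nbrs := {x ∈ A | G.Adj v x}
  have hsub : G.interedges A A ⊆ G.interedges (A.erase v) (A.erase v) ∪
      (nbrs.image (v, ·) ∪ nbrs.image (·, v)) := by
    rintro ⟨x, y⟩ hxy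
    obtain ⟨hx, hy, hadj⟩ := G.mem_interedges_iff.1 hxy
    simp only [Finset.mem_union, Finset.mem_image, G.mem_interedges_iff, nbrs, Finset.mem_filter,
      Finset.mem_erase, Prod.mk.injEq]
    rcases eq_or_ne x v with rfl | hxv
    · exact .inr (.inl ⟨y, ⟨hy, hadj⟩, rfl, rfl⟩)
    rcases eq_or_ne y v with rfl | hyv
    · exact .inr (.inr ⟨x, ⟨hx, hadj.symm⟩, rfl, rfl⟩)
    · exact .inl ⟨⟨hxv, hx⟩, ⟨hyv, hy⟩, hadj⟩
  have := (Finset.card_le_card hsub).trans (Finset.card_union_le _ _)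
  have := Finset.card_union_le (nbrs.image (v, ·)) (nbrs.image (·, v))
  have := Finset.card_image_le (s := nbrs) (f := (v, ·))
  have := Finset.card_image_le (s := nbrs) (f := (·, v))
  omega

lemma exists_subset_forall_le_card_adj {d : ℕ} (A : Finset V)
    (h : 2 * d * #A < #(G.interedges A A)) :
    ∃ A' ⊆ A, A'.Nonempty ∧ ∀ v ∈ A', d ≤ #{x ∈ A' | G.Adj v x} := by
  classical
  induction A using Finset.strongInduction with
  | H A ih =>
    by_cases hA : ∀ v ∈ A, d ≤ #{x ∈ A | G.Adj v x}
    · refine ⟨A, subset_rfl, Finset.nonempty_iff_ne_empty.2 ?_, hA⟩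
      rintro rfl
      simp [SimpleGraph.interedges, Rel.interedges] at h
    · push Not at hA
      obtain ⟨v, hv, hdeg⟩ := hA
      have := card_interedges_self_le G A v
      rw [← Finset.card_erase_add_one hv] at h
      obtain ⟨A', hsub, hA'⟩ := ih _ (Finset.erase_ssubset hv) (by linarith)
      exact ⟨A', hsub.trans (Finset.erase_subset _ _), hA'⟩

end MinDegree

section Comap

variable {U V : Type*} {G : SimpleGraph V}

lemma KttFree.comap {t : ℕ} (hG : KttFree G t) (f : U ↪ V) : KttFree (G.comap f) t := by
  rintro ⟨A, B, hdisj, hA, hB, hAB⟩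
  refine hG ⟨A.map f, B.map f, (Finset.disjoint_map f).2 hdisj, by rwa [Finset.card_map],
    by rwa [Finset.card_map], ?_⟩
  simpa [Finset.forall_mem_map] using hAB

/-- The restriction of a lattice model along an embedding of vertex sets. -/
def LatticeModel.comap (W : LatticeModel G) (f : U ↪ V) : LatticeModel (G.comap f) where
  walk u := W.walk (f u)
  length := W.length
  isWalk u := W.isWalk (f u)
  adj_iff u v huv := W.adj_iff (f u) (f v) (f.injective.ne huv)

variable [Fintype V] [DecidableRel G.Adj] {t L B s : ℕ}

theorem LatticeModel.pow_four_le_of_lt_card_interedges (W : LatticeModel G) (hG : KttFree G t)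
    (hL : 2 * t ≤ 2 ^ L) (hBL : 3 * 2 ^ L ≤ B) (hs : 4 ≤ s) (ht : 64 * t ≤ s)
    (h : 2 * (s * 32 ^ 15) * Fintype.card V < #(G.interedges Finset.univ Finset.univ)) :
    s ^ 4 ≤ 786432 * Fintype.card V ^ 2 *
      (Fintype.card V * (2 * 2 ^ L + (2 * L + 2) * B) +
        Fintype.card V * ((Fintype.card V / B + 1) * (2 * t))) := by
  obtain ⟨A, -, hne, hdeg⟩ := exists_subset_forall_le_card_adj G Finset.univ h
  have : Nonempty A := hne.to_subtype
  have hcard : Fintype.card A ≤ Fintype.card V := Fintype.card_subtype_le _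
  let f : A ↪ V := Function.Embedding.subtype _
  have hdegA (y : A) : s * 32 ^ 15 ≤ #{x | (G.comap f).Adj y x} := by
    refine (hdeg y y.2).trans ?_
    rw [← Finset.card_map f]
    refine Finset.card_le_card fun x hx => ?_
    obtain ⟨hxA, hadj⟩ := Finset.mem_filter.1 hx
    exact Finset.mem_map.2 ⟨⟨x, hxA⟩, Finset.mem_filter.2 ⟨Finset.mem_univ _, hadj⟩, rfl⟩
  refine ((W.comap f).pow_four_le_of_le_degree (hG.comap f) hL hBL hs ht hdegA).trans ?_
  gcongr

end Comap

/-! ### Density of a `K_{t,t}`-free string graph -/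

lemma card_touchingPairs_le {V : Type*} [Fintype V] (G : SimpleGraph V) [DecidableRel G.Adj] :
    #(touchingPairs G) ≤ Fintype.card V + #(G.interedges Finset.univ Finset.univ) := by
  classical
  have hsub : touchingPairs G ⊆
      (Finset.univ : Finset V).diag ∪ G.interedges Finset.univ Finset.univ := fun p hp => by
    rcases mem_touchingPairs.1 hp with h | h
    · exact Finset.mem_union_left _ (Finset.mem_diag.2 ⟨Finset.mem_univ _, h⟩)
    · exact Finset.mem_union_right _
        (G.mem_interedges_iff.2 ⟨Finset.mem_univ _, Finset.mem_univ _, h⟩)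
  simpa using (Finset.card_le_card hsub).trans (Finset.card_union_le _ _)

lemma sq_mul_le_of_mul_le_add_div {n t L κ K B : ℝ} (hn : 0 ≤ n) (hL : 0 ≤ L) (hK : 0 ≤ K)
    (hκ : 0 < κ) (hB₀ : 0 < B) (hB : 4 * K * t / κ ≤ B) (hB' : B ≤ 2 * (4 * K * t / κ))
    (h : κ * n ≤ K * (5 * L * B + 2 * t * n / B)) : κ ^ 2 * n ≤ 80 * K ^ 2 * L * t := by
  have hhalf : K * (2 * t * n / B) ≤ κ * n / 2 := by
    rw [div_le_iff₀ hκ] at hB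
    rw [← mul_div_assoc, div_le_iff₀ hB₀]
    nlinarith [mul_le_mul_of_nonneg_left hB hn]
  calc κ ^ 2 * n = κ * (κ * n) := by ring
    _ ≤ κ * (2 * (K * (5 * L * (2 * (4 * K * t / κ))))) := by
        refine mul_le_mul_of_nonneg_left ?_ hκ.le
        have : K * (5 * L * B) ≤ K * (5 * L * (2 * (4 * K * t / κ))) := by gcongr
        linarith
    _ = 80 * K ^ 2 * L * t := by
        field_simp
        ring

lemma two_pow_add_le {n t B L : ℝ} {l : ℕ} (hl : 2 ^ l ≤ 4 * t) (hlL : (l : ℝ) ≤ L) (hL : 1 ≤ L)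
    (hB₀ : 0 < B) (hB : 12 * t ≤ B) :
    2 * 2 ^ l + (2 * l + 2) * B + (n / B + 1) * (2 * t) ≤ 5 * L * B + 2 * t * n / B := by
  have : (2 * l + 2) * B ≤ 4 * L * B := by
    gcongr
    linarith
  have : B ≤ L * B := le_mul_of_one_le_left hB₀.le hL
  have : (n / B + 1) * (2 * t) = 2 * t * n / B + 2 * t := by ring
  linarith

namespace LatticeModel

variable {V : Type*} [Fintype V] {G : SimpleGraph V} {t L : ℕ}

lemma sq_mul_card_le (W : LatticeModel G) (hG : KttFree G t) (ht : 1 ≤ t) (hL : 1 ≤ L)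
    (htV : 4 * t ≤ Fintype.card V) (hVL : Fintype.card V ≤ 2 ^ L)
    [DecidableRel G.Adj] {s : ℕ} (hs : 64 * t ≤ s) {κ : ℝ}
    (hκ₀ : 0 < κ) (hκ : κ ≤ 1) (hκs : κ * (Fintype.card V : ℝ) ^ 4 ≤ (s : ℝ) ^ 4)
    (h : 2 * (s * 32 ^ 15) * Fintype.card V < #(G.interedges Finset.univ Finset.univ)) :
    κ ^ 2 * Fintype.card V ≤ 80 * 786432 ^ 2 * L * t := by
  have htR : (1 : ℝ) ≤ t := by exact_mod_cast ht
  obtain ⟨k, hk, hk'⟩ := exists_nat_pow_near (by omega : 1 ≤ 2 * t) one_lt_two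
  have hlt : 2 ^ (k + 1) ≤ 4 * t := by omega
  have hlL : k + 1 ≤ L := (Nat.pow_le_pow_iff_right one_lt_two).1 ((hlt.trans htV).trans hVL)
  set b : ℝ := 4 * 786432 * t / κ
  have hb : 12 * t ≤ b := (by linarith : 12 * (t : ℝ) ≤ 4 * 786432 * t).trans
    (le_div_self (by positivity) hκ₀ hκ)
  set B := ⌈b⌉₊
  have hbB : b ≤ B := Nat.le_ceil b
  have hBb : B ≤ 2 * b := (Nat.ceil_lt_two_mul (by linarith)).le
  have hBt : (12 * t : ℝ) ≤ B := hb.trans hbB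
  have hlt' : (2 ^ (k + 1) : ℝ) ≤ 4 * t := by exact_mod_cast hlt
  have hBl : 3 * 2 ^ (k + 1) ≤ B := by
    exact_mod_cast (by linarith : (3 * 2 ^ (k + 1) : ℝ) ≤ B)
  have hcount := W.pow_four_le_of_lt_card_interedges hG hk'.le hBl
    (by omega) hs h
  set n := Fintype.card V
  have hn₀ : (0 : ℝ) < n := by exact_mod_cast (by omega : 0 < n)
  have hB₀ : (0 : ℝ) < B := by linarith
  refine sq_mul_le_of_mul_le_add_div hn₀.le L.cast_nonneg (by norm_num) hκ₀ hB₀ hbB hBb ?_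
  refine le_of_mul_le_mul_left ?_ (pow_pos hn₀ 3)
  calc (n : ℝ) ^ 3 * (κ * n) = κ * n ^ 4 := by ring
    _ ≤ 786432 * (n : ℝ) ^ 2 * (n * (2 * 2 ^ (k + 1) + (2 * (k + 1 : ℕ) + 2) * B) +
        n * (((n / B : ℕ) + 1) * (2 * t))) := hκs.trans (by exact_mod_cast hcount)
    _ ≤ 786432 * (n : ℝ) ^ 2 * (n * (2 * 2 ^ (k + 1) + (2 * (k + 1 : ℕ) + 2) * B) +
        n * ((n / B + 1) * (2 * t))) := by
        gcongr
        exact Nat.cast_div_le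
    _ = (n : ℝ) ^ 3 * (786432 * (2 * 2 ^ (k + 1) + (2 * (k + 1 : ℕ) + 2) * B +
        (n / B + 1) * (2 * t))) := by ring
    _ ≤ (n : ℝ) ^ 3 * (786432 * (5 * L * B + 2 * t * n / B)) := by
        gcongr n ^ 3 * (786432 * ?_)
        exact two_pow_add_le hlt' (Nat.cast_le.2 hlL) (Nat.one_le_cast.2 hL) hB₀ hBt

lemma pow_eight_mul_card_le_of_le_mul (W : LatticeModel G) (hG : KttFree G t) (ht : 1 ≤ t)
    (hL : 1 ≤ L) (hVL : Fintype.card V ≤ 2 ^ L) {D : ℝ} (hD₀ : 0 < D) (hD₁ : D ≤ 1)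
    (hD : D * (Fintype.card V : ℝ) ^ 2 ≤ #(touchingPairs G))
    (hbig : 2 ^ 179 * (t : ℝ) ≤ D * Fintype.card V) :
    D ^ 8 * Fintype.card V ≤ 2 ^ 670 * L * t := by
  classical
  have htouch : (#(touchingPairs G) : ℝ) ≤
      Fintype.card V + #(G.interedges Finset.univ Finset.univ) := by
    exact_mod_cast card_touchingPairs_le G
  have htR : (1 : ℝ) ≤ t := by exact_mod_cast ht
  have hkey (s : ℕ) := W.sq_mul_card_le hG ht hL (s := s) (κ := (D / 2 ^ 78) ^ 4)
  set n := Fintype.card V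
  have hDn : D * n ≤ n := mul_le_of_le_one_left n.cast_nonneg hD₁
  have hn₀ : (0 : ℝ) < n := by linarith
  set x : ℝ := D * n / 2 ^ 77 with hx
  have : 2 ^ 102 * (t : ℝ) ≤ x := by
    rw [hx, le_div_iff₀ (by positivity)]
    linarith
  have hsx : (⌊x⌋₊ : ℝ) ≤ x := Nat.floor_le (by positivity)
  have hxs : x / 2 < ⌊x⌋₊ := Nat.div_two_lt_floor (by linarith)
  have hκ := hkey ⌊x⌋₊ (by exact_mod_cast (by linarith : 4 * (t : ℝ) ≤ n)) hVL
    (by exact_mod_cast (by linarith : 64 * (t : ℝ) ≤ ⌊x⌋₊)) (by positivity)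
    (pow_le_one₀ (by positivity) (by linarith)) ?_ ?_
  · calc D ^ 8 * n = 2 ^ 624 * (((D / 2 ^ 78) ^ 4) ^ 2 * n) := by
          rw [← pow_mul, div_pow]
          ring
      _ ≤ 2 ^ 624 * (80 * 786432 ^ 2 * (L : ℝ) * t) := by gcongr
      _ = (2 ^ 624 * (80 * 786432 ^ 2)) * ((L : ℝ) * t) := by ring
      _ ≤ 2 ^ 670 * ((L : ℝ) * t) := by
          gcongr
          norm_num
      _ = 2 ^ 670 * (L : ℝ) * t := by ring
  · rw [← mul_pow]
    refine pow_le_pow_left₀ (by positivity) (le_trans (le_of_eq ?_) hxs.le) 4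
    rw [hx]
    ring
  · have hlow : (2 * (⌊x⌋₊ * 32 ^ 15) : ℝ) * n ≤ D * n ^ 2 / 2 := by
      calc (2 * (⌊x⌋₊ * 32 ^ 15) : ℝ) * n ≤ 2 * (x * 32 ^ 15) * n := by gcongr
        _ = D * n ^ 2 / 2 := by
            rw [hx]
            ring
    have : 2 * (n : ℝ) < D * n ^ 2 := by nlinarith
    exact_mod_cast (by linarith : (2 * (⌊x⌋₊ * 32 ^ 15) * n : ℝ) <
      #(G.interedges Finset.univ Finset.univ))

theorem pow_eight_mul_card_le [Nonempty V] (W : LatticeModel G) (hG : KttFree G t) (ht : 1 ≤ t)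
    (hL : 1 ≤ L) (hVL : Fintype.card V ≤ 2 ^ L) {D : ℝ} (hD₀ : 0 < D)
    (hD : D * (Fintype.card V : ℝ) ^ 2 ≤ #(touchingPairs G)) :
    D ^ 8 * Fintype.card V ≤ 2 ^ 670 * L * t := by
  have hpairs : (#(touchingPairs G) : ℝ) ≤ (Fintype.card V : ℝ) ^ 2 := by
    have := Finset.card_le_univ (touchingPairs G)
    rw [Fintype.card_prod, ← sq] at this
    exact_mod_cast this
  have hn₀ : (0 : ℝ) < Fintype.card V := Nat.cast_pos.2 Fintype.card_pos
  have hD₁ : D ≤ 1 := le_of_mul_le_mul_right (by linarith) (pow_pos hn₀ 2)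
  rcases le_total (2 ^ 179 * (t : ℝ)) (D * Fintype.card V) with hbig | hsmall
  · exact W.pow_eight_mul_card_le_of_le_mul hG ht hL hVL hD₀ hD₁ hD hbig
  · have hLt : (t : ℝ) ≤ L * t :=
      le_mul_of_one_le_left t.cast_nonneg (by exact_mod_cast hL)
    calc D ^ 8 * Fintype.card V ≤ D * Fintype.card V := by
          gcongr
          exact pow_le_of_le_one hD₀.le hD₁ (by norm_num)
      _ ≤ 2 ^ 179 * t := hsmall
      _ ≤ 2 ^ 670 * ((L : ℝ) * t) := by
          gcongr <;> norm_num
      _ = 2 ^ 670 * (L : ℝ) * t := by ring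

theorem exists_isSeparator_card_le [DecidableEq V] [Nonempty V] (W : LatticeModel G)
    (hG : KttFree G t) (ht : 1 ≤ t) {δ : ℝ} (hδ₀ : 0 < δ) (hδ : δ ≤ 1 / 4)
    (hL : 1 ≤ L) (hVL : Fintype.card V ≤ 2 ^ L)
    (hbig : 2 ^ 830 * (L : ℝ) ^ 17 * t < Fintype.card V * δ ^ 32) :
    ∃ S : Finset V, IsSeparator G S ∧ (#S : ℝ) ≤ δ * Fintype.card V := by
  by_contra! hsep
  have : (0 : ℝ) < L := by exact_mod_cast hL
  have hdense := W.sq_card_le_card_touchingPairs hδ₀ hδ hsep hL hVL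
  have hsparse := W.pow_eight_mul_card_le hG ht hL hVL (D := δ ^ 4 / (2 ^ 20 * L ^ 2))
    (by positivity) <| by
      rw [div_mul_eq_mul_div, div_le_iff₀ (by positivity)]
      linarith
  rw [div_pow, div_mul_eq_mul_div, div_le_iff₀ (by positivity)] at hsparse
  refine hbig.not_ge ?_
  calc (Fintype.card V : ℝ) * δ ^ 32 = (δ ^ 4) ^ 8 * Fintype.card V := by ring
    _ ≤ 2 ^ 670 * (L : ℝ) * t * (2 ^ 20 * L ^ 2) ^ 8 := hsparse
    _ = 2 ^ 830 * (L : ℝ) ^ 17 * t := by ring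

end LatticeModel

lemma isSeparator_univ {V : Type*} [Fintype V] [DecidableEq V] (G : SimpleGraph V) :
    IsSeparator G Finset.univ :=
  ⟨∅, ∅, by simp, by simp, by simp, by simp, by simp, by simp, by simp⟩

lemma le_two_pow_ceil_logb {n : ℕ} (hn : 0 < n) : n ≤ 2 ^ ⌈Real.logb 2 n⌉₊ := by
  have hn₀ : (0 : ℝ) < n := by exact_mod_cast hn
  have : (n : ℝ) ≤ 2 ^ ⌈Real.logb 2 n⌉₊ := by
    rw [← Real.rpow_natCast, ← Real.logb_le_iff_le_rpow one_lt_two hn₀]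
    exact Nat.le_ceil _
  exact_mod_cast this

lemma mul_rpow_mul_rpow_mul_rpow_pow {n t x : ℝ} (hn : 0 < n) (ht : 0 ≤ t) (hx : 0 ≤ x) (c : ℝ) :
    n * (c * t ^ (1 / 32 : ℝ) * x ^ (33 / 32 : ℝ) * n ^ (-1 / 32 : ℝ)) ^ 32 =
      c ^ 32 * t * x ^ 33 := by
  have hpow {y : ℝ} (hy : 0 ≤ y) (r : ℝ) : (y ^ r) ^ 32 = y ^ (r * 32) := by
    rw [Real.rpow_mul hy]
    exact (Real.rpow_natCast _ 32).symm
  rw [mul_pow, mul_pow, mul_pow, hpow ht, hpow hx, hpow hn.le]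
  norm_num [Real.rpow_neg_one]
  field_simp

lemma two_pow_mul_ceil_pow_mul_lt {t x : ℝ} (ht : 0 < t) (hx : 1 ≤ x) :
    2 ^ 830 * (⌈x⌉₊ : ℝ) ^ 17 * t < (2 ^ 27) ^ 32 * t * x ^ 33 := by
  have hceil : (⌈x⌉₊ : ℝ) ≤ 2 * x := (Nat.ceil_lt_two_mul (by linarith)).le
  calc 2 ^ 830 * (⌈x⌉₊ : ℝ) ^ 17 * t ≤ 2 ^ 830 * (2 * x) ^ 17 * t := by gcongr
    _ = 2 ^ 847 * (t * x ^ 17) := by ring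
    _ < 2 ^ 864 * (t * x ^ 17) := by
        gcongr <;> norm_num
    _ ≤ 2 ^ 864 * (t * x ^ 33) := by
        gcongr
        norm_num
    _ = (2 ^ 27) ^ 32 * t * x ^ 33 := by ring

/-- There are constants `d' > 0` and `b ≥ 1` such that for every integer `t ≥ 1`, every
`K_{t,t}`-free string graph on `n ≥ 2` vertices has a separator of size at most
`d'·t^(1/(2b))·(log₂ n)^(1+1/(2b))·n^(1−1/(2b))`. -/
theorem ktt_free_string_graph_separator :
    ∃ d' b : ℝ, 0 < d' ∧ 1 ≤ b ∧
      ∀ (t : ℕ), 1 ≤ t →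
        ∀ (V : Type) [Fintype V] [DecidableEq V] (G : SimpleGraph V),
          IsStringGraph G → KttFree G t → 2 ≤ Fintype.card V →
          ∃ S : Finset V, IsSeparator G S ∧
            (S.card : ℝ) ≤ d' * (t : ℝ) ^ ((1 : ℝ) / (2 * b)) *
              (Real.logb 2 (Fintype.card V)) ^ (1 + 1 / (2 * b)) *
              (Fintype.card V : ℝ) ^ (1 - 1 / (2 * b)) := by
  refine ⟨2 ^ 29, 16, by norm_num, by norm_num, fun t ht V _ _ G hG hK hn => ?_⟩
  have htR : (0 : ℝ) < t := by exact_mod_cast ht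
  have hnR : (2 : ℝ) ≤ Fintype.card V := by exact_mod_cast hn
  have hn₀ : (0 : ℝ) < Fintype.card V := by linarith
  have hlog : 1 ≤ Real.logb 2 (Fintype.card V) := by
    rwa [Real.le_logb_iff_rpow_le one_lt_two hn₀, Real.rpow_one]
  set δ : ℝ := 2 ^ 27 * (t : ℝ) ^ (1 / 32 : ℝ) *
    Real.logb 2 (Fintype.card V) ^ (33 / 32 : ℝ) * (Fintype.card V : ℝ) ^ (-1 / 32 : ℝ) with hδ
  have hδ₀ : 0 < δ := by positivity
  suffices ∃ S, IsSeparator G S ∧ (#S : ℝ) ≤ 4 * δ * Fintype.card V by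
    convert this using 4
    rw [hδ, sub_eq_neg_add, Real.rpow_add_one hn₀.ne']
    norm_num
    ring
  rcases le_or_gt δ (1 / 4) with hδ₁ | hδ₁
  · have : Nonempty V := Fintype.card_pos_iff.1 (by omega)
    obtain ⟨W⟩ := hG.nonempty_latticeModel
    obtain ⟨S, hS, hcard⟩ := W.exists_isSeparator_card_le hK ht hδ₀ hδ₁
      (Nat.ceil_pos.2 (by linarith)) (le_two_pow_ceil_logb (by omega)) <|
      (two_pow_mul_ceil_pow_mul_lt htR hlog).trans_eq
        (mul_rpow_mul_rpow_mul_rpow_pow hn₀ htR.le (by linarith) _).symm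
    exact ⟨S, hS, hcard.trans (by nlinarith [mul_pos hδ₀ hn₀])⟩
  · exact ⟨Finset.univ, isSeparator_univ G, by rw [Finset.card_univ]; nlinarith⟩
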